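/- Comparison principle (Bellman case). Let Ω ⊂ ℝ^N be an open set of class W^{2,∞}, let the measures μ_x satisfy (M), the jump function j satisfy (J0) and (J1), and let H be a Hamiltonian of Bellman type satisfying (C), (L) and (B). If u is a bounded upper semicontinuous viscosity subsolution and v a bounded lower semicontinuous viscosity supersolution of u − I[u](x) + H(x,Du) = 0 in Ω with generalized Neumann boundary condition ∂u/∂n = 0 on ∂Ω, then u ≤ v on the closure of Ω. -/

import Mathlib

set_option autoImplicit false

/- Common framework for censored nonlocal Hamilton–Jacobi equations with
Neumann boundary conditions (Barles-type viscosity solutions). -/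

open Set Metric MeasureTheory Filter Topology Function
open scoped RealInnerProductSpace NNReal ENNReal

noncomputable section

namespace Censored

abbrev Euc (N : ℕ) : Type := EuclideanSpace ℝ (Fin N)

variable {N : ℕ}

/-- Signed distance to the boundary of `Ω`, positive inside `Ω`. -/
def sdist (Ω : Set (Euc N)) (x : Euc N) : ℝ := infDist x Ωᶜ - infDist x Ω

/-- A modulus of continuity. -/
def IsModulus (ω : ℝ → ℝ) : Prop :=
  (∀ s, 0 ≤ ω s) ∧ Monotone ω ∧ Tendsto ω (nhdsWithin 0 (Ioi 0)) (nhds 0)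

/-- A `W^{2,∞}` boundary chart for `Ω` at `s`, with radius `r`: a diffeomorphism of
class `W^{2,∞}` (i.e. `C^1` with Lipschitz differential, with inverse of the same
regularity) whose `N`-th component coincides with the signed distance. -/
def IsW2Chart (hN : 0 < N) (Ω : Set (Euc N)) (s : Euc N) (r : ℝ)
    (ψ ψinv : Euc N → Euc N) : Prop :=
  0 < r ∧
  ContDiffOn ℝ 1 ψ (ball s r) ∧
  (∃ L : ℝ≥0, LipschitzOnWith L (fun x => fderiv ℝ ψ x) (ball s r)) ∧
  ContDiffOn ℝ 1 ψinv (ψ '' ball s r) ∧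
  (∃ L : ℝ≥0, LipschitzOnWith L (fun x => fderiv ℝ ψinv x) (ψ '' ball s r)) ∧
  (∀ x ∈ ball s r, ψinv (ψ x) = x) ∧
  (∀ x ∈ ball s r, ψ x ⟨N - 1, Nat.sub_lt hN Nat.one_pos⟩ = sdist Ω x)

/-- Assumption (O): `Ω` is open of class `W^{2,∞}`. -/
def IsW2Domain (hN : 0 < N) (Ω : Set (Euc N)) : Prop :=
  IsOpen Ω ∧ ∀ s ∈ frontier Ω, ∃ r ψ ψinv, IsW2Chart hN Ω s r ψ ψinv

/-- `n` is the exterior unit normal vector field to `∂Ω`:  `n = -D d` where `d` is the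
signed distance (positive inside). -/
def IsExteriorNormal (Ω : Set (Euc N)) (n : Euc N → Euc N) : Prop :=
  ∀ x ∈ frontier Ω, ‖n x‖ = 1 ∧ HasGradientAt (sdist Ω) (-(n x)) x

/-- First part of assumption (M): the measures `μ_x` have a (measurable, nonnegative)
density `g x` with respect to Lebesgue measure, bounded by `Cμ |z|^{-(N+σ)}`. -/
def AssumptionM1 (Ω : Set (Euc N)) (g : Euc N → Euc N → ℝ) (Cμ σ : ℝ) : Prop :=
  0 < Cμ ∧ σ ∈ Ioo (0:ℝ) 1 ∧ (∀ x, Measurable (g x)) ∧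
  (∀ x ∈ closure Ω, ∀ z : Euc N, 0 ≤ g x z) ∧
  (∀ x ∈ closure Ω, ∀ z : Euc N, g x z ≤ Cμ * ‖z‖ ^ (-((N : ℝ) + σ)))

/-- Assumption (M). -/
def AssumptionM (Ω : Set (Euc N)) (g : Euc N → Euc N → ℝ) (Cμ Dμ σ : ℝ) : Prop :=
  AssumptionM1 Ω g Cμ σ ∧ 0 < Dμ ∧
  (∀ x ∈ closure Ω, ∀ y ∈ closure Ω, ∀ z : Euc N,
    |g x z - g y z| ≤ Dμ * ‖x - y‖ * ‖z‖ ^ (-((N : ℝ) + σ)))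

/-- Assumption (J0). -/
def AssumptionJ0 (Ω : Set (Euc N)) (j : Euc N → Euc N → Euc N) (Aj : ℝ) : Prop :=
  ∀ x ∈ closure Ω,
    ContDiff ℝ 1 (j x) ∧ Function.Bijective (j x) ∧
    ContDiff ℝ 1 (Function.invFun (j x)) ∧
    ∀ z : Euc N, ‖fderiv ℝ (Function.invFun (j x)) z‖ ≤ Aj

/-- Assumption (J1). -/
def AssumptionJ1 (Ω : Set (Euc N)) (j : Euc N → Euc N → Euc N) (Cj' Cj Dj : ℝ) : Prop :=
  0 < Cj' ∧ 0 < Cj ∧ 0 < Dj ∧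
  (∀ x ∈ closure Ω, ∀ z : Euc N, Cj' * ‖z‖ ≤ ‖j x z‖ ∧ ‖j x z‖ ≤ Cj * ‖z‖) ∧
  (∀ x ∈ closure Ω, ∀ y ∈ closure Ω, ∀ z : Euc N, ‖j x z - j y z‖ ≤ Dj * ‖z‖ * ‖x - y‖)

/-- The truncated censored nonlocal term over `{|z| ≥ ξ}` (`I^ξ`). -/
def Iout (Ω : Set (Euc N)) (j : Euc N → Euc N → Euc N) (g : Euc N → Euc N → ℝ)
    (ξ : ℝ) (u : Euc N → ℝ) (x : Euc N) : ℝ :=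
  ∫ z in {z : Euc N | ξ ≤ ‖z‖ ∧ x + j x z ∈ closure Ω}, (u (x + j x z) - u x) * g x z

/-- The truncated censored nonlocal term over `{|z| < ξ}` (`I_ξ`). -/
def Iin (Ω : Set (Euc N)) (j : Euc N → Euc N → Euc N) (g : Euc N → Euc N → ℝ)
    (ξ : ℝ) (φ : Euc N → ℝ) (x : Euc N) : ℝ :=
  ∫ z in {z : Euc N | ‖z‖ < ξ ∧ x + j x z ∈ closure Ω}, (φ (x + j x z) - φ x) * g x z

/-- The censored nonlocal operator of order `σ < 1`, as a principal value. -/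
def Ipv (Ω : Set (Euc N)) (j : Euc N → Euc N → Euc N) (g : Euc N → Euc N → ℝ)
    (u : Euc N → ℝ) (x : Euc N) : ℝ :=
  limUnder (nhdsWithin (0:ℝ) (Ioi 0)) (fun δ =>
    ∫ z in {z : Euc N | δ < ‖z‖ ∧ x + j x z ∈ closure Ω}, (u (x + j x z) - u x) * g x z)

/-- `u` is bounded on `S`. -/
def BddOn (u : Euc N → ℝ) (S : Set (Euc N)) : Prop := ∃ M, ∀ x ∈ S, |u x| ≤ M

/-- `u = u(x,t)` is bounded on `S × I`. -/
def BddOnT (u : Euc N → ℝ → ℝ) (S : Set (Euc N)) (I : Set ℝ) : Prop :=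
  ∃ M, ∀ x ∈ S, ∀ t ∈ I, |u x t| ≤ M

/-- Viscosity subsolution, with generalized Neumann boundary conditions, of the
stationary equation `F(x, u, Du, I[u]) = 0` in `Ω`, `∂u/∂n = 0` on `∂Ω`,
for the censored operator determined by `j, g` (with constant `Cj` from (J1)). -/
def IsSubSol (Ω : Set (Euc N)) (j : Euc N → Euc N → Euc N) (g : Euc N → Euc N → ℝ)
    (n : Euc N → Euc N) (Cj : ℝ) (F : Euc N → ℝ → Euc N → ℝ → ℝ) (u : Euc N → ℝ) : Prop :=
  ∀ ξ > (0:ℝ), ∀ φ : Euc N → ℝ, ContDiff ℝ 1 φ →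
    ∀ x ∈ closure Ω,
      (∀ y ∈ closedBall x (Cj * ξ) ∩ closure Ω, u y - φ y ≤ u x - φ x) →
      (x ∈ Ω → F x (u x) (gradient φ x) (Iin Ω j g ξ φ x + Iout Ω j g ξ u x) ≤ 0) ∧
      (x ∈ frontier Ω →
        min (F x (u x) (gradient φ x) (Iin Ω j g ξ φ x + Iout Ω j g ξ u x))
          ⟪gradient φ x, n x⟫ ≤ 0)

/-- Viscosity supersolution, with generalized Neumann boundary conditions. -/
def IsSuperSol (Ω : Set (Euc N)) (j : Euc N → Euc N → Euc N) (g : Euc N → Euc N → ℝ)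
    (n : Euc N → Euc N) (Cj : ℝ) (F : Euc N → ℝ → Euc N → ℝ → ℝ) (v : Euc N → ℝ) : Prop :=
  ∀ ξ > (0:ℝ), ∀ φ : Euc N → ℝ, ContDiff ℝ 1 φ →
    ∀ x ∈ closure Ω,
      (∀ y ∈ closedBall x (Cj * ξ) ∩ closure Ω, v x - φ x ≤ v y - φ y) →
      (x ∈ Ω → 0 ≤ F x (v x) (gradient φ x) (Iin Ω j g ξ φ x + Iout Ω j g ξ v x)) ∧
      (x ∈ frontier Ω →
        0 ≤ max (F x (v x) (gradient φ x) (Iin Ω j g ξ φ x + Iout Ω j g ξ v x))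
          ⟪gradient φ x, n x⟫)

/-- `F` corresponding to the stationary equation `u - I[u] + H(x,Du) = 0`. -/
def statF (H : Euc N → Euc N → ℝ) : Euc N → ℝ → Euc N → ℝ → ℝ :=
  fun x r p I => r - I + H x p

/-- `F` corresponding to the ergodic equation `λ - I[w] - H(x,Dw) = 0`. -/
def ergF (H : Euc N → Euc N → ℝ) (lam : ℝ) : Euc N → ℝ → Euc N → ℝ → ℝ :=
  fun x _ p I => lam - I - H x p

/-- Parabolic viscosity subsolution with generalized Neumann boundary conditions,
for `F(x, t, ∂_t u, u, Du, I[u(·,t)]) = 0` in `Ω × (0,∞)`. -/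
def IsParSubSol (Ω : Set (Euc N)) (j : Euc N → Euc N → Euc N) (g : Euc N → Euc N → ℝ)
    (n : Euc N → Euc N) (Cj : ℝ) (F : Euc N → ℝ → ℝ → ℝ → Euc N → ℝ → ℝ)
    (u : Euc N → ℝ → ℝ) : Prop :=
  ∀ ξ > (0:ℝ), ∀ φ : Euc N → ℝ → ℝ,
    ContDiff ℝ 1 (fun q : Euc N × ℝ => φ q.1 q.2) →
    ∀ x ∈ closure Ω, ∀ t ∈ Ioi (0:ℝ),
      (∀ y ∈ closedBall x (Cj * ξ) ∩ closure Ω, ∀ s ∈ Ioi (0:ℝ), |s - t| ≤ ξ →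
        u y s - φ y s ≤ u x t - φ x t) →
      (x ∈ Ω →
        F x t (deriv (φ x) t) (u x t) (gradient (fun y => φ y t) x)
          (Iin Ω j g ξ (fun y => φ y t) x + Iout Ω j g ξ (fun y => u y t) x) ≤ 0) ∧
      (x ∈ frontier Ω →
        min (F x t (deriv (φ x) t) (u x t) (gradient (fun y => φ y t) x)
              (Iin Ω j g ξ (fun y => φ y t) x + Iout Ω j g ξ (fun y => u y t) x))
          ⟪gradient (fun y => φ y t) x, n x⟫ ≤ 0)

/-- Parabolic viscosity supersolution with generalized Neumann boundary conditions. -/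
def IsParSuperSol (Ω : Set (Euc N)) (j : Euc N → Euc N → Euc N) (g : Euc N → Euc N → ℝ)
    (n : Euc N → Euc N) (Cj : ℝ) (F : Euc N → ℝ → ℝ → ℝ → Euc N → ℝ → ℝ)
    (v : Euc N → ℝ → ℝ) : Prop :=
  ∀ ξ > (0:ℝ), ∀ φ : Euc N → ℝ → ℝ,
    ContDiff ℝ 1 (fun q : Euc N × ℝ => φ q.1 q.2) →
    ∀ x ∈ closure Ω, ∀ t ∈ Ioi (0:ℝ),
      (∀ y ∈ closedBall x (Cj * ξ) ∩ closure Ω, ∀ s ∈ Ioi (0:ℝ), |s - t| ≤ ξ →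
        v x t - φ x t ≤ v y s - φ y s) →
      (x ∈ Ω →
        0 ≤ F x t (deriv (φ x) t) (v x t) (gradient (fun y => φ y t) x)
          (Iin Ω j g ξ (fun y => φ y t) x + Iout Ω j g ξ (fun y => v y t) x)) ∧
      (x ∈ frontier Ω →
        0 ≤ max (F x t (deriv (φ x) t) (v x t) (gradient (fun y => φ y t) x)
              (Iin Ω j g ξ (fun y => φ y t) x + Iout Ω j g ξ (fun y => v y t) x))
          ⟪gradient (fun y => φ y t) x, n x⟫)

/-- `F` for the parabolic equation `∂_t u - I[u] + H(x,t,u,Du) = 0`. -/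
def parF (H : Euc N → ℝ → ℝ → Euc N → ℝ) : Euc N → ℝ → ℝ → ℝ → Euc N → ℝ → ℝ :=
  fun x t pt r p I => pt - I + H x t r p

/-! ### Hamiltonians: Bellman form and coercive form (stationary) -/




/-- `H` is of Bellman type with drift `b` and cost `l` over the control set `A`. -/
def IsBellman {A : Type} (b : Euc N → A → Euc N) (l : Euc N → A → ℝ)
    (H : Euc N → Euc N → ℝ) : Prop :=
  ∀ x p, H x p = ⨆ α : A, (-⟪b x α, p⟫ - l x α)

/-- Continuity and boundedness of the Bellman data `b, l`. -/
def BellmanData {A : Type} [TopologicalSpace A]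
    (b : Euc N → A → Euc N) (l : Euc N → A → ℝ) : Prop :=
  Continuous (fun q : Euc N × A => b q.1 q.2) ∧ (∃ M, ∀ x α, ‖b x α‖ ≤ M) ∧
  Continuous (fun q : Euc N × A => l q.1 q.2) ∧ (∃ M, ∀ x α, |l x α| ≤ M)

/-- Assumption (C): uniform continuity of the cost `l`. -/
def AssumptionC (Ω : Set (Euc N)) {A : Type} (l : Euc N → A → ℝ) : Prop :=
  ∃ ω, IsModulus ω ∧ ∀ (α : A), ∀ x ∈ closure Ω, ∀ y ∈ closure Ω,
    |l x α - l y α| ≤ ω ‖x - y‖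

/-- Assumption (L): uniform Lipschitz continuity of the drift `b`. -/
def AssumptionL (Ω : Set (Euc N)) {A : Type} (b : Euc N → A → Euc N) : Prop :=
  ∃ C > (0:ℝ), ∀ (α : A), ∀ x ∈ closure Ω, ∀ y ∈ closure Ω,
    ‖b x α - b y α‖ ≤ C * ‖x - y‖

/-- The part of the boundary where the drift points inwards for every control. -/
def GammaIn (Ω : Set (Euc N)) (n : Euc N → Euc N) {A : Type}
    (b : Euc N → A → Euc N) : Set (Euc N) :=
  {x | x ∈ frontier Ω ∧ ∀ α : A, ⟪b x α, n x⟫ < 0}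

/-- The part of the boundary where the drift points outwards for every control. -/
def GammaOut (Ω : Set (Euc N)) (n : Euc N → Euc N) {A : Type}
    (b : Euc N → A → Euc N) : Set (Euc N) :=
  {x | x ∈ frontier Ω ∧ ∀ α : A, 0 < ⟪b x α, n x⟫}

/-- The part of the boundary where the drift points both inwards and outwards. -/
def GammaMix (Ω : Set (Euc N)) (n : Euc N → Euc N) {A : Type}
    (b : Euc N → A → Euc N) : Set (Euc N) :=
  {x | x ∈ frontier Ω ∧ ∃ α₁ α₂ : A, ⟪b x α₁, n x⟫ < 0 ∧ 0 < ⟪b x α₂, n x⟫}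

/-- `S` is a union of connected components of `T`. -/
def IsUnionOfComponents (S T : Set (Euc N)) : Prop :=
  S ⊆ T ∧ ∀ x ∈ S, connectedComponentIn T x ⊆ S

/-- Assumption (B). -/
def AssumptionB (Ω : Set (Euc N)) (n : Euc N → Euc N) {A : Type}
    (b : Euc N → A → Euc N) : Prop :=
  GammaIn Ω n b ∪ GammaOut Ω n b ∪ GammaMix Ω n b = frontier Ω ∧
  IsUnionOfComponents (GammaIn Ω n b) (frontier Ω) ∧
  IsUnionOfComponents (GammaOut Ω n b) (frontier Ω) ∧
  IsUnionOfComponents (GammaMix Ω n b) (frontier Ω)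

/-- All the structural assumptions on a Bellman Hamiltonian: (C), (L), (B) together
with continuity and boundedness of the data. -/
def StatBellmanOK (Ω : Set (Euc N)) (n : Euc N → Euc N) {A : Type} [TopologicalSpace A]
    (b : Euc N → A → Euc N) (l : Euc N → A → ℝ) (H : Euc N → Euc N → ℝ) : Prop :=
  BellmanData b l ∧ IsBellman b l H ∧ AssumptionC Ω l ∧ AssumptionL Ω b ∧ AssumptionB Ω n b

/-- Assumption (H1): superfractional coercivity of order `m > σ`. -/
def AssumptionH1 (Ω : Set (Euc N)) (H : Euc N → Euc N → ℝ) (σ m c₀ D : ℝ) : Prop :=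
  σ < m ∧ 0 < c₀ ∧ 0 < D ∧ ∀ x ∈ closure Ω, ∀ p : Euc N, c₀ * ‖p‖ ^ m - D ≤ H x p

/-- Assumption (Ha) (sublinear case) with constant `C` and modulus `ω₁`. -/
def AssumptionHa (H : Euc N → Euc N → ℝ) (C : ℝ) (ω₁ : ℝ → ℝ) : Prop :=
  0 < C ∧ IsModulus ω₁ ∧
  ∀ x y p q : Euc N, H y p - H x q ≤ ω₁ ‖x - y‖ * (1 + ‖p‖) + C * ‖p - q‖

/-- Assumption (Hb) (superlinear case) with constants `m, A, Cb`. -/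
def AssumptionHb (H : Euc N → Euc N → ℝ) (m A Cb : ℝ) : Prop :=
  1 < m ∧ 0 < A ∧ 0 < Cb ∧
  ∀ μ ∈ Ioo (0:ℝ) 1, ∀ x p : Euc N,
    H x p - μ * H x (μ⁻¹ • p) ≤ (1 - μ) * (Cb * (1 - m) * ‖p‖ ^ m + A)

/-- Assumption (Hc) with constant `C` and modulus `ω₁`. -/
def AssumptionHc (H : Euc N → Euc N → ℝ) (m C : ℝ) (ω₁ : ℝ → ℝ) : Prop :=
  0 < C ∧ IsModulus ω₁ ∧
  ∀ x y p q : Euc N,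
    H y p - H x q ≤ ω₁ ‖x - y‖ * (1 + (max ‖p‖ ‖q‖) ^ m)
      + C * ‖p - q‖ * (max ‖p‖ ‖q‖) ^ (m - 1)

/-- The structural assumptions on a coercive Hamiltonian:
(H1), (Ha) (sublinear) or (H1), (Hb), (Hc) (superlinear). -/
def StatCoerciveOK (Ω : Set (Euc N)) (H : Euc N → Euc N → ℝ) (σ : ℝ) : Prop :=
  ∃ m c₀ D, AssumptionH1 Ω H σ m c₀ D ∧
    ((m ≤ 1 ∧ ∃ C ω₁, AssumptionHa H C ω₁) ∨
     (∃ A Cb, AssumptionHb H m A Cb ∧ ∃ C ω₁, AssumptionHc H m C ω₁))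

/-- Assumption (E). -/
def AssumptionE (Ω : Set (Euc N)) (H : Euc N → Euc N → ℝ) : Prop :=
  ∀ R > (0:ℝ), ∃ HR : ℝ, ∀ x ∈ closure Ω, ∀ p : Euc N, ‖p‖ ≤ R → |H x p| ≤ HR

/-! ### Parabolic Hamiltonians and assumptions -/

/-- `H(x,t,r,p)` is of (time-dependent) Bellman type. -/
def IsParBellman {A : Type} (lam : Euc N → ℝ → A → ℝ) (b : Euc N → ℝ → A → Euc N)
    (l : Euc N → ℝ → A → ℝ) (H : Euc N → ℝ → ℝ → Euc N → ℝ) : Prop :=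
  ∀ x t r p, H x t r p = ⨆ α : A, (lam x t α * r - ⟪b x t α, p⟫ - l x t α)

/-- Continuity and boundedness of the parabolic Bellman data. -/
def ParBellmanData {A : Type} [TopologicalSpace A] (lam : Euc N → ℝ → A → ℝ)
    (b : Euc N → ℝ → A → Euc N) (l : Euc N → ℝ → A → ℝ) : Prop :=
  Continuous (fun q : Euc N × ℝ × A => lam q.1 q.2.1 q.2.2) ∧
  (∃ M, ∀ x t α, |lam x t α| ≤ M) ∧
  Continuous (fun q : Euc N × ℝ × A => b q.1 q.2.1 q.2.2) ∧
  (∃ M, ∀ x t α, ‖b x t α‖ ≤ M) ∧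
  Continuous (fun q : Euc N × ℝ × A => l q.1 q.2.1 q.2.2) ∧
  (∃ M, ∀ x t α, |l x t α| ≤ M)

/-- Assumption (C'): uniform continuity of `l` and `λ` in `(x,t)`, uniformly in `α`. -/
def AssumptionC' (Ω : Set (Euc N)) {A : Type} (lam l : Euc N → ℝ → A → ℝ) : Prop :=
  (∃ ω, IsModulus ω ∧ ∀ (α : A), ∀ x ∈ closure Ω, ∀ y ∈ closure Ω,
      ∀ t ∈ Ici (0:ℝ), ∀ s ∈ Ici (0:ℝ), |l x t α - l y s α| ≤ ω (‖x - y‖ + |t - s|)) ∧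
  (∃ ω, IsModulus ω ∧ ∀ (α : A), ∀ x ∈ closure Ω, ∀ y ∈ closure Ω,
      ∀ t ∈ Ici (0:ℝ), ∀ s ∈ Ici (0:ℝ), |lam x t α - lam y s α| ≤ ω (‖x - y‖ + |t - s|))

/-- Assumption (L'): uniform Lipschitz continuity of the drift `b` in `(x,t)`. -/
def AssumptionL' (Ω : Set (Euc N)) {A : Type} (b : Euc N → ℝ → A → Euc N) : Prop :=
  ∃ C > (0:ℝ), ∀ (α : A), ∀ x ∈ closure Ω, ∀ y ∈ closure Ω, ∀ s ∈ Ici (0:ℝ), ∀ t ∈ Ici (0:ℝ),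
    ‖b x s α - b y t α‖ ≤ C * (‖x - y‖ + |s - t|)

/-- Inward part of the boundary for time-dependent drift. -/
def GammaInT (Ω : Set (Euc N)) (n : Euc N → Euc N) {A : Type}
    (b : Euc N → ℝ → A → Euc N) : Set (Euc N) :=
  {x | x ∈ frontier Ω ∧ ∀ t ∈ Ici (0:ℝ), ∀ α : A, ⟪b x t α, n x⟫ < 0}

/-- Outward part of the boundary for time-dependent drift. -/
def GammaOutT (Ω : Set (Euc N)) (n : Euc N → Euc N) {A : Type}
    (b : Euc N → ℝ → A → Euc N) : Set (Euc N) :=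
  {x | x ∈ frontier Ω ∧ ∀ t ∈ Ici (0:ℝ), ∀ α : A, 0 < ⟪b x t α, n x⟫}

/-- Mixed part of the boundary for time-dependent drift. -/
def GammaMixT (Ω : Set (Euc N)) (n : Euc N → Euc N) {A : Type}
    (b : Euc N → ℝ → A → Euc N) : Set (Euc N) :=
  {x | x ∈ frontier Ω ∧ ∀ t ∈ Ici (0:ℝ),
    ∃ α₁ α₂ : A, ⟪b x t α₁, n x⟫ < 0 ∧ 0 < ⟪b x t α₂, n x⟫}

/-- Assumption (B'). -/
def AssumptionB' (Ω : Set (Euc N)) (n : Euc N → Euc N) {A : Type}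
    (b : Euc N → ℝ → A → Euc N) : Prop :=
  GammaInT Ω n b ∪ GammaOutT Ω n b ∪ GammaMixT Ω n b = frontier Ω ∧
  IsUnionOfComponents (GammaInT Ω n b) (frontier Ω) ∧
  IsUnionOfComponents (GammaOutT Ω n b) (frontier Ω) ∧
  IsUnionOfComponents (GammaMixT Ω n b) (frontier Ω)

/-- All the structural assumptions on a parabolic Bellman Hamiltonian: (C'), (L'), (B'). -/
def ParBellmanOK (Ω : Set (Euc N)) (n : Euc N → Euc N) {A : Type} [TopologicalSpace A]
    (lam : Euc N → ℝ → A → ℝ) (b : Euc N → ℝ → A → Euc N) (l : Euc N → ℝ → A → ℝ)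
    (H : Euc N → ℝ → ℝ → Euc N → ℝ) : Prop :=
  ParBellmanData lam b l ∧ IsParBellman lam b l H ∧
  AssumptionC' Ω lam l ∧ AssumptionL' Ω b ∧ AssumptionB' Ω n b

/-- Assumption (H'): monotonicity of `H` in the `u` variable. -/
def AssumptionH' (Ω : Set (Euc N)) (H : Euc N → ℝ → ℝ → Euc N → ℝ) : Prop :=
  ∃ K : ℝ, ∀ R > (0:ℝ), ∃ γ, -K ≤ γ ∧
    ∀ x ∈ closure Ω, ∀ t ∈ Icc (0:ℝ) R, ∀ r s : ℝ, |r| ≤ R → |s| ≤ R → s ≤ r →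
      ∀ p : Euc N, γ * (r - s) ≤ H x t r p - H x t s p

/-- Assumption (H''): the monotonicity constants `γ_R` are bounded below by some `γ₀ > 0`. -/
def AssumptionH'' (Ω : Set (Euc N)) (H : Euc N → ℝ → ℝ → Euc N → ℝ) : Prop :=
  ∃ γ₀ > (0:ℝ), ∀ R > (0:ℝ), ∃ γ, γ₀ ≤ γ ∧
    ∀ x ∈ closure Ω, ∀ t ∈ Icc (0:ℝ) R, ∀ r s : ℝ, |r| ≤ R → |s| ≤ R → s ≤ r →
      ∀ p : Euc N, γ * (r - s) ≤ H x t r p - H x t s p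

/-- Assumption (E'). -/
def AssumptionE' (Ω : Set (Euc N)) (H : Euc N → ℝ → ℝ → Euc N → ℝ) : Prop :=
  ∀ T > (0:ℝ), ∀ R > (0:ℝ), ∃ HR : ℝ, ∀ x ∈ Ω, ∀ t ∈ Icc (0:ℝ) T, ∀ r : ℝ, ∀ p : Euc N,
    |r| ≤ R → ‖p‖ ≤ R → |H x t r p| ≤ HR

/-- Assumption (H0'): separated structure `H(x,t,r,p) = H₀(x,r,p) - f(x,t)`. -/
def AssumptionH0' (H : Euc N → ℝ → ℝ → Euc N → ℝ) : Prop :=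
  ∃ (H₀ : Euc N → ℝ → Euc N → ℝ) (f : Euc N → ℝ → ℝ),
    Continuous (fun q : Euc N × ℝ × Euc N => H₀ q.1 q.2.1 q.2.2) ∧
    UniformContinuous (fun q : Euc N × ℝ => f q.1 q.2) ∧
    (∃ M, ∀ x t, |f x t| ≤ M) ∧
    ∀ x t r p, H x t r p = H₀ x r p - f x t

/-- Assumption (He'): `H` satisfies (H1), (Ha) in `x`, uniformly in `t`
and uniformly on compact sets in `r` (sublinearly coercive case). -/
def AssumptionHe' (Ω : Set (Euc N)) (H : Euc N → ℝ → ℝ → Euc N → ℝ) (σ : ℝ) : Prop :=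
  ∃ m : ℝ, σ < m ∧ m ≤ 1 ∧
    ∀ R > (0:ℝ),
      (∃ c₀ > (0:ℝ), ∃ D > (0:ℝ), ∀ x ∈ closure Ω, ∀ t ∈ Ici (0:ℝ), ∀ r : ℝ, |r| ≤ R →
        ∀ p : Euc N, c₀ * ‖p‖ ^ m - D ≤ H x t r p) ∧
      (∃ C > (0:ℝ), ∃ ω₁, IsModulus ω₁ ∧ ∀ x y : Euc N, ∀ t ∈ Ici (0:ℝ), ∀ r : ℝ, |r| ≤ R →
        ∀ p q : Euc N, H y t r p - H x t r q ≤ ω₁ ‖x - y‖ * (1 + ‖p‖) + C * ‖p - q‖)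

/-- Assumption (He''): `H` satisfies (H1), (Hb), (Hc) in `x`, uniformly in `t`
and uniformly on compact sets in `r` (superlinearly coercive case, exponent `m`). -/
def AssumptionHe'' (Ω : Set (Euc N)) (H : Euc N → ℝ → ℝ → Euc N → ℝ) (σ m : ℝ) : Prop :=
  1 < m ∧ σ < m ∧
  ∀ R > (0:ℝ),
    (∃ c₀ > (0:ℝ), ∃ D > (0:ℝ), ∀ x ∈ closure Ω, ∀ t ∈ Ici (0:ℝ), ∀ r : ℝ, |r| ≤ R →
      ∀ p : Euc N, c₀ * ‖p‖ ^ m - D ≤ H x t r p) ∧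
    (∃ A > (0:ℝ), ∃ Cb > (0:ℝ), ∀ μ ∈ Ioo (0:ℝ) 1, ∀ x ∈ closure Ω, ∀ t ∈ Ici (0:ℝ),
      ∀ r : ℝ, |r| ≤ R → ∀ p : Euc N,
        H x t r p - μ * H x t r (μ⁻¹ • p) ≤ (1 - μ) * (Cb * (1 - m) * ‖p‖ ^ m + A)) ∧
    (∃ C > (0:ℝ), ∃ ω₁, IsModulus ω₁ ∧ ∀ x y : Euc N, ∀ t ∈ Ici (0:ℝ), ∀ r : ℝ, |r| ≤ R →
      ∀ p q : Euc N, H y t r p - H x t r q ≤ ω₁ ‖x - y‖ * (1 + (max ‖p‖ ‖q‖) ^ m)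
        + C * ‖p - q‖ * (max ‖p‖ ‖q‖) ^ (m - 1))

/-- Structural parabolic coercive assumptions: (H0') and (He') or (He''). -/
def ParCoerciveOK (Ω : Set (Euc N)) (H : Euc N → ℝ → ℝ → Euc N → ℝ) (σ : ℝ) : Prop :=
  AssumptionH0' H ∧ (AssumptionHe' Ω H σ ∨ ∃ m, AssumptionHe'' Ω H σ m)

/-! ### Iterative covering property -/

/-- The iterated reachable sets `X_r(x)` of the censored jump process. -/
def Xiter (Ω : Set (Euc N)) (j : Euc N → Euc N → Euc N) (g : Euc N → Euc N → ℝ)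
    (x : Euc N) : ℕ → Set (Euc N)
  | 0 => {x}
  | r + 1 => (⋃ ξ ∈ Xiter Ω j g x r,
      (fun z => ξ + j ξ z) '' closure (Function.support (g ξ))) ∩ closure Ω

/-- Iterative covering property: `𝒳(x) = Ω` (i.e. the closure of the reachable set
is all of `closure Ω`) for every `x ∈ Ω`. -/
def CoveringProperty (Ω : Set (Euc N)) (j : Euc N → Euc N → Euc N)
    (g : Euc N → Euc N → ℝ) : Prop :=
  ∀ x ∈ Ω, closure (⋃ r : ℕ, Xiter Ω j g x r) = closure Ω

/-!
Set `w = -v`. At a point where `u + w` minus a small smooth perturbation `L` is strictly maximal,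
the variables are doubled with the penalty
`‖x - y‖² / ε² + (K / ε) √((D x - D y)² + τ²)`, where `D` is the signed distance to `∂Ω` (zero if
the point is interior), and with bounded sines tilting it along `D`. The tilt strictly violates the
Neumann condition, so the equation holds at both maximum points, even on `∂Ω`. By (B) the
Hamiltonian is coercive along the normal, which for large `K` forces `|D x - D y| ≤ τ`, with `τ` as
small as we please compared to `ε`. A jump that is censored at only one of the two points then lands
in a thin strip along `∂Ω`, and such strips carry little mass because `σ < 1`; all other jumps are
compared through the maximum property. Letting `ε`, then the localisation radius, then the size of
`L` tend to zero gives `u + w ≤ 0`.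
-/

/-! ### The weighted Lévy kernel -/

section Kernel

variable {σ t : ℝ}

/-- The profile `|z|^{-(N+σ)}` dominating the jump densities in (M). -/
def levyKernel (σ : ℝ) (z : Euc N) : ℝ := ‖z‖ ^ (-((N : ℝ) + σ))

/-- The weight `min (t^{σ/2}) (t^{(1+σ)/2})` of a jump of length `t`. The first exponent is
below `σ`, the second strictly between `σ` and `1`: the product with the kernel is integrable both
at infinity and at the origin, while increments of a Lipschitz function are still dominated. -/
def jumpWeight (σ t : ℝ) : ℝ := min (t ^ (σ / 2)) (t ^ ((1 + σ) / 2))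

/-- The integrable kernel `jumpWeight σ |z| * |z|^{-(N+σ)}`. -/
def weightedKernel (σ : ℝ) (z : Euc N) : ℝ := jumpWeight σ ‖z‖ * levyKernel σ z

lemma levyKernel_nonneg (σ : ℝ) (z : Euc N) : 0 ≤ levyKernel σ z :=
  Real.rpow_nonneg (norm_nonneg _) _

lemma jumpWeight_nonneg (σ : ℝ) (ht : 0 ≤ t) : 0 ≤ jumpWeight σ t :=
  le_min (Real.rpow_nonneg ht _) (Real.rpow_nonneg ht _)

lemma weightedKernel_nonneg (σ : ℝ) (z : Euc N) : 0 ≤ weightedKernel σ z :=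
  mul_nonneg (jumpWeight_nonneg σ (norm_nonneg z)) (levyKernel_nonneg σ z)

lemma measurable_levyKernel (σ : ℝ) : Measurable (levyKernel σ : Euc N → ℝ) := by
  unfold levyKernel
  fun_prop

lemma measurable_weightedKernel (σ : ℝ) : Measurable (weightedKernel σ : Euc N → ℝ) := by
  unfold weightedKernel jumpWeight levyKernel
  fun_prop

lemma rpow_mul_levyKernel (σ p : ℝ) {z : Euc N} (hz : z ≠ 0) :
    ‖z‖ ^ p * levyKernel σ z = ‖z‖ ^ (-((N : ℝ) + σ - p)) := by
  rw [levyKernel, ← Real.rpow_add (norm_pos_iff.2 hz)]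
  ring_nf

lemma weightedKernel_le_near (σ : ℝ) {z : Euc N} (hz : z ≠ 0) :
    weightedKernel σ z ≤ ‖z‖ ^ (-((N : ℝ) + σ - (1 + σ) / 2)) := by
  rw [← rpow_mul_levyKernel σ _ hz]
  exact mul_le_mul_of_nonneg_right (min_le_right _ _) (levyKernel_nonneg σ z)

lemma weightedKernel_le_far (σ : ℝ) {z : Euc N} (hz : z ≠ 0) :
    weightedKernel σ z ≤ ‖z‖ ^ (-((N : ℝ) + σ - σ / 2)) := by
  rw [← rpow_mul_levyKernel σ _ hz]
  exact mul_le_mul_of_nonneg_right (min_le_left _ _) (levyKernel_nonneg σ z)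

lemma integrableOn_weightedKernel_ball (hN : 0 < N) (hσ : σ < 1) :
    IntegrableOn (weightedKernel σ) (ball (0 : Euc N) 1) := by
  have : NeZero N := ⟨hN.ne'⟩
  refine integrableOn_ball_of_norm_le_rpow (C := 1) (α := (N : ℝ) + σ - (1 + σ) / 2) (by simpa)
    (by simp only [finrank_euclideanSpace_fin]; linarith) ?_
    (measurable_weightedKernel σ).aestronglyMeasurable
  filter_upwards [ae_restrict_of_ae (Measure.ae_ne volume (0 : Euc N))] with z hz
  rw [Real.norm_of_nonneg (weightedKernel_nonneg σ z), one_mul]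
  exact weightedKernel_le_near σ hz

lemma integrableOn_weightedKernel_compl_ball (hσ : 0 < σ) :
    IntegrableOn (weightedKernel σ) (ball (0 : Euc N) 1)ᶜ := by
  set p : ℝ := (N : ℝ) + σ - σ / 2 with hp
  have : 0 ≤ p := by rw [hp]; linarith [Nat.cast_nonneg (α := ℝ) N]
  have hint : Integrable (fun z : Euc N => 2 ^ p * (1 + ‖z‖) ^ (-p)) :=
    (integrable_one_add_norm (by rw [finrank_euclideanSpace_fin, hp]; linarith)).const_mul _
  refine Integrable.mono' hint.integrableOn (measurable_weightedKernel σ).aestronglyMeasurable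
    (ae_restrict_of_forall_mem measurableSet_ball.compl fun z hz => ?_)
  have hz1 : 1 ≤ ‖z‖ := by simpa using hz
  have hz0 : 0 < ‖z‖ := one_pos.trans_le hz1
  calc ‖weightedKernel σ z‖ = weightedKernel σ z := Real.norm_of_nonneg (weightedKernel_nonneg σ z)
    _ ≤ ‖z‖ ^ (-p) := weightedKernel_le_far σ (norm_pos_iff.1 hz0)
    _ = 2 ^ p * (2 * ‖z‖) ^ (-p) := by
        rw [Real.mul_rpow two_pos.le hz0.le, Real.rpow_neg two_pos.le, mul_inv_cancel_left₀]
        positivity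
    _ ≤ 2 ^ p * (1 + ‖z‖) ^ (-p) := by
        refine mul_le_mul_of_nonneg_left ?_ (by positivity)
        exact Real.rpow_le_rpow_of_nonpos (by positivity) (by linarith) (by linarith)

lemma integrable_weightedKernel (hN : 0 < N) (hσ : σ ∈ Ioo (0 : ℝ) 1) :
    Integrable (weightedKernel σ : Euc N → ℝ) := by
  rw [← integrableOn_univ, ← union_compl_self (ball (0 : Euc N) 1)]
  exact (integrableOn_weightedKernel_ball hN hσ.2).union
    (integrableOn_weightedKernel_compl_ball hσ.1)

lemma tendsto_setIntegral_weightedKernel_ball (hN : 0 < N) (hσ : σ ∈ Ioo (0 : ℝ) 1) :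
    Tendsto (fun ξ => ∫ z in ball (0 : Euc N) ξ, weightedKernel σ z) (𝓝[>] 0) (𝓝 0) := by
  have : NeZero N := ⟨hN.ne'⟩
  refine (integrable_weightedKernel hN hσ).tendsto_setIntegral_nhds_zero ?_
  have hball := tendsto_measure_biInter_gt (μ := (volume : Measure (Euc N))) (s := ball 0)
    (a := (0 : ℝ)) (fun _ _ => measurableSet_ball.nullMeasurableSet)
    (fun _ _ _ h => ball_subset_ball h) ⟨1, one_pos, measure_ball_lt_top.ne⟩
  rwa [biInter_gt_ball, closedBall_zero, measure_singleton] at hball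

lemma exists_levyKernel_le_mul_weightedKernel (hσ : 0 < σ) {η : ℝ} (hη : 0 < η) :
    ∃ c > 0, ∀ z ∈ (ball (0 : Euc N) η)ᶜ, levyKernel σ z ≤ c * weightedKernel σ z := by
  have hw : 0 < jumpWeight σ η := lt_min (by positivity) (by positivity)
  refine ⟨(jumpWeight σ η)⁻¹, by positivity, fun z hz => ?_⟩
  have hz' : η ≤ ‖z‖ := by simpa using hz
  rw [inv_mul_eq_div, le_div_iff₀ hw, mul_comm, weightedKernel]
  refine mul_le_mul_of_nonneg_right ?_ (levyKernel_nonneg σ z)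
  unfold jumpWeight
  gcongr

lemma integrableOn_levyKernel_compl_ball (hN : 0 < N) (hσ : σ ∈ Ioo (0 : ℝ) 1) {η : ℝ}
    (hη : 0 < η) : IntegrableOn (levyKernel σ) (ball (0 : Euc N) η)ᶜ := by
  obtain ⟨c, -, hc⟩ := exists_levyKernel_le_mul_weightedKernel (N := N) hσ.1 hη
  refine Integrable.mono' ((integrable_weightedKernel hN hσ).const_mul c).integrableOn
    (measurable_levyKernel σ).aestronglyMeasurable
    (ae_restrict_of_forall_mem measurableSet_ball.compl fun z hz => ?_)
  rw [Real.norm_of_nonneg (levyKernel_nonneg σ z)]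
  exact hc z hz

lemma min_one_le_rpow {s p : ℝ} (hs : 0 ≤ s) (hp0 : 0 ≤ p) (hp1 : p ≤ 1) : min 1 s ≤ s ^ p := by
  rcases le_total 1 s with h | h
  · exact (min_le_left _ _).trans (Real.one_le_rpow h hp0)
  · exact (min_le_right _ _).trans (Real.self_le_rpow_of_le_one hs h hp1)

lemma le_jumpWeight (hσ : σ ∈ Ioo (0 : ℝ) 1) (ht : 0 ≤ t) (ht1 : t ≤ 1) : t ≤ jumpWeight σ t :=
  le_min (Real.self_le_rpow_of_le_one ht ht1 (by linarith [hσ.2]))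
    (Real.self_le_rpow_of_le_one ht ht1 (by linarith [hσ.2]))

lemma min_one_div_le_jumpWeight (hσ : σ ∈ Ioo (0 : ℝ) 1) {ε : ℝ} (hε : 0 < ε) (hε1 : ε ≤ 1)
    (ht : 0 ≤ t) : min 1 (t / ε) ≤ ε ^ (-((1 + σ) / 2)) * jumpWeight σ t := by
  obtain ⟨hσ0, hσ1⟩ := hσ
  have key (p : ℝ) (hp : 0 ≤ p) (hp' : p ≤ (1 + σ) / 2) :
      min 1 (t / ε) ≤ ε ^ (-((1 + σ) / 2)) * t ^ p := by
    calc min 1 (t / ε) ≤ (t / ε) ^ p := min_one_le_rpow (by positivity) hp (by linarith)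
      _ = ε ^ (-p) * t ^ p := by
          rw [Real.div_rpow ht hε.le, div_eq_mul_inv, mul_comm, Real.rpow_neg hε.le]
      _ ≤ ε ^ (-((1 + σ) / 2)) * t ^ p := by
          refine mul_le_mul_of_nonneg_right ?_ (by positivity)
          exact Real.rpow_le_rpow_of_exponent_ge hε hε1 (by linarith)
  rw [jumpWeight, mul_min_of_nonneg _ _ (by positivity)]
  exact le_min (key _ (by linarith) (by linarith)) (key _ (by linarith) le_rfl)

lemma two_mul_rpow_le {θ q r : ℝ} (hθ : 0 < θ) (hθ1 : θ ≤ 1) (hq : q ≤ 1) (hr : r ≤ q) :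
    (2 * θ) ^ q ≤ 2 * θ ^ r := by
  rw [Real.mul_rpow two_pos.le hθ.le]
  refine mul_le_mul ?_ (Real.rpow_le_rpow_of_exponent_ge hθ hθ1 hr) (by positivity) two_pos.le
  simpa using Real.rpow_le_rpow_of_exponent_le one_le_two hq

lemma min_one_quadratic_le_jumpWeight (hσ : σ ∈ Ioo (0 : ℝ) 1) {θ : ℝ} (hθ : 0 < θ)
    (hθ1 : θ ≤ 1) (ht : 0 ≤ t) :
    min 1 (θ * (t + t ^ 2)) ≤ 2 * θ ^ (σ / 4) * jumpWeight σ t := by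
  obtain ⟨hσ0, hσ1⟩ := hσ
  have key (p : ℝ) (hp : σ / 2 ≤ p) (hp' : p ≤ (1 + σ) / 2) :
      min 1 (θ * (t + t ^ 2)) ≤ 2 * θ ^ (σ / 4) * t ^ p := by
    rcases le_total t 1 with h | h
    · calc min 1 (θ * (t + t ^ 2)) ≤ min 1 (2 * θ * t) := by
            refine min_le_min le_rfl ?_
            nlinarith [mul_nonneg hθ.le ht]
        _ ≤ (2 * θ * t) ^ p := min_one_le_rpow (by positivity) (by linarith) (by linarith)
        _ = (2 * θ) ^ p * t ^ p := Real.mul_rpow (by positivity) ht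
        _ ≤ 2 * θ ^ (σ / 4) * t ^ p := by
            gcongr
            exact two_mul_rpow_le hθ hθ1 (by linarith) (by linarith)
    · calc min 1 (θ * (t + t ^ 2)) ≤ min 1 (2 * θ * t ^ 2) := by
            refine min_le_min le_rfl ?_
            nlinarith [mul_nonneg hθ.le (mul_nonneg ht (sub_nonneg.2 h))]
        _ ≤ (2 * θ * t ^ 2) ^ (p / 2) :=
            min_one_le_rpow (by positivity) (by linarith) (by linarith)
        _ = (2 * θ) ^ (p / 2) * t ^ p := by
            rw [Real.mul_rpow (by positivity) (by positivity), ← Real.rpow_natCast_mul ht,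
              Nat.cast_ofNat, mul_div_cancel₀ p two_ne_zero]
        _ ≤ 2 * θ ^ (σ / 4) * t ^ p := by
            gcongr
            exact two_mul_rpow_le hθ hθ1 (by linarith) (by linarith)
  rw [jumpWeight, mul_min_of_nonneg _ _ (by positivity)]
  exact le_min (key _ le_rfl (by linarith)) (key _ (by linarith) le_rfl)

end Kernel

/-! ### Volumes of Lipschitz images and of strips -/

section Volume

variable {E : Type*} [NormedAddCommGroup E] [NormedSpace ℝ E] {D : E → ℝ} {e : E} {t : ℝ}

lemma addHaar_image_le_of_lipschitzOnWith [FiniteDimensional ℝ E] [MeasurableSpace E]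
    [BorelSpace E] (μ : Measure E) [μ.IsAddHaarMeasure] {K : ℝ≥0} {f : E → E} {S : Set E}
    (hf : LipschitzOnWith K f S) : μ (f '' S) ≤ (K : ℝ≥0∞) ^ Module.finrank ℝ E * μ S := by
  rw [Measure.isAddLeftInvariant_eq_smul μ (Measure.hausdorffMeasure (Module.finrank ℝ E))]
  have h := hf.hausdorffMeasure_image_le (d := Module.finrank ℝ E) (Nat.cast_nonneg _)
  rw [ENNReal.rpow_natCast] at h
  rw [Measure.smul_apply, Measure.smul_apply, mul_smul_comm]
  exact smul_le_smul_of_nonneg_left h (by positivity)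

lemma card_mul_measure_le_of_disjoint_translates {G : Type*} [AddGroup G] [MeasurableSpace G]
    [MeasurableAdd G] {μ : Measure G} [μ.IsAddRightInvariant] {m : ℕ} {a : Fin m → G} {T B : Set G}
    (hT : MeasurableSet T) (hdisj : Pairwise (Disjoint on fun i => (· + a i) ⁻¹' T))
    (hB : ∀ i, (· + a i) ⁻¹' T ⊆ B) : m * μ T ≤ μ B :=
  calc m * μ T = ∑ i, μ ((· + a i) ⁻¹' T) := by simp [measure_preimage_add_right]
    _ = μ (⋃ i, (· + a i) ⁻¹' T) := by
      rw [measure_iUnion hdisj fun i => hT.preimage (measurable_add_const _), tsum_fintype]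
    _ ≤ μ B := measure_mono (iUnion_subset hB)

/-- `D` grows at rate at least `1/2` in the direction `e` within `S`. -/
def GrowsAlong (D : E → ℝ) (e : E) (S : Set E) : Prop :=
  ∀ X ∈ S, ∀ t : ℝ, 0 ≤ t → X + t • e ∈ S → t / 2 ≤ D (X + t • e) - D X

lemma GrowsAlong.disjoint_translates {S T : Set E} (h : GrowsAlong D e S) (hTS : T ⊆ S)
    (hT : ∀ X ∈ T, |D X| ≤ t) {a b : ℝ} (hab : a + 4 * t < b) :
    Disjoint ((· + a • e) ⁻¹' T) ((· + b • e) ⁻¹' T) := by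
  refine Set.disjoint_left.2 fun Y ha hb => ?_
  have hshift : Y + b • e = Y + a • e + (b - a) • e := by rw [add_assoc, ← add_smul]; simp
  have ht : 0 ≤ t := (abs_nonneg _).trans (hT _ ha)
  have hgrow := h _ (hTS ha) (b - a) (by linarith) (hshift ▸ hTS hb)
  rw [← hshift] at hgrow
  linarith [(abs_le.1 (hT _ ha)).1, (abs_le.1 (hT _ hb)).2]

lemma preimage_add_ball_subset {p : E} {a ρ : ℝ} (he : ‖e‖ ≤ 1) (ha : 0 ≤ a) (haρ : a ≤ ρ) :
    (· + a • e) ⁻¹' ball p ρ ⊆ ball p (2 * ρ) := by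
  intro Y hY
  have hae : ‖a • e‖ ≤ ρ := by
    rw [norm_smul, Real.norm_of_nonneg ha]
    exact (mul_le_of_le_one_right ha he).trans haρ
  have hY' : ‖Y + a • e - p‖ < ρ := by rwa [mem_preimage, mem_ball, dist_eq_norm] at hY
  rw [mem_ball, dist_eq_norm]
  calc ‖Y - p‖ = ‖Y + a • e - p - a • e‖ := by congr 1; abel
    _ ≤ ‖Y + a • e - p‖ + ‖a • e‖ := norm_sub_le _ _
    _ < 2 * ρ := by linarith

variable [FiniteDimensional ℝ E] [MeasurableSpace E] [BorelSpace E]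
  (μ : Measure E) [μ.IsAddHaarMeasure]

/- About `ρ / (5 t)` translates of the strip by multiples of `5 t e` are disjoint and fit into the
ball of twice the radius. -/
lemma GrowsAlong.mul_measureReal_strip_le (hD : Continuous D) (he : ‖e‖ ≤ 1) {p : E} {ρ : ℝ}
    (h : GrowsAlong D e (ball p ρ)) (hρ : 0 < ρ) (ht : 0 < t) :
    ρ / (5 * t) * μ.real (ball p ρ ∩ {X | |D X| ≤ t}) ≤ μ.real (ball p (2 * ρ)) := by
  set T := ball p ρ ∩ {X | |D X| ≤ t}
  set m := ⌊ρ / (5 * t)⌋₊ + 1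
  let a : Fin m → ℝ := fun i => 5 * t * (i : ℕ)
  have ha : ∀ i, a i ≤ ρ := fun i => by
    have hi := (Nat.le_floor_iff (by positivity)).1 (Nat.lt_succ_iff.1 i.2)
    rw [le_div_iff₀ (by positivity)] at hi
    linarith
  have hsep : ∀ i k : Fin m, i < k → Disjoint ((· + a i • e) ⁻¹' T) ((· + a k • e) ⁻¹' T) := by
    intro i k hik
    refine h.disjoint_translates inter_subset_left (fun X hX => hX.2) ?_
    have : ((i : ℕ) : ℝ) + 1 ≤ (k : ℕ) := by exact_mod_cast hik
    nlinarith
  have hcount : m * μ T ≤ μ (ball p (2 * ρ)) := by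
    refine card_mul_measure_le_of_disjoint_translates (a := fun i => a i • e)
      (measurableSet_ball.inter (measurableSet_le hD.abs.measurable measurable_const)) ?_ fun i =>
        (preimage_mono inter_subset_left).trans
          (preimage_add_ball_subset he (by positivity) (ha i))
    exact (pairwise_disjoint_on _).2 hsep
  have hcount' : m * μ.real T ≤ μ.real (ball p (2 * ρ)) := by
    have := ENNReal.toReal_mono measure_ball_lt_top.ne hcount
    rwa [ENNReal.toReal_mul, ENNReal.toReal_natCast] at this
  refine (mul_le_mul_of_nonneg_right ?_ measureReal_nonneg).trans hcount'
  exact_mod_cast (Nat.lt_floor_add_one (ρ / (5 * t))).le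

lemma GrowsAlong.exists_measureReal_strip_le (hD : Continuous D) (he : ‖e‖ ≤ 1) {S : Set E}
    (h : GrowsAlong D e S) (hE : 0 < Module.finrank ℝ E) :
    ∃ C ≥ 0, ∀ (p : E) (ρ t : ℝ), 0 < ρ → 0 < t → ball p ρ ⊆ S →
      μ.real (ball p ρ ∩ {X | |D X| ≤ t}) ≤ C * t * ρ ^ (Module.finrank ℝ E - 1) := by
  refine ⟨5 * 2 ^ Module.finrank ℝ E * μ.real (ball 0 1), by positivity, fun p ρ t hρ ht hS => ?_⟩
  have hball : GrowsAlong D e (ball p ρ) := fun X hX t ht hX' => h X (hS hX) t ht (hS hX')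
  have hstrip := hball.mul_measureReal_strip_le μ hD he hρ ht
  have : Nontrivial E := Module.finrank_pos_iff.1 hE
  rw [measureReal_def, measureReal_def, Measure.addHaar_ball _ _ (by positivity),
    ENNReal.toReal_mul, ENNReal.toReal_ofReal (by positivity), ← measureReal_def,
    ← measureReal_def, mul_pow] at hstrip
  obtain ⟨k, hk⟩ := Nat.exists_eq_succ_of_ne_zero hE.ne'
  rw [hk, pow_succ ρ, div_mul_eq_mul_div, div_le_iff₀ (by positivity)] at hstrip
  rw [hk, Nat.succ_sub_one]
  refine le_of_mul_le_mul_left (hstrip.trans_eq ?_) hρ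
  ring

end Volume

/-! ### Locally `C^{1,1}` functions and the signed distance -/

/-- `D` is `2`-Lipschitz on the whole space and of class `C^{1,1}` on `ball s r`, where its
differential is `K`-Lipschitz. Near a boundary point the signed distance is of this kind, and at
interior points `D = 0` is used in its place, so that both cases are treated at once. -/
structure IsC11On {E : Type*} [NormedAddCommGroup E] [NormedSpace ℝ E] (D : E → ℝ) (s : E)
    (r K : ℝ) : Prop where
  radius_pos : 0 < r
  const_nonneg : 0 ≤ K
  lipschitz : LipschitzWith 2 D
  contDiffOn : ContDiffOn ℝ 1 D (ball s r)
  norm_fderiv_sub_le : ∀ x ∈ ball s r, ∀ y ∈ ball s r, ‖fderiv ℝ D x - fderiv ℝ D y‖ ≤ K * ‖x - y‖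

namespace IsC11On

variable {E : Type*} [NormedAddCommGroup E] [NormedSpace ℝ E] {D : E → ℝ} {s x y a b e : E}
  {r r' K : ℝ}

lemma zero (s : E) : IsC11On (fun _ : E => (0 : ℝ)) s 1 0 where
  radius_pos := one_pos
  const_nonneg := le_rfl
  lipschitz := LipschitzWith.const' 0
  contDiffOn := contDiffOn_const
  norm_fderiv_sub_le := by simp

lemma mono (h : IsC11On D s r K) (hr' : 0 < r') (hle : r' ≤ r) : IsC11On D s r' K where
  radius_pos := hr'
  const_nonneg := h.const_nonneg
  lipschitz := h.lipschitz
  contDiffOn := h.contDiffOn.mono (ball_subset_ball hle)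
  norm_fderiv_sub_le := fun x hx y hy =>
    h.norm_fderiv_sub_le x (ball_subset_ball hle hx) y (ball_subset_ball hle hy)

lemma continuous (h : IsC11On D s r K) : Continuous D := h.lipschitz.continuous

lemma abs_sub_le (h : IsC11On D s r K) (x y : E) : |D x - D y| ≤ 2 * ‖x - y‖ := by
  simpa [Real.dist_eq, dist_eq_norm] using h.lipschitz.dist_le_mul x y

lemma norm_fderiv_le (h : IsC11On D s r K) (x : E) : ‖fderiv ℝ D x‖ ≤ 2 := by
  simpa using norm_fderiv_le_of_lipschitz ℝ h.lipschitz

lemma differentiableAt (h : IsC11On D s r K) (hx : x ∈ ball s r) : DifferentiableAt ℝ D x :=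
  (h.contDiffOn.differentiableOn one_ne_zero).differentiableAt (isOpen_ball.mem_nhds hx)

lemma abs_sub_fderiv_le (h : IsC11On D s r K) (hx : x ∈ ball s r) (hy : y ∈ ball s r) :
    |D y - D x - fderiv ℝ D x (y - x)| ≤ K * ‖y - x‖ ^ 2 := by
  have hseg : segment ℝ x y ⊆ ball s r := (convex_ball s r).segment_subset hx hy
  rw [pow_two, ← mul_assoc, ← Real.norm_eq_abs]
  refine (convex_segment x y).norm_image_sub_le_of_norm_fderiv_le' (𝕜 := ℝ)
    (fun w hw => h.differentiableAt (hseg hw))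
    (fun w hw => (h.norm_fderiv_sub_le w (hseg hw) x hx).trans ?_)
    (left_mem_segment ℝ x y) (right_mem_segment ℝ x y)
  exact mul_le_mul_of_nonneg_left
    (by simpa [norm_sub_rev] using norm_sub_le_of_mem_segment hw) h.const_nonneg

lemma hasFDerivAt_increment (h : IsC11On D s r K) (hx : x ∈ ball s r) (hxa : x + a ∈ ball s r) :
    HasFDerivAt (fun w => D (w + a) - D w) (fderiv ℝ D (x + a) - fderiv ℝ D x) x :=
  ((hasFDerivAt_comp_add_right a).2 (h.differentiableAt hxa).hasFDerivAt).sub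
    (h.differentiableAt hx).hasFDerivAt

lemma abs_increment_sub_le (h : IsC11On D s r K) (hx : x ∈ ball s r) (hy : y ∈ ball s r)
    (hxa : x + a ∈ ball s r) (hya : y + a ∈ ball s r) :
    |D (x + a) - D x - (D (y + b) - D y)| ≤ K * ‖a‖ * ‖x - y‖ + 2 * ‖a - b‖ := by
  have hseg : segment ℝ x y ⊆ ball s r := (convex_ball s r).segment_subset hx hy
  have hsega : ∀ w ∈ segment ℝ x y, w + a ∈ ball s r := fun w hw =>
    (convex_ball s r).segment_subset hxa hya <| by
      simpa only [add_comm _ a] using (mem_segment_translate ℝ a).2 hw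
  have hsame : |D (x + a) - D x - (D (y + a) - D y)| ≤ K * ‖a‖ * ‖x - y‖ := by
    refine (convex_segment x y).norm_image_sub_le_of_norm_hasFDerivWithin_le (𝕜 := ℝ)
      (f := fun w => D (w + a) - D w)
      (fun w hw => (h.hasFDerivAt_increment (hseg hw) (hsega w hw)).hasFDerivWithinAt)
      (fun w hw => ?_) (right_mem_segment ℝ x y) (left_mem_segment ℝ x y)
    simpa using h.norm_fderiv_sub_le _ (hsega w hw) _ (hseg hw)
  have hshift : |D (y + a) - D (y + b)| ≤ 2 * ‖a - b‖ := by
    simpa using h.abs_sub_le (y + a) (y + b)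
  calc |D (x + a) - D x - (D (y + b) - D y)|
      = |(D (x + a) - D x - (D (y + a) - D y)) + (D (y + a) - D (y + b))| := by congr 1; ring
    _ ≤ _ := (abs_add_le _ _).trans (add_le_add hsame hshift)

lemma growsAlong (h : IsC11On D s r K) (he : ‖e‖ ≤ 1) (hde : 1 ≤ fderiv ℝ D s e)
    (hr : K * r ≤ 1 / 2) : GrowsAlong D e (ball s r) := by
  intro X hX t ht hX'
  have hosc : ∀ w ∈ ball s r, ‖fderiv ℝ D w - fderiv ℝ D s‖ ≤ 1 / 2 := fun w hw =>
    calc _ ≤ K * ‖w - s‖ := h.norm_fderiv_sub_le w hw s (mem_ball_self h.radius_pos)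
      _ ≤ K * r := mul_le_mul_of_nonneg_left (mem_ball_iff_norm.1 hw).le h.const_nonneg
      _ ≤ 1 / 2 := hr
  have hlin := (convex_ball s r).norm_image_sub_le_of_norm_fderiv_le' (𝕜 := ℝ)
    (fun w hw => h.differentiableAt hw) hosc hX hX'
  rw [Real.norm_eq_abs, add_sub_cancel_left, map_smul, smul_eq_mul, norm_smul,
    Real.norm_of_nonneg ht] at hlin
  nlinarith [(abs_le.1 hlin).1, mul_le_mul_of_nonneg_left he ht]

end IsC11On

section SignedDistance

variable {Ω : Set (Euc N)} {x s : Euc N}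

lemma lipschitzWith_sdist (Ω : Set (Euc N)) : LipschitzWith 2 (sdist Ω) := by
  have h := (lipschitz_infDist_pt Ωᶜ).sub (lipschitz_infDist_pt Ω)
  rwa [one_add_one_eq_two] at h

lemma sdist_nonneg (hx : x ∈ closure Ω) : 0 ≤ sdist Ω x := by
  rw [sdist, infDist_zero_of_mem_closure hx, sub_zero]
  exact infDist_nonneg

lemma sdist_nonpos (hx : x ∉ Ω) : sdist Ω x ≤ 0 := by
  rw [sdist, infDist_zero_of_mem (show x ∈ Ωᶜ from hx), zero_sub, neg_nonpos]
  exact infDist_nonneg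

lemma sdist_eq_zero_of_mem_frontier (hΩ : IsOpen Ω) (hx : x ∈ frontier Ω) : sdist Ω x = 0 := by
  rw [hΩ.frontier_eq] at hx
  exact le_antisymm (sdist_nonpos hx.2) (sdist_nonneg hx.1)

lemma IsW2Domain.exists_isC11On_sdist {hN : 0 < N} (hΩ : IsW2Domain hN Ω) (hs : s ∈ frontier Ω) :
    ∃ r K, IsC11On (sdist Ω) s r K := by
  obtain ⟨r, ψ, -, hr, hψ, ⟨L, hL⟩, -, -, -, hlast⟩ := hΩ.2 s hs
  let P : Euc N →L[ℝ] ℝ := EuclideanSpace.proj ⟨N - 1, Nat.sub_lt hN Nat.one_pos⟩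
  have heq : EqOn (sdist Ω) (P ∘ ψ) (ball s r) := fun x hx => (hlast x hx).symm
  have hfderiv : ∀ x ∈ ball s r, fderiv ℝ (sdist Ω) x = P.comp (fderiv ℝ ψ x) := by
    intro x hx
    have hψx := (hψ.differentiableOn one_ne_zero).differentiableAt (isOpen_ball.mem_nhds hx)
    rw [(heq.eventuallyEq_of_mem (isOpen_ball.mem_nhds hx)).fderiv_eq]
    exact (P.hasFDerivAt.comp x hψx.hasFDerivAt).fderiv
  refine ⟨r, ‖P‖ * L, hr, by positivity, lipschitzWith_sdist Ω,
    (P.contDiff.comp_contDiffOn hψ).congr heq, fun x hx y hy => ?_⟩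
  rw [hfderiv x hx, hfderiv y hy, ← ContinuousLinearMap.comp_sub, mul_assoc, ← dist_eq_norm x y]
  refine (ContinuousLinearMap.opNorm_comp_le _ _).trans
    (mul_le_mul_of_nonneg_left ?_ (norm_nonneg _))
  simpa only [dist_eq_norm] using hL.dist_le_mul x hx y hy

lemma IsW2Domain.exists_growsAlong_sdist {hN : 0 < N} (hΩ : IsW2Domain hN Ω)
    {n : Euc N → Euc N} (hn : IsExteriorNormal Ω n) (hs : s ∈ frontier Ω) :
    ∃ r K, IsC11On (sdist Ω) s r K ∧ GrowsAlong (sdist Ω) (-(n s)) (ball s r) := by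
  obtain ⟨r, K, hD⟩ := hΩ.exists_isC11On_sdist hs
  obtain ⟨hn1, hgrad⟩ := hn s hs
  have hK := hD.const_nonneg
  have hD' := hD.mono (r' := min r (1 / (2 * (K + 1))))
    (lt_min hD.radius_pos (by positivity)) (min_le_left _ _)
  refine ⟨_, K, hD', hD'.growsAlong (by simp [hn1]) ?_ ?_⟩
  · rw [hgrad.hasFDerivAt.fderiv]
    simp [hn1]
  · calc K * min r (1 / (2 * (K + 1))) ≤ K * (1 / (2 * (K + 1))) := by
          gcongr; exact min_le_right _ _
      _ ≤ 1 / 2 := by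
          rw [mul_one_div, div_le_div_iff₀ (by positivity) (by norm_num)]; linarith

end SignedDistance

lemma GrowsAlong.addHaar_zeroSet {E : Type*} [NormedAddCommGroup E] [NormedSpace ℝ E]
    [FiniteDimensional ℝ E] [MeasurableSpace E] [BorelSpace E] (μ : Measure E)
    [μ.IsAddHaarMeasure] {D : E → ℝ} {e p : E} {ρ : ℝ} (h : GrowsAlong D e (ball p ρ))
    (hD : Continuous D) (he : ‖e‖ ≤ 1) (hE : 0 < Module.finrank ℝ E) (hρ : 0 < ρ) :
    μ (ball p ρ ∩ {X | D X = 0}) = 0 := by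
  obtain ⟨C, -, hC⟩ := h.exists_measureReal_strip_le μ hD he hE
  have hfin : ∀ S : Set E, μ (ball p ρ ∩ S) ≠ ∞ := fun S =>
    measure_ne_top_of_subset inter_subset_left measure_ball_lt_top.ne
  have hle : ∀ t > 0, μ.real (ball p ρ ∩ {X | D X = 0}) ≤ C * t * ρ ^ (Module.finrank ℝ E - 1) := by
    intro t ht
    refine (measureReal_mono (inter_subset_inter_right _ fun X hX => ?_) (hfin _)).trans
      (hC p ρ t hρ ht subset_rfl)
    have : D X = 0 := hX
    simp [this, ht.le]
  have hlim : Tendsto (fun t : ℝ => C * t * ρ ^ (Module.finrank ℝ E - 1)) (𝓝[>] 0) (𝓝 0) := by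
    refine Tendsto.mono_left ?_ nhdsWithin_le_nhds
    have hcont : Continuous fun t : ℝ => C * t * ρ ^ (Module.finrank ℝ E - 1) := by fun_prop
    simpa using hcont.tendsto 0
  have h0 := ge_of_tendsto hlim (eventually_nhdsWithin_of_forall hle)
  exact (measureReal_eq_zero_iff (hfin _)).1 (h0.antisymm measureReal_nonneg)

lemma IsW2Domain.volume_frontier {hN : 0 < N} {Ω : Set (Euc N)} (hΩ : IsW2Domain hN Ω)
    {n : Euc N → Euc N} (hn : IsExteriorNormal Ω n) : volume (frontier Ω) = 0 := by
  refine measure_null_of_locally_null _ fun s hs => ?_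
  obtain ⟨r, K, hD, hgrow⟩ := hΩ.exists_growsAlong_sdist hn hs
  refine ⟨ball s r ∩ frontier Ω, inter_mem (mem_nhdsWithin_of_mem_nhds
    (ball_mem_nhds _ hD.radius_pos)) self_mem_nhdsWithin, ?_⟩
  exact measure_mono_null (inter_subset_inter_right _ fun X =>
      sdist_eq_zero_of_mem_frontier hΩ.1)
    (hgrow.addHaar_zeroSet volume hD.continuous (by simp [(hn s hs).1]) (by simpa) hD.radius_pos)

/-! ### Weighted kernel on thin sets -/

section ThinSets

lemma le_rpow_of_le_half_add_rpow {F : ℝ → ℝ} {B p η : ℝ} (hB : 0 ≤ B) (hp : 0 < p) (hη : 0 < η)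
    (hF : Tendsto F (𝓝[>] 0) (𝓝 0)) (hhalf : ∀ ρ ∈ Ioc 0 η, F ρ ≤ F (ρ / 2) + B * ρ ^ p) :
    F η ≤ B / (1 - 2 ^ (-p)) * η ^ p := by
  have h2p : (2 : ℝ) ^ (-p) < 1 := Real.rpow_lt_one_of_one_lt_of_neg one_lt_two (neg_lt_zero.2 hp)
  set A := B / (1 - 2 ^ (-p)) with hA
  have : 0 ≤ A := div_nonneg hB (by linarith)
  have hBA : B = A - A * 2 ^ (-p) := by
    rw [hA]
    field_simp [(sub_pos.2 h2p).ne']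
  have hiter : ∀ n : ℕ, F η - A * η ^ p ≤ F (η / 2 ^ n) := by
    suffices h : ∀ n : ℕ, F η - A * η ^ p ≤ F (η / 2 ^ n) - A * (η / 2 ^ n) ^ p from fun n =>
      (h n).trans (sub_le_self _ (by positivity))
    intro n
    induction n with
    | zero => simp
    | succ n ih =>
      have hstep := hhalf (η / 2 ^ n)
        ⟨by positivity, div_le_self hη.le (one_le_pow₀ one_le_two)⟩
      have hpow : (η / 2 ^ n / 2) ^ p = (η / 2 ^ n) ^ p * 2 ^ (-p) := by
        rw [Real.div_rpow (by positivity) two_pos.le, Real.rpow_neg two_pos.le, div_eq_mul_inv]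
      rw [hBA] at hstep
      rw [pow_succ, ← div_div, hpow]
      linarith
  have hdyadic : Tendsto (fun n : ℕ => η / 2 ^ n) atTop (𝓝[>] 0) := by
    refine tendsto_nhdsWithin_iff.2 ⟨?_, Eventually.of_forall fun n => mem_Ioi.2 (by positivity)⟩
    exact tendsto_const_nhds.div_atTop (tendsto_pow_atTop_atTop_of_one_lt one_lt_two)
  have hlim := ge_of_tendsto (hF.comp hdyadic) (Eventually.of_forall hiter)
  linarith

variable {σ : ℝ} {S : Set (Euc N)}

lemma tendsto_setIntegral_weightedKernel_ball_inter (hN : 0 < N) (hσ : σ ∈ Ioo (0 : ℝ) 1)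
    (S : Set (Euc N)) :
    Tendsto (fun ρ => ∫ z in ball 0 ρ ∩ S, weightedKernel σ z) (𝓝[>] 0) (𝓝 0) :=
  squeeze_zero (fun _ => integral_nonneg fun z => weightedKernel_nonneg σ z)
    (fun _ => setIntegral_mono_set (integrable_weightedKernel hN hσ).integrableOn
      (ae_of_all _ fun z => weightedKernel_nonneg σ z) inter_subset_left.eventuallyLE)
    (tendsto_setIntegral_weightedKernel_ball hN hσ)

lemma setIntegral_weightedKernel_annulus_le (hN : 0 < N) (hσ : σ ∈ Ioo (0 : ℝ) 1) {A ρ : ℝ}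
    (hρ : 0 < ρ) (hS : volume.real (ball 0 ρ ∩ S) ≤ A * ρ ^ N) :
    ∫ z in (ball 0 ρ ∩ S) \ ball 0 (ρ / 2), weightedKernel σ z
      ≤ 2 ^ ((N : ℝ) - (1 - σ) / 2) * A * ρ ^ ((1 - σ) / 2) := by
  set q : ℝ := (1 - σ) / 2 - N with hq
  have hfin : volume (ball 0 ρ ∩ S) < ∞ :=
    (measure_mono inter_subset_left).trans_lt measure_ball_lt_top
  have hbound : ∀ z ∈ (ball 0 ρ ∩ S) \ ball 0 (ρ / 2), ‖weightedKernel σ z‖ ≤ (ρ / 2) ^ q := by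
    intro z hz
    have hzρ : ρ / 2 ≤ ‖z‖ := by simpa using hz.2
    have hz0 : z ≠ 0 := norm_pos_iff.1 (by linarith)
    rw [Real.norm_of_nonneg (weightedKernel_nonneg σ z)]
    refine (weightedKernel_le_near σ hz0).trans ?_
    rw [show -((N : ℝ) + σ - (1 + σ) / 2) = q by rw [hq]; ring]
    refine Real.rpow_le_rpow_of_nonpos (by linarith) hzρ ?_
    have : (1 : ℝ) ≤ N := by exact_mod_cast hN
    linarith [hσ.1]
  calc ∫ z in (ball 0 ρ ∩ S) \ ball 0 (ρ / 2), weightedKernel σ z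
      ≤ (ρ / 2) ^ q * volume.real ((ball 0 ρ ∩ S) \ ball 0 (ρ / 2)) :=
        (le_abs_self _).trans (norm_setIntegral_le_of_norm_le_const
          ((measure_mono sdiff_subset).trans_lt hfin) hbound)
    _ ≤ (ρ / 2) ^ q * (A * ρ ^ N) := by
        gcongr
        exact (measureReal_mono sdiff_subset hfin.ne).trans hS
    _ = 2 ^ ((N : ℝ) - (1 - σ) / 2) * A * ρ ^ ((1 - σ) / 2) := by
        rw [show (1 - σ) / 2 = q + N by rw [hq]; ring, Real.rpow_add hρ, Real.rpow_natCast,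
          Real.div_rpow hρ.le two_pos.le, sub_add_cancel_right, Real.rpow_neg two_pos.le]
        ring

lemma exists_setIntegral_weightedKernel_le_of_density (hN : 0 < N) (hσ : σ ∈ Ioo (0 : ℝ) 1) :
    ∃ M ≥ 0, ∀ (S : Set (Euc N)) (A η : ℝ), 0 ≤ A → η ∈ Ioc (0 : ℝ) 1 →
      (∀ ρ ∈ Ioc 0 η, volume.real (ball 0 ρ ∩ S) ≤ A * ρ ^ N) →
        ∫ z in ball 0 η ∩ S, weightedKernel σ z ≤ M * A := by
  set p := (1 - σ) / 2
  have hp : 0 < p := half_pos (sub_pos.2 hσ.2)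
  have h2p : (2 : ℝ) ^ (-p) < 1 := Real.rpow_lt_one_of_one_lt_of_neg one_lt_two (neg_lt_zero.2 hp)
  have hM : 0 ≤ (2 : ℝ) ^ ((N : ℝ) - p) / (1 - 2 ^ (-p)) := div_nonneg (by positivity) (by linarith)
  refine ⟨2 ^ ((N : ℝ) - p) / (1 - 2 ^ (-p)), hM, fun S A η hA hη hS => ?_⟩
  have hhalf : ∀ ρ ∈ Ioc 0 η, ∫ z in ball 0 ρ ∩ S, weightedKernel σ z
      ≤ (∫ z in ball 0 (ρ / 2) ∩ S, weightedKernel σ z) + 2 ^ ((N : ℝ) - p) * A * ρ ^ p := by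
    intro ρ hρ
    have hinner : ball (0 : Euc N) ρ ∩ S ∩ ball 0 (ρ / 2) = ball 0 (ρ / 2) ∩ S := by
      rw [inter_right_comm, inter_eq_right.2 (ball_subset_ball (half_le_self hρ.1.le))]
    rw [← integral_inter_add_sdiff measurableSet_ball
      (integrable_weightedKernel hN hσ).integrableOn, hinner]
    gcongr
    exact setIntegral_weightedKernel_annulus_le hN hσ hρ.1 (hS ρ hρ)
  calc ∫ z in ball 0 η ∩ S, weightedKernel σ z
      ≤ 2 ^ ((N : ℝ) - p) * A / (1 - 2 ^ (-p)) * η ^ p :=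
        le_rpow_of_le_half_add_rpow (by positivity) hp hη.1
          (tendsto_setIntegral_weightedKernel_ball_inter hN hσ S) hhalf
    _ = 2 ^ ((N : ℝ) - p) / (1 - 2 ^ (-p)) * A * η ^ p := by ring
    _ ≤ 2 ^ ((N : ℝ) - p) / (1 - 2 ^ (-p)) * A :=
        mul_le_of_le_one_right (mul_nonneg hM hA) (Real.rpow_le_one hη.1.le hη.2 hp.le)

end ThinSets

section JumpStrips

variable {Ω : Set (Euc N)} {j : Euc N → Euc N → Euc N} {Aj Cj' Cj Dj σ : ℝ} {D : Euc N → ℝ}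
  {s e : Euc N} {r : ℝ}

lemma AssumptionJ0.lipschitzWith_invFun (hJ0 : AssumptionJ0 Ω j Aj) {x : Euc N}
    (hx : x ∈ closure Ω) : LipschitzWith Aj.toNNReal (invFun (j x)) := by
  obtain ⟨-, -, hinv, hAj⟩ := hJ0 x hx
  refine lipschitzWith_of_nnnorm_fderiv_le (𝕜 := ℝ) (hinv.differentiable one_ne_zero) fun z => ?_
  exact_mod_cast (hAj z).trans (Real.le_coe_toNNReal Aj)

lemma AssumptionJ0.volume_preimage_jump_le (hJ0 : AssumptionJ0 Ω j Aj) {x : Euc N}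
    (hx : x ∈ closure Ω) (T : Set (Euc N)) :
    volume {z | x + j x z ∈ T} ≤ (Aj.toNNReal : ℝ≥0∞) ^ N * volume T := by
  have hlip : LipschitzWith Aj.toNNReal fun X => invFun (j x) (X - x) :=
    LipschitzWith.of_dist_le_mul fun X Y => by
      simpa using (hJ0.lipschitzWith_invFun hx).dist_le_mul (X - x) (Y - x)
  have hsub : {z | x + j x z ∈ T} ⊆ (fun X => invFun (j x) (X - x)) '' T := fun z hz =>
    ⟨x + j x z, hz, by simpa using leftInverse_invFun (hJ0 x hx).2.1.1 z⟩
  simpa using (measure_mono hsub).trans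
    (addHaar_image_le_of_lipschitzOnWith volume (hlip.lipschitzOnWith (s := T)))

lemma GrowsAlong.exists_measureReal_jump_strip_le (hgrow : GrowsAlong D e (ball s r))
    (hN : 0 < N) (hJ0 : AssumptionJ0 Ω j Aj) (hJ1 : AssumptionJ1 Ω j Cj' Cj Dj)
    (hD : Continuous D) (he : ‖e‖ ≤ 1) :
    ∃ C ≥ 0, ∀ x ∈ closure Ω, ∀ ρ t : ℝ, 0 < ρ → 0 < t → ball x (Cj * ρ) ⊆ ball s r →
      volume.real (ball 0 ρ ∩ {z | |D (x + j x z)| ≤ t}) ≤ C * t * ρ ^ (N - 1) := by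
  obtain ⟨C, hC, hstrip⟩ := hgrow.exists_measureReal_strip_le volume hD he (by simpa)
  obtain ⟨-, hCj, -, hj, -⟩ := hJ1
  refine ⟨(Aj.toNNReal : ℝ) ^ N * C * Cj ^ (N - 1), by positivity, fun x hx ρ t hρ ht hsub => ?_⟩
  set T := ball x (Cj * ρ) ∩ {X | |D X| ≤ t}
  have hT : volume T ≠ ∞ := measure_ne_top_of_subset inter_subset_left measure_ball_lt_top.ne
  have hpre : ball 0 ρ ∩ {z | |D (x + j x z)| ≤ t} ⊆ {z | x + j x z ∈ T} := fun z hz => by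
    refine ⟨?_, hz.2⟩
    rw [mem_ball, dist_eq_norm, add_sub_cancel_left]
    exact (hj x hx z).2.trans_lt ((mul_lt_mul_iff_right₀ hCj).2 (mem_ball_zero_iff.1 hz.1))
  have hvol := (measure_mono hpre).trans (hJ0.volume_preimage_jump_le hx T)
  calc volume.real (ball 0 ρ ∩ {z | |D (x + j x z)| ≤ t})
      ≤ (Aj.toNNReal : ℝ) ^ N * volume.real T := by
        simpa [measureReal_def] using ENNReal.toReal_mono (ENNReal.mul_ne_top (by simp) hT) hvol
    _ ≤ (Aj.toNNReal : ℝ) ^ N * (C * t * (Cj * ρ) ^ (N - 1)) := by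
        gcongr
        simpa using hstrip x (Cj * ρ) t (by positivity) ht hsub
    _ = (Aj.toNNReal : ℝ) ^ N * C * Cj ^ (N - 1) * t * ρ ^ (N - 1) := by rw [mul_pow]; ring

lemma GrowsAlong.exists_setIntegral_weightedKernel_jump_strip_le
    (hgrow : GrowsAlong D e (ball s r)) (hN : 0 < N) (hJ0 : AssumptionJ0 Ω j Aj)
    (hJ1 : AssumptionJ1 Ω j Cj' Cj Dj) (hσ : σ ∈ Ioo (0 : ℝ) 1) (hD : Continuous D)
    (he : ‖e‖ ≤ 1) :
    ∃ C ≥ 0, ∀ x ∈ closure Ω, ∀ η a : ℝ, η ∈ Ioc (0 : ℝ) 1 → 0 < a →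
      ball x (Cj * η) ⊆ ball s r →
        ∫ z in ball 0 η ∩ {z | |D (x + j x z)| ≤ a * ‖z‖}, weightedKernel σ z ≤ C * a := by
  obtain ⟨C, hC, hstrip⟩ := hgrow.exists_measureReal_jump_strip_le hN hJ0 hJ1 hD he
  obtain ⟨M, hM, hdensity⟩ := exists_setIntegral_weightedKernel_le_of_density hN hσ
  have hCj := hJ1.2.1
  refine ⟨M * C, by positivity, fun x hx η a hη ha hsub => ?_⟩
  rw [mul_assoc]
  refine hdensity _ (C * a) η (by positivity) hη fun ρ hρ => ?_
  have hball : ball x (Cj * ρ) ⊆ ball s r := (ball_subset_ball (by gcongr; exact hρ.2)).trans hsub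
  have hsubset : ball 0 ρ ∩ {z | |D (x + j x z)| ≤ a * ‖z‖}
      ⊆ ball 0 ρ ∩ {z | |D (x + j x z)| ≤ a * ρ} := fun z hz =>
    ⟨hz.1, hz.2.trans (mul_le_mul_of_nonneg_left (mem_ball_zero_iff.1 hz.1).le ha.le)⟩
  calc volume.real (ball 0 ρ ∩ {z | |D (x + j x z)| ≤ a * ‖z‖})
      ≤ volume.real (ball 0 ρ ∩ {z | |D (x + j x z)| ≤ a * ρ}) :=
        measureReal_mono hsubset
          (measure_ne_top_of_subset inter_subset_left measure_ball_lt_top.ne)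
    _ ≤ C * (a * ρ) * ρ ^ (N - 1) :=
        hstrip x hx ρ (a * ρ) hρ.1 (mul_pos ha hρ.1) hball
    _ = C * a * ρ ^ N := by
        rw [← mul_pow_sub_one hN.ne' ρ]
        ring

end JumpStrips

/-! ### Mismatched jumps -/

section Mismatch

lemma IsC11On.exists_abs_jump_increment_le {Ω : Set (Euc N)} {j : Euc N → Euc N → Euc N}
    {D : Euc N → ℝ} {s : Euc N} {r K Cj' Cj Dj : ℝ} (hD : IsC11On D s r K)
    (hJ1 : AssumptionJ1 Ω j Cj' Cj Dj) :
    ∃ C ≥ 0, ∀ x ∈ closure Ω, ∀ y ∈ closure Ω, x ∈ ball s (r / 2) → y ∈ ball s (r / 2) → ∀ z,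
      |D (x + j x z) - D x - (D (y + j y z) - D y)| ≤ C * ‖z‖ * ‖x - y‖ := by
  obtain ⟨-, hCj, hDj, hj, hj'⟩ := hJ1
  have hr := hD.radius_pos
  have hK := hD.const_nonneg
  refine ⟨K * Cj + 2 * Dj + 8 * Cj / r, by positivity, fun x hx y hy hxs hys z => ?_⟩
  have ha := (hj x hx z).2
  have hab := hj' x hx y hy z
  have hexpand : (K * Cj + 2 * Dj + 8 * Cj / r) * ‖z‖ * ‖x - y‖ = K * (Cj * ‖z‖) * ‖x - y‖
      + 2 * (Dj * ‖z‖ * ‖x - y‖) + 8 * Cj / r * ‖z‖ * ‖x - y‖ := by ring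
  have h1 : 0 ≤ K * (Cj * ‖z‖) * ‖x - y‖ := by positivity
  have h2 : 0 ≤ 8 * Cj / r * ‖z‖ * ‖x - y‖ := by positivity
  rw [hexpand]
  rcases lt_or_ge ‖j x z‖ (r / 2) with hsmall | hlarge
  · have hball : ∀ w ∈ ball s (r / 2), w ∈ ball s r ∧ w + j x z ∈ ball s r := fun w hw => by
      have hw' := mem_ball_iff_norm.1 hw
      refine ⟨ball_subset_ball (by linarith) hw, mem_ball_iff_norm.2 ?_⟩
      rw [add_sub_right_comm]
      linarith [norm_add_le (w - s) (j x z)]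
    have := hD.abs_increment_sub_le (b := j y z) (hball x hxs).1 (hball y hys).1 (hball x hxs).2
      (hball y hys).2
    have : K * ‖j x z‖ * ‖x - y‖ ≤ K * (Cj * ‖z‖) * ‖x - y‖ := by gcongr
    linarith
  · have hlip1 := hD.abs_sub_le (x + j x z) (y + j y z)
    have hlip2 := hD.abs_sub_le x y
    have : ‖x + j x z - (y + j y z)‖ ≤ ‖x - y‖ + ‖j x z - j y z‖ := by
      rw [add_sub_add_comm]
      exact norm_add_le _ _
    have : 4 * ‖x - y‖ ≤ 8 * Cj / r * ‖z‖ * ‖x - y‖ := by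
      gcongr
      rw [div_mul_eq_mul_div, le_div_iff₀ hr]
      linarith
    rw [sub_sub_sub_comm]
    linarith [abs_sub (D (x + j x z) - D (y + j y z)) (D x - D y)]

/-- The jumps `z` that are not censored at `x`. -/
def landing (Ω : Set (Euc N)) (j : Euc N → Euc N → Euc N) (x : Euc N) : Set (Euc N) :=
  {z | x + j x z ∈ closure Ω}

/-- The jumps `z` that are censored at exactly one of the points `x` and `y`. -/
def mismatch (Ω : Set (Euc N)) (j : Euc N → Euc N → Euc N) (x y : Euc N) : Set (Euc N) :=
  symmDiff (landing Ω j x) (landing Ω j y)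

variable {Ω : Set (Euc N)} {j : Euc N → Euc N → Euc N} {Aj Cj' Cj Dj σ : ℝ} {x y z s : Euc N}

lemma notMem_mismatch_iff : z ∉ mismatch Ω j x y ↔ (z ∈ landing Ω j x ↔ z ∈ landing Ω j y) := by
  rw [mismatch, mem_symmDiff]
  tauto

lemma measurableSet_landing (hJ0 : AssumptionJ0 Ω j Aj) (hx : x ∈ closure Ω) :
    MeasurableSet (landing Ω j x) :=
  (isClosed_closure.preimage ((hJ0 x hx).1.continuous.const_add x)).measurableSet

lemma measurableSet_mismatch (hJ0 : AssumptionJ0 Ω j Aj) (hx : x ∈ closure Ω)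
    (hy : y ∈ closure Ω) : MeasurableSet (mismatch Ω j x y) :=
  (measurableSet_landing hJ0 hx).symmDiff (measurableSet_landing hJ0 hy)

lemma AssumptionJ0.ae_jump_notMem_frontier (hJ0 : AssumptionJ0 Ω j Aj)
    (hfr : volume (frontier Ω) = 0) (hx : x ∈ closure Ω) :
    ∀ᵐ z, x + j x z ∉ frontier Ω := by
  have hnull : volume {z | x + j x z ∈ frontier Ω} = 0 := by
    simpa [hfr] using hJ0.volume_preimage_jump_le hx (frontier Ω)
  exact measure_eq_zero_iff_ae_notMem.1 hnull

lemma AssumptionJ1.tendsto_jump (hJ1 : AssumptionJ1 Ω j Cj' Cj Dj) (hs : s ∈ closure Ω)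
    (z : Euc N) : Tendsto (fun x => x + j x z) (𝓝[closure Ω] s) (𝓝 (s + j s z)) := by
  have hid : Tendsto (fun x : Euc N => x) (𝓝[closure Ω] s) (𝓝 s) := nhdsWithin_le_nhds
  refine hid.add (tendsto_iff_norm_sub_tendsto_zero.2 ?_)
  have hbound : Tendsto (fun x => Dj * ‖z‖ * ‖x - s‖) (𝓝[closure Ω] s) (𝓝 0) := by
    simpa using (tendsto_iff_norm_sub_tendsto_zero.1 hid).const_mul (Dj * ‖z‖)
  refine squeeze_zero' (Eventually.of_forall fun _ => norm_nonneg _) ?_ hbound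
  filter_upwards [self_mem_nhdsWithin] with x hx using hJ1.2.2.2.2 x hx s hs z

lemma eventually_notMem_mismatch (hJ1 : AssumptionJ1 Ω j Cj' Cj Dj) (hΩ : IsOpen Ω)
    (hs : s ∈ closure Ω) (hz : s + j s z ∉ frontier Ω) :
    ∀ᶠ q : Euc N × Euc N in 𝓝[closure Ω] s ×ˢ 𝓝[closure Ω] s, z ∉ mismatch Ω j q.1 q.2 := by
  have hjump := hJ1.tendsto_jump hs z
  by_cases hin : s + j s z ∈ closure Ω
  · have hint : s + j s z ∈ Ω := by
      by_contra hout
      exact hz (hΩ.frontier_eq ▸ ⟨hin, hout⟩)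
    have hev := hjump.eventually (hΩ.mem_nhds hint)
    filter_upwards [hev.prod_mk hev] with q hq
    exact notMem_mismatch_iff.2 (iff_of_true (subset_closure hq.1) (subset_closure hq.2))
  · have hev := hjump.eventually (isClosed_closure.isOpen_compl.mem_nhds hin)
    filter_upwards [hev.prod_mk hev] with q hq
    exact notMem_mismatch_iff.2 (iff_of_false hq.1 hq.2)

lemma tendsto_setIntegral_levyKernel_mismatch (hN : 0 < N) (hJ0 : AssumptionJ0 Ω j Aj)
    (hJ1 : AssumptionJ1 Ω j Cj' Cj Dj) (hΩ : IsOpen Ω) (hfr : volume (frontier Ω) = 0)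
    (hσ : σ ∈ Ioo (0 : ℝ) 1) (hs : s ∈ closure Ω) {η : ℝ} (hη : 0 < η) :
    Tendsto (fun q : Euc N × Euc N =>
        ∫ z in (ball 0 η)ᶜ ∩ mismatch Ω j q.1 q.2, levyKernel σ z)
      (𝓝[closure Ω] s ×ˢ 𝓝[closure Ω] s) (𝓝 0) := by
  have hmem : ∀ᶠ q : Euc N × Euc N in 𝓝[closure Ω] s ×ˢ 𝓝[closure Ω] s,
      MeasurableSet (mismatch Ω j q.1 q.2) := by
    have hev : ∀ᶠ x in 𝓝[closure Ω] s, x ∈ closure Ω := self_mem_nhdsWithin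
    filter_upwards [hev.prod_mk hev] with q hq using measurableSet_mismatch hJ0 hq.1 hq.2
  have hlim : Tendsto (fun q : Euc N × Euc N =>
      ∫ z in (ball 0 η)ᶜ, (mismatch Ω j q.1 q.2).indicator (levyKernel σ) z)
      (𝓝[closure Ω] s ×ˢ 𝓝[closure Ω] s) (𝓝 (∫ _ in (ball (0 : Euc N) η)ᶜ, (0 : ℝ))) := by
    refine tendsto_integral_filter_of_dominated_convergence (levyKernel σ) ?_ ?_
      (integrableOn_levyKernel_compl_ball hN hσ hη) (ae_restrict_of_ae ?_)
    · filter_upwards [hmem] with q hq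
      exact ((measurable_levyKernel σ).indicator hq).aestronglyMeasurable
    · refine Eventually.of_forall fun q => ae_of_all _ fun z => ?_
      exact (norm_indicator_le_norm_self _ _).trans
        (Real.norm_of_nonneg (levyKernel_nonneg σ z)).le
    · filter_upwards [hJ0.ae_jump_notMem_frontier hfr hs] with z hz
      refine tendsto_const_nhds.congr' ?_
      filter_upwards [eventually_notMem_mismatch hJ1 hΩ hs hz] with q hq
      rw [indicator_of_notMem hq]
  rw [integral_zero] at hlim
  refine hlim.congr' ?_
  filter_upwards [hmem] with q hq using setIntegral_indicator hq

lemma exists_setIntegral_levyKernel_mismatch_le (hN : 0 < N) (hJ0 : AssumptionJ0 Ω j Aj)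
    (hJ1 : AssumptionJ1 Ω j Cj' Cj Dj) (hΩ : IsOpen Ω) (hfr : volume (frontier Ω) = 0)
    (hσ : σ ∈ Ioo (0 : ℝ) 1) (hs : s ∈ closure Ω) {η κ : ℝ} (hη : 0 < η) (hκ : 0 < κ) :
    ∃ r > 0, ∀ x ∈ closure Ω, ∀ y ∈ closure Ω, x ∈ ball s r → y ∈ ball s r →
      ∫ z in (ball 0 η)ᶜ ∩ mismatch Ω j x y, levyKernel σ z ≤ κ := by
  have hlim := tendsto_setIntegral_levyKernel_mismatch hN hJ0 hJ1 hΩ hfr hσ hs hη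
  obtain ⟨r, hr, hsub⟩ := (nhdsWithin_basis_ball.prod_self.eventually_iff).1
    (hlim.eventually_le_const hκ)
  exact ⟨r, hr, fun x hx y hy hxs hys => @hsub (x, y) ⟨⟨hxs, hx⟩, ⟨hys, hy⟩⟩⟩

/-- The kernel carried by the small mismatched jumps near `s` is of order `ε`, as soon as the
two points are `ε`-close and have sufficiently close values of `D`. -/
def HasSmallMismatch (Ω : Set (Euc N)) (j : Euc N → Euc N → Euc N) (σ : ℝ) (D : Euc N → ℝ)
    (s : Euc N) (C η r : ℝ) : Prop :=
  ∀ ε ∈ Ioc (0 : ℝ) 1, ∃ τ > 0, ∀ x ∈ closure Ω, ∀ y ∈ closure Ω, x ∈ ball s r → y ∈ ball s r →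
    ‖x - y‖ ≤ ε → |D x - D y| ≤ τ → ∫ z in ball 0 η ∩ mismatch Ω j x y, weightedKernel σ z ≤ C * ε

lemma HasSmallMismatch.mono {D : Euc N → ℝ} {C η r r' : ℝ} (h : HasSmallMismatch Ω j σ D s C η r)
    (hr : r' ≤ r) : HasSmallMismatch Ω j σ D s C η r' := fun ε hε =>
  (h ε hε).imp fun _ hτ => ⟨hτ.1, fun x hx y hy hxs hys =>
    hτ.2 x hx y hy (ball_subset_ball hr hxs) (ball_subset_ball hr hys)⟩

lemma AssumptionJ1.add_jump_mem_ball (hJ1 : AssumptionJ1 Ω j Cj' Cj Dj) (hx : x ∈ closure Ω)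
    {r η : ℝ} (hxs : x ∈ ball s (r / 2)) (hη : Cj * η ≤ r / 2) (hz : z ∈ ball 0 η) :
    x + j x z ∈ ball s r := by
  obtain ⟨-, hCj, -, hj, -⟩ := hJ1
  have hzη : Cj * ‖z‖ < Cj * η := by gcongr; simpa using hz
  rw [mem_ball_iff_norm] at hxs ⊢
  rw [add_sub_right_comm]
  linarith [norm_add_le (x - s) (j x z), (hj x hx z).2]

lemma exists_hasSmallMismatch_of_mem (hJ1 : AssumptionJ1 Ω j Cj' Cj Dj) (hΩ : IsOpen Ω)
    (σ : ℝ) (hs : s ∈ Ω) (D : Euc N → ℝ) :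
    ∃ C ≥ 0, ∃ η > 0, ∃ r > 0, HasSmallMismatch Ω j σ D s C η r := by
  obtain ⟨r, hr, hball⟩ := isOpen_iff.1 hΩ s hs
  have hCj := hJ1.2.1
  refine ⟨0, le_rfl, r / 2 / Cj, by positivity, r / 2, by positivity,
    fun ε _ => ⟨1, one_pos, fun x hx y hy hxs hys _ _ => ?_⟩⟩
  have hland : ∀ w ∈ closure Ω, w ∈ ball s (r / 2) → ball 0 (r / 2 / Cj) ⊆ landing Ω j w :=
    fun w hw hws z hz => subset_closure
      (hball (hJ1.add_jump_mem_ball hw hws (mul_div_cancel₀ _ hCj.ne').le hz))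
  have hempty : ball 0 (r / 2 / Cj) ∩ mismatch Ω j x y = ∅ :=
    disjoint_left.2 (fun z hz => notMem_mismatch_iff.2
      (iff_of_true (hland x hx hxs hz) (hland y hy hys hz))) |>.inter_eq
  simp [hempty]

lemma abs_sdist_le_of_mem_mismatch (hz : z ∈ mismatch Ω j x y) :
    |sdist Ω (x + j x z)| ≤ |sdist Ω (x + j x z) - sdist Ω (y + j y z)| := by
  have hnonneg : ∀ {X}, X ∈ closure Ω → 0 ≤ sdist Ω X := sdist_nonneg
  have hnonpos : ∀ {X}, X ∉ closure Ω → sdist Ω X ≤ 0 := fun hX =>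
    sdist_nonpos fun h => hX (subset_closure h)
  rcases hz with ⟨hX, hY⟩ | ⟨hY, hX⟩
  · have h1 := hnonneg hX
    have h2 := hnonpos hY
    rw [abs_of_nonneg h1, abs_of_nonneg (by linarith)]
    linarith
  · have h1 := hnonpos hX
    have h2 := hnonneg hY
    rw [abs_of_nonpos h1, abs_of_nonpos (by linarith)]
    linarith

lemma setIntegral_weightedKernel_le_add (hN : 0 < N) (hσ : σ ∈ Ioo (0 : ℝ) 1)
    {S T U : Set (Euc N)} (h : S ⊆ T ∪ U) :
    ∫ z in S, weightedKernel σ z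
      ≤ (∫ z in T, weightedKernel σ z) + ∫ z in U, weightedKernel σ z := by
  have hint := integrable_weightedKernel hN hσ
  have hpos : ∀ μ : Measure (Euc N), 0 ≤ᵐ[μ] weightedKernel σ := fun μ =>
    ae_of_all _ fun z => weightedKernel_nonneg σ z
  rw [← integral_add_measure hint.integrableOn hint.integrableOn]
  exact (setIntegral_mono_set hint.integrableOn (hpos _) h.eventuallyLE).trans
    (integral_mono_measure (Measure.restrict_union_le _ _) (hpos _)
      (Integrable.add_measure hint.integrableOn hint.integrableOn))

/-- The signed distance changes by almost the same amount along the two jumps. -/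
lemma mismatch_subset_strip {C ε ρ : ℝ} (hε : 0 < ε) (hC : 0 ≤ C) (hxy : ‖x - y‖ ≤ ε)
    (hdist : |sdist Ω x - sdist Ω y| ≤ ε * ρ)
    (hincr : ∀ z, |sdist Ω (x + j x z) - sdist Ω x - (sdist Ω (y + j y z) - sdist Ω y)|
      ≤ C * ‖z‖ * ‖x - y‖) :
    mismatch Ω j x y ⊆ ball 0 ρ ∪ {z | |sdist Ω (x + j x z)| ≤ (C + 1) * ε * ‖z‖} := by
  intro z hz
  refine or_iff_not_imp_left.2 fun hzρ => ?_
  have hρ : ρ ≤ ‖z‖ := by simpa using hzρ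
  calc |sdist Ω (x + j x z)|
      ≤ |sdist Ω (x + j x z) - sdist Ω (y + j y z)| := abs_sdist_le_of_mem_mismatch hz
    _ = |(sdist Ω (x + j x z) - sdist Ω x - (sdist Ω (y + j y z) - sdist Ω y))
          + (sdist Ω x - sdist Ω y)| := by ring_nf
    _ ≤ C * ‖z‖ * ‖x - y‖ + ε * ρ := (abs_add_le _ _).trans (add_le_add (hincr z) hdist)
    _ ≤ C * ‖z‖ * ε + ε * ‖z‖ := by gcongr
    _ = (C + 1) * ε * ‖z‖ := by ring

lemma exists_hasSmallMismatch_of_mem_frontier {hN : 0 < N} (hΩ : IsW2Domain hN Ω)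
    {n : Euc N → Euc N} (hn : IsExteriorNormal Ω n) (hJ0 : AssumptionJ0 Ω j Aj)
    (hJ1 : AssumptionJ1 Ω j Cj' Cj Dj) (hσ : σ ∈ Ioo (0 : ℝ) 1) (hs : s ∈ frontier Ω) :
    ∃ C ≥ 0, ∃ η > 0, ∃ r > 0, HasSmallMismatch Ω j σ (sdist Ω) s C η r := by
  obtain ⟨r, K, hD, hgrow⟩ := hΩ.exists_growsAlong_sdist hn hs
  obtain ⟨C₁, hC₁, hincr⟩ := hD.exists_abs_jump_increment_le hJ1
  obtain ⟨C₂, hC₂, hstrip⟩ := hgrow.exists_setIntegral_weightedKernel_jump_strip_le hN hJ0 hJ1 hσ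
    hD.continuous (by rw [norm_neg, (hn s hs).1])
  have hr := hD.radius_pos
  have hCj := hJ1.2.1
  set η := min 1 (r / 2 / Cj)
  have hη : 0 < η := by positivity
  have hηr : Cj * η ≤ r / 2 := by
    rw [← mul_div_cancel₀ (r / 2) hCj.ne']
    gcongr
    exact min_le_right _ _
  refine ⟨1 + C₂ * (C₁ + 1), by positivity, η, hη, r / 2, by positivity, fun ε hε => ?_⟩
  obtain ⟨ρ, hball, hρ⟩ := (((tendsto_setIntegral_weightedKernel_ball hN hσ).eventually_le_const
    hε.1).and self_mem_nhdsWithin).exists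
  refine ⟨ε * ρ, mul_pos hε.1 hρ, fun x hx y hy hxs hys hxy hdist => ?_⟩
  have hsub := mismatch_subset_strip hε.1 hC₁ hxy hdist (hincr x hx y hy hxs hys)
  have hxball : ball x (Cj * η) ⊆ ball s r :=
    ball_subset_ball' (by linarith [mem_ball.1 hxs])
  calc ∫ z in ball 0 η ∩ mismatch Ω j x y, weightedKernel σ z
      ≤ (∫ z in ball 0 ρ, weightedKernel σ z)
        + ∫ z in ball 0 η ∩ {z | |sdist Ω (x + j x z)| ≤ (C₁ + 1) * ε * ‖z‖},
            weightedKernel σ z :=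
        setIntegral_weightedKernel_le_add hN hσ fun z hz =>
          (hsub hz.2).imp id fun h => ⟨hz.1, h⟩
    _ ≤ ε + C₂ * ((C₁ + 1) * ε) :=
        add_le_add hball (hstrip x hx η _ ⟨hη, min_le_left _ _⟩
          (mul_pos (by positivity) hε.1) hxball)
    _ = (1 + C₂ * (C₁ + 1)) * ε := by ring

end Mismatch

/-! ### Locally smooth test functions -/

section Viscosity

lemma exists_contDiff_eqOn_closedBall {E : Type*} [NormedAddCommGroup E] [NormedSpace ℝ E]
    [HasContDiffBump E] {φ : E → ℝ} {x : E} {ρ : ℝ} {m : ℕ∞} (hρ : 0 < ρ)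
    (hφ : ContDiffOn ℝ m φ (ball x ρ)) :
    ∃ Φ : E → ℝ, ContDiff ℝ m Φ ∧ EqOn Φ φ (closedBall x (ρ / 2)) := by
  let c : ContDiffBump x := ⟨ρ / 2, 3 * ρ / 4, by positivity, by linarith⟩
  refine ⟨fun y => c y * φ y, contDiff_iff_contDiffAt.2 fun y => ?_, fun y hy => ?_⟩
  · by_cases hy : y ∈ ball x ρ
    · exact c.contDiff.contDiffAt.mul (hφ.contDiffAt (isOpen_ball.mem_nhds hy))
    · have hout : y ∉ tsupport c := by
        rw [c.tsupport_eq, mem_closedBall, not_le]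
        change 3 * ρ / 4 < dist y x
        linarith [not_lt.1 (mem_ball.not.1 hy)]
      have hzero : (fun y => c y * φ y) =ᶠ[𝓝 y] fun _ => 0 := by
        filter_upwards [notMem_tsupport_iff_eventuallyEq.1 hout] with w hw
        simp [hw]
      exact contDiffAt_const.congr_of_eventuallyEq hzero
  · simp [c.one_of_mem_closedBall hy]

variable {Ω : Set (Euc N)} {j : Euc N → Euc N → Euc N} {g : Euc N → Euc N → ℝ}
  {n : Euc N → Euc N} {H : Euc N → Euc N → ℝ} {u v φ : Euc N → ℝ} {x p : Euc N}
  {Cμ σ Aj Cj' Cj Dj : ℝ}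

lemma Iin_eq_setIntegral (ξ : ℝ) :
    Iin Ω j g ξ φ x = ∫ z in ball 0 ξ ∩ landing Ω j x, (φ (x + j x z) - φ x) * g x z := by
  have hset : {z : Euc N | ‖z‖ < ξ ∧ x + j x z ∈ closure Ω} = ball 0 ξ ∩ landing Ω j x := by
    ext z
    simp [landing]
  rw [Iin, hset]

lemma Iout_eq_setIntegral (ξ : ℝ) :
    Iout Ω j g ξ u x = ∫ z in (ball 0 ξ)ᶜ ∩ landing Ω j x, (u (x + j x z) - u x) * g x z := by
  have hset : {z : Euc N | ξ ≤ ‖z‖ ∧ x + j x z ∈ closure Ω} = (ball 0 ξ)ᶜ ∩ landing Ω j x := by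
    ext z
    simp [landing]
  rw [Iout, hset]

lemma Iin_neg (ξ : ℝ) : Iin Ω j g ξ (fun y => -φ y) x = -Iin Ω j g ξ φ x := by
  simp only [Iin, ← integral_neg]
  congr with z
  ring

lemma Iout_neg (ξ : ℝ) : Iout Ω j g ξ (fun y => -u y) x = -Iout Ω j g ξ u x := by
  simp only [Iout, ← integral_neg]
  congr with z
  ring

lemma IsSuperSol.neg (hv : IsSuperSol Ω j g n Cj (statF H) v) :
    IsSubSol Ω j g n Cj (statF fun x p => -H x (-p)) (fun x => -v x) := by
  intro ξ hξ φ hφ x hx hmax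
  have hgrad : gradient (fun y => -φ y) x = -gradient φ x := by
    simp only [gradient, fderiv_fun_neg, map_neg]
  obtain ⟨hint, hbdry⟩ := hv ξ hξ (fun y => -φ y) hφ.neg x hx
    fun y hy => by linarith [hmax y hy]
  rw [hgrad, Iin_neg] at hint hbdry
  rw [inner_neg_left] at hbdry
  simp only [statF, Iout_neg] at hint hbdry ⊢
  refine ⟨fun hxΩ => by linarith [hint hxΩ], fun hxf => min_le_iff.2 ?_⟩
  exact (le_max_iff.1 (hbdry hxf)).imp (fun h => by linarith) fun h => by linarith

lemma AssumptionM1.mul_le_weightedKernel (hM : AssumptionM1 Ω g Cμ σ) (hx : x ∈ closure Ω)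
    {z : Euc N} (hz : ‖z‖ ≤ 1) : ‖z‖ * g x z ≤ Cμ * weightedKernel σ z := by
  obtain ⟨-, hσ, -, hg0, hg⟩ := hM
  calc ‖z‖ * g x z ≤ jumpWeight σ ‖z‖ * (Cμ * levyKernel σ z) := by
        gcongr
        · exact hg0 x hx z
        · exact jumpWeight_nonneg σ (norm_nonneg z)
        · exact le_jumpWeight hσ (norm_nonneg z) hz
        · exact hg x hx z
    _ = Cμ * weightedKernel σ z := by rw [weightedKernel]; ring

lemma AssumptionM1.exists_abs_jump_increment_mul_le (hM : AssumptionM1 Ω g Cμ σ)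
    (hJ1 : AssumptionJ1 Ω j Cj' Cj Dj) (hφ : DifferentiableAt ℝ φ x) (hx : x ∈ closure Ω) :
    ∃ C ≥ 0, ∃ r > 0, ∀ z ∈ ball 0 r,
      |(φ (x + j x z) - φ x) * g x z| ≤ C * weightedKernel σ z := by
  obtain ⟨K, hK, hO⟩ := hφ.hasFDerivAt.isBigO_sub.exists_pos
  obtain ⟨r, hr, hO⟩ := Metric.eventually_nhds_iff.1 hO.bound
  have hCj := hJ1.2.1
  have hCμ := hM.1
  refine ⟨K * Cj * Cμ, by positivity, min 1 (r / Cj), by positivity, fun z hz => ?_⟩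
  rw [mem_ball_zero_iff, lt_min_iff, lt_div_iff₀' hCj] at hz
  have hjz := (hJ1.2.2.2.1 x hx z).2
  have hdist : dist (x + j x z) x < r := by
    rw [dist_eq_norm, add_sub_cancel_left]
    exact hjz.trans_lt hz.2
  have hφz := hO hdist
  rw [add_sub_cancel_left] at hφz
  have hg0 := hM.2.2.2.1 x hx z
  rw [abs_mul, abs_of_nonneg hg0]
  calc |φ (x + j x z) - φ x| * g x z ≤ K * (Cj * ‖z‖) * g x z := by
        gcongr
        exact hφz.trans (by gcongr)
    _ = K * Cj * (‖z‖ * g x z) := by ring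
    _ ≤ K * Cj * (Cμ * weightedKernel σ z) := by
        gcongr ?_ * ?_
        exact hM.mul_le_weightedKernel hx hz.1.le
    _ = K * Cj * Cμ * weightedKernel σ z := by ring

lemma tendsto_Iin (hN : 0 < N) (hM : AssumptionM1 Ω g Cμ σ) (hJ0 : AssumptionJ0 Ω j Aj)
    (hJ1 : AssumptionJ1 Ω j Cj' Cj Dj) (hφ : DifferentiableAt ℝ φ x) (hx : x ∈ closure Ω) :
    Tendsto (fun ξ => Iin Ω j g ξ φ x) (𝓝[>] 0) (𝓝 0) := by
  obtain ⟨C, hC, r, hr, hbound⟩ := hM.exists_abs_jump_increment_mul_le hJ1 hφ hx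
  have hint := (integrable_weightedKernel hN hM.2.1).const_mul C
  have hlim := (tendsto_setIntegral_weightedKernel_ball hN hM.2.1).const_mul C
  rw [mul_zero] at hlim
  refine squeeze_zero_norm' ?_ hlim
  filter_upwards [Ioo_mem_nhdsGT hr] with ξ hξ
  rw [Iin_eq_setIntegral, ← integral_const_mul]
  refine (norm_integral_le_of_norm_le hint.integrableOn (ae_restrict_of_forall_mem
    (measurableSet_ball.inter (measurableSet_landing hJ0 hx))
    fun z hz => hbound z (ball_subset_ball hξ.2.le hz.1))).trans ?_
  exact setIntegral_mono_set hint.integrableOn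
    (ae_of_all _ fun z => mul_nonneg hC (weightedKernel_nonneg σ z)) inter_subset_left.eventuallyLE

lemma IsSubSol.add_hamiltonian_le (hu : IsSubSol Ω j g n Cj (statF H) u) (hN : 0 < N)
    (hM : AssumptionM1 Ω g Cμ σ) (hJ0 : AssumptionJ0 Ω j Aj) (hJ1 : AssumptionJ1 Ω j Cj' Cj Dj)
    (hΩ : IsOpen Ω) (hx : x ∈ closure Ω) {ρ : ℝ} (hρ : 0 < ρ)
    (hφ : ContDiffOn ℝ 1 φ (ball x ρ)) (hp : HasGradientAt φ p x)
    (hmax : ∀ y ∈ ball x ρ, y ∈ closure Ω → u y - φ y ≤ u x - φ x)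
    (hneumann : x ∈ frontier Ω → 0 < ⟪p, n x⟫) {κ : ℝ} (hκ : 0 < κ) :
    ∀ᶠ ξ in 𝓝[>] 0, u x + H x p ≤ κ + Iout Ω j g ξ u x := by
  obtain ⟨Φ, hΦ, hEq⟩ := exists_contDiff_eqOn_closedBall hρ hφ
  have hgrad : gradient Φ x = p := (hp.congr_of_eventuallyEq
    (hEq.eventuallyEq_of_mem (closedBall_mem_nhds x (half_pos hρ)))).gradient
  have hCj := hJ1.2.1
  have hlim := tendsto_Iin hN hM hJ0 hJ1 (hΦ.differentiable one_ne_zero x) hx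
  filter_upwards [hlim.eventually_le_const hκ,
    Ioo_mem_nhdsGT (show 0 < ρ / 2 / Cj by positivity)] with ξ hIin hξ
  have hsub : closedBall x (Cj * ξ) ⊆ closedBall x (ρ / 2) :=
    closedBall_subset_closedBall ((le_div_iff₀' hCj).1 hξ.2.le)
  obtain ⟨hint, hbdry⟩ := hu ξ hξ.1 Φ hΦ x hx fun y hy => by
    rw [hEq (hsub hy.1), hEq (mem_closedBall_self (by positivity))]
    exact hmax y (closedBall_subset_ball (by linarith) (hsub hy.1)) hy.2
  rw [hgrad, statF] at hint hbdry
  by_cases hxΩ : x ∈ Ω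
  · linarith [hint hxΩ]
  · have hxf : x ∈ frontier Ω := hΩ.frontier_eq ▸ ⟨hx, hxΩ⟩
    rcases min_le_iff.1 (hbdry hxf) with h | h
    · linarith
    · exact absurd (hneumann hxf) h.not_gt

end Viscosity

/-! ### Strict maxima and doubling of variables -/

lemma abs_sqrt_sq_add_sq_sub_le (s t τ : ℝ) : |√(s ^ 2 + τ ^ 2) - √(t ^ 2 + τ ^ 2)| ≤ |s - t| := by
  rw [← Complex.norm_add_mul_I, ← Complex.norm_add_mul_I]
  refine (abs_norm_sub_norm_le _ _).trans_eq ?_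
  rw [add_sub_add_right_eq_sub, ← Complex.ofReal_sub, Complex.norm_real, Real.norm_eq_abs]

lemma exists_isMaxOn_of_le_off_compact {X : Type*} [TopologicalSpace X] {S K : Set X} {f : X → ℝ}
    {x₀ : X} (hS : IsClosed S) (hf : UpperSemicontinuousOn f S) (hK : IsCompact K) (hx₀ : x₀ ∈ S)
    (hoff : ∀ x ∈ S \ K, f x ≤ f x₀) : ∃ x ∈ S, IsMaxOn f S x := by
  obtain ⟨x, hx, hmax⟩ := (hf.mono inter_subset_right).exists_isMaxOn
    (⟨x₀, mem_insert x₀ K, hx₀⟩ : (insert x₀ K ∩ S).Nonempty) ((hK.insert x₀).inter_right hS)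
  refine ⟨x, hx.2, fun y hy => ?_⟩
  by_cases hyK : y ∈ K
  · exact hmax ⟨mem_insert_of_mem _ hyK, hy⟩
  · exact (hoff y ⟨hy, hyK⟩).trans (hmax ⟨mem_insert x₀ K, hx₀⟩)

section StrictMaximum

variable {E : Type*} [NormedAddCommGroup E]

/-- A smooth substitute for the norm: it is `1`-Lipschitz, vanishes only at the origin and differs
from `‖x‖` by at most `1`. -/
def smoothNorm (x : E) : ℝ := √(‖x‖ ^ 2 + 1 ^ 2) - 1

lemma smoothNorm_zero : smoothNorm (0 : E) = 0 := by simp [smoothNorm]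

lemma smoothNorm_pos {x : E} (hx : x ≠ 0) : 0 < smoothNorm x := by
  have := norm_pos_iff.2 hx
  exact sub_pos.2 (Real.lt_sqrt_of_sq_lt (by nlinarith))

lemma smoothNorm_nonneg (x : E) : 0 ≤ smoothNorm x := by
  rcases eq_or_ne x 0 with rfl | hx
  exacts [smoothNorm_zero.ge, (smoothNorm_pos hx).le]

lemma norm_sub_one_le_smoothNorm (x : E) : ‖x‖ - 1 ≤ smoothNorm x :=
  sub_le_sub_right (Real.le_sqrt_of_sq_le (by nlinarith)) 1

lemma abs_smoothNorm_sub_le (x y : E) : |smoothNorm x - smoothNorm y| ≤ ‖x - y‖ := by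
  rw [smoothNorm, smoothNorm, sub_sub_sub_cancel_right]
  exact (abs_sqrt_sq_add_sq_sub_le _ _ _).trans (abs_norm_sub_norm_le x y)

lemma contDiff_smoothNorm [InnerProductSpace ℝ E] {m : ℕ∞} :
    ContDiff ℝ m (smoothNorm : E → ℝ) :=
  (((contDiff_norm_sq ℝ).add contDiff_const).sqrt fun x => by positivity).sub contDiff_const

lemma tendsto_smoothNorm_cocompact [ProperSpace E] :
    Tendsto (smoothNorm : E → ℝ) (cocompact E) atTop :=
  tendsto_atTop_mono norm_sub_one_le_smoothNorm
    (tendsto_atTop_add_const_right _ _ tendsto_norm_cocompact_atTop)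

lemma exists_isMaxOn_sub_mul_smoothNorm [InnerProductSpace ℝ E] [ProperSpace E] {S : Set E}
    {w : E → ℝ} {B t : ℝ} (hS : IsClosed S) (hne : S.Nonempty) (hw : UpperSemicontinuousOn w S)
    (hB : ∀ x ∈ S, w x ≤ B) (ht : 0 < t) :
    ∃ x ∈ S, ∀ y ∈ S, w y - t * smoothNorm y ≤ w x - t * smoothNorm x := by
  obtain ⟨x₁, hx₁⟩ := hne
  have hcont : Continuous fun x : E => -(t * smoothNorm x) :=
    (continuous_const.mul (contDiff_smoothNorm (m := 1)).continuous).neg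
  obtain ⟨K, hK, hKS⟩ := mem_cocompact.1 (((tendsto_smoothNorm_cocompact (E := E)).const_mul_atTop
    ht).eventually_ge_atTop (B - (w x₁ + -(t * smoothNorm x₁))))
  refine exists_isMaxOn_of_le_off_compact (f := fun x => w x + -(t * smoothNorm x)) hS
    (hw.add hcont.continuousOn.upperSemicontinuousOn) hK hx₁ fun x hx => ?_
  have : B - (w x₁ + -(t * smoothNorm x₁)) ≤ t * smoothNorm x := hKS hx.2
  linarith [hB x hx.1]

lemma exists_contDiff_perturbation_strictMax [InnerProductSpace ℝ E] [ProperSpace E] {S : Set E}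
    {w : E → ℝ} {B lam κ : ℝ} {x₁ : E} (hS : IsClosed S) (hw : UpperSemicontinuousOn w S)
    (hB : ∀ x ∈ S, w x ≤ B) (hx₁ : x₁ ∈ S) (hlam : 0 < lam) (hκ : 0 < κ) :
    ∃ s ∈ S, ∃ L : E → ℝ, ContDiff ℝ 1 L ∧ (∀ x y, |L x - L y| ≤ lam * ‖x - y‖) ∧
      (∀ x, 0 ≤ L x) ∧ Tendsto L (cocompact E) atTop ∧
      (∀ x ∈ S, x ≠ s → w x - L x < w s - L s) ∧ w x₁ - κ ≤ w s - L s := by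
  have hn₁ := smoothNorm_nonneg x₁
  set t : ℝ := min (lam / 2) (κ / (smoothNorm x₁ + 1))
  have ht : 0 < t := by positivity
  obtain ⟨s, hs, hmax⟩ := exists_isMaxOn_sub_mul_smoothNorm hS ⟨x₁, hx₁⟩ hw hB ht
  refine ⟨s, hs, fun x => t * smoothNorm x + t * smoothNorm (x - s),
    (contDiff_const.mul contDiff_smoothNorm).add
      (contDiff_const.mul (contDiff_smoothNorm.comp (contDiff_id.sub contDiff_const))),
    fun x y => ?_, fun x => ?_, ?_, fun x hx hne => ?_, ?_⟩
  · have h₁ := abs_smoothNorm_sub_le x y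
    have h₂ := abs_smoothNorm_sub_le (x - s) (y - s)
    rw [sub_sub_sub_cancel_right] at h₂
    calc _ = t * |smoothNorm x - smoothNorm y + (smoothNorm (x - s) - smoothNorm (y - s))| := by
          rw [← abs_of_pos ht, ← abs_mul, abs_of_pos ht]; ring_nf
      _ ≤ lam / 2 * (‖x - y‖ + ‖x - y‖) := mul_le_mul (min_le_left _ _)
          ((abs_add_le _ _).trans (add_le_add h₁ h₂)) (abs_nonneg _) (by positivity)
      _ = lam * ‖x - y‖ := by ring
  · exact add_nonneg (mul_nonneg ht.le (smoothNorm_nonneg _))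
      (mul_nonneg ht.le (smoothNorm_nonneg _))
  · exact tendsto_atTop_mono
      (fun x => le_add_of_nonneg_right (mul_nonneg ht.le (smoothNorm_nonneg _)))
      (tendsto_smoothNorm_cocompact.const_mul_atTop ht)
  · have hpos := mul_pos ht (smoothNorm_pos (sub_ne_zero.2 hne))
    simp only [sub_self, smoothNorm_zero]
    linarith [hmax x hx]
  · have hsmall : t * (smoothNorm x₁ + 1) ≤ κ := by
      rw [← le_div_iff₀ (by positivity)]; exact min_le_right _ _
    simp only [sub_self, smoothNorm_zero]
    linarith [hmax x₁ hx₁]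

end StrictMaximum

section Doubling

variable {E : Type*} [NormedAddCommGroup E] {S K : Set E} {U : E × E → ℝ} {s : E} {η : ℝ}

lemma tendsto_prodMk_add (x₀ : E) :
    Tendsto (fun q : (E × ℝ) × E => (q.2, q.2 + q.1.1)) (𝓝 ((0, 0), x₀)) (𝓝 (x₀, x₀)) :=
  (by fun_prop : Continuous fun q : (E × ℝ) × E => (q.2, q.2 + q.1.1)).tendsto' _ _ (by simp)

lemma eventually_apply_add_lt {x₀ : E} (hU : UpperSemicontinuousOn U (S ×ˢ S)) (hx₀ : x₀ ∈ S)
    {c : ℝ} (hc : U (x₀, x₀) < c) :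
    ∀ᶠ q : (E × ℝ) × E in 𝓝 ((0, 0), x₀), q.2 ∈ S → q.2 + q.1.1 ∈ S →
      U (q.2, q.2 + q.1.1) < c := by
  filter_upwards [(tendsto_prodMk_add x₀).eventually
    (eventually_nhdsWithin_iff.1 (hU _ ⟨hx₀, hx₀⟩ c hc))] with q hq hx hy using hq ⟨hx, hy⟩

lemma eventually_near_of_le_apply_add {x₀ : E} (hU : UpperSemicontinuousOn U (S ×ˢ S))
    (hstrict : ∀ x ∈ S, x ≠ s → U (x, x) < U (s, s)) (hη : 0 < η) (hx₀ : x₀ ∈ S) :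
    ∀ᶠ q : (E × ℝ) × E in 𝓝 ((0, 0), x₀), q.2 ∈ S → q.2 + q.1.1 ∈ S →
      U (s, s) - q.1.2 ≤ U (q.2, q.2 + q.1.1) →
      ‖q.2 - s‖ < η ∧ ‖q.2 + q.1.1 - s‖ < η ∧ U (q.2, q.2 + q.1.1) < U (s, s) + η := by
  rcases eq_or_ne x₀ s with rfl | hne
  · have hball : ball x₀ η ×ˢ ball x₀ η ∈ 𝓝 (x₀, x₀) :=
      prod_mem_nhds (ball_mem_nhds _ hη) (ball_mem_nhds _ hη)
    filter_upwards [eventually_apply_add_lt hU hx₀ (lt_add_of_pos_right _ hη),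
      tendsto_prodMk_add x₀ hball] with q hq hnear hx hy _
    exact ⟨mem_ball_iff_norm.1 hnear.1, mem_ball_iff_norm.1 hnear.2, hq hx hy⟩
  · obtain ⟨c, hc, hch⟩ := exists_between (hstrict x₀ hx₀ hne)
    have hsmall : ∀ᶠ q : (E × ℝ) × E in 𝓝 ((0, 0), x₀), q.1.2 < U (s, s) - c :=
      (by fun_prop : Continuous fun q : (E × ℝ) × E => q.1.2).tendsto _ |>.eventually_lt_const
        (by simpa using hch)
    filter_upwards [eventually_apply_add_lt hU hx₀ hc, hsmall] with q hq he hx hy hle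
    linarith [hq hx hy]

lemma eventually_near_of_near_strictMax (hK : IsCompact K) (hS : IsClosed S)
    (hU : UpperSemicontinuousOn U (S ×ˢ S))
    (hstrict : ∀ x ∈ S, x ≠ s → U (x, x) < U (s, s))
    (hoff : ∀ x ∈ S \ K, ∀ y ∈ S, U (x, y) + 1 ≤ U (s, s)) (hη : 0 < η) :
    ∀ᶠ e in 𝓝[>] (0 : ℝ), ∀ x ∈ S, ∀ y ∈ S, ‖x - y‖ ≤ e → U (s, s) - e ≤ U (x, y) →
      ‖x - s‖ < η ∧ ‖y - s‖ < η ∧ U (x, y) < U (s, s) + η := by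
  have hlocal : ∀ᶠ q : E × ℝ in 𝓝 (0, 0), ∀ x ∈ K ∩ S, x ∈ S → x + q.1 ∈ S →
      U (s, s) - q.2 ≤ U (x, x + q.1) →
      ‖x - s‖ < η ∧ ‖x + q.1 - s‖ < η ∧ U (x, x + q.1) < U (s, s) + η :=
    (hK.inter_right hS).eventually_forall_of_forall_eventually fun x₀ hx₀ =>
      eventually_near_of_le_apply_add hU hstrict hη hx₀.2
  obtain ⟨δ, hδ, hball⟩ := Metric.eventually_nhds_iff.1 hlocal
  filter_upwards [self_mem_nhdsWithin, Ioo_mem_nhdsGT (lt_min hδ one_pos)]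
    with e (he : 0 < e) heδ x hx y hy hxy hle
  have hxK : x ∈ K := by
    by_contra hxK
    linarith [hoff x ⟨hx, hxK⟩ y hy, heδ.2.trans_le (min_le_right δ 1)]
  have hdist : dist (y - x, e) ((0 : E), (0 : ℝ)) < δ := by
    have := heδ.2.trans_le (min_le_left δ 1)
    rw [Prod.dist_eq, dist_zero_right, dist_zero_right, norm_sub_rev, Real.norm_of_nonneg he.le]
    exact max_lt (hxy.trans_lt this) this
  simpa only [add_sub_cancel] using
    hball hdist x ⟨hxK, hx⟩ hx (by rwa [add_sub_cancel]) (by rwa [add_sub_cancel])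

lemma eventually_near_of_sub_penalty_le {M : ℝ} (hK : IsCompact K) (hS : IsClosed S)
    (hU : UpperSemicontinuousOn U (S ×ˢ S)) (hM : ∀ q ∈ S ×ˢ S, U q ≤ M)
    (hstrict : ∀ x ∈ S, x ≠ s → U (x, x) < U (s, s))
    (hoff : ∀ x ∈ S \ K, ∀ y ∈ S, U (x, y) + 1 ≤ U (s, s)) (hη : 0 < η) (C : ℝ) :
    ∀ᶠ ε in 𝓝[>] (0 : ℝ), ∀ x ∈ S, ∀ y ∈ S, ∀ a b, ‖x - y‖ ^ 2 / ε ^ 2 - C * ε ≤ a → b ≤ C * ε →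
      U (s, s) - b ≤ U (x, y) - a →
      ‖x - s‖ < η ∧ ‖y - s‖ < η ∧ ‖x - y‖ ≤ η * ε ∧ U (s, s) - η ≤ U (x, y) := by
  have hη' : 0 < min η (η ^ 2 / 2) := by positivity
  obtain ⟨e, hnear, he⟩ := ((eventually_near_of_near_strictMax hK hS hU hstrict hoff hη').and
    self_mem_nhdsWithin).exists
  have hsmall₁ : ∀ᶠ ε in 𝓝 (0 : ℝ), 2 * C * ε < min e (min η (η ^ 2 / 2)) :=
    ((by fun_prop : Continuous fun ε : ℝ => 2 * C * ε).tendsto' 0 0 (by simp)).eventually_lt_const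
      (lt_min he hη')
  have hsmall₂ : ∀ᶠ ε in 𝓝 (0 : ℝ), ε ^ 2 * (M - U (s, s) + 2 * C * ε) < e ^ 2 :=
    ((by fun_prop : Continuous fun ε : ℝ => ε ^ 2 * (M - U (s, s) + 2 * C * ε)).tendsto' 0 0
      (by simp)).eventually_lt_const (pow_pos he 2)
  filter_upwards [self_mem_nhdsWithin, nhdsWithin_le_nhds hsmall₁, nhdsWithin_le_nhds hsmall₂]
    with ε (hε : 0 < ε) hε₁ hε₂ x hx y hy a b ha hb hle
  simp only [lt_min_iff] at hε₁
  have hgap : ‖x - y‖ ^ 2 ≤ ε ^ 2 * (U (x, y) - U (s, s) + 2 * C * ε) := by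
    rw [← div_le_iff₀' (by positivity)]
    linarith
  have hlevel : U (s, s) - 2 * C * ε ≤ U (x, y) := by
    have : 0 ≤ ‖x - y‖ ^ 2 / ε ^ 2 := by positivity
    linarith
  have hclose : ‖x - y‖ ≤ e := by
    refine (abs_le_of_sq_le_sq' (hgap.trans (le_trans ?_ hε₂.le)) (le_of_lt he)).2
    gcongr
    exact hM _ ⟨hx, hy⟩
  obtain ⟨hxs, hys, hUxy⟩ := hnear x hx y hy hclose (by linarith)
  rw [lt_min_iff] at hxs hys
  refine ⟨hxs.1, hys.1, (abs_le_of_sq_le_sq' (hgap.trans ?_) (by positivity)).2, by linarith⟩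
  rw [mul_comm η, mul_pow]
  gcongr
  linarith [hUxy.trans_le (add_le_add_right (min_le_right _ _) _)]

lemma eventually_exists_isMaxOn_doubling [ProperSpace E] {M : ℝ} (hK : IsCompact K)
    (hS : IsClosed S) (hU : UpperSemicontinuousOn U (S ×ˢ S)) (hM : ∀ q ∈ S ×ˢ S, U q ≤ M)
    (hs : s ∈ S) (hstrict : ∀ x ∈ S, x ≠ s → U (x, x) < U (s, s))
    (hoff : ∀ x ∈ S \ K, ∀ y ∈ S, U (x, y) + 1 ≤ U (s, s)) (hη : 0 < η) (C : ℝ) :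
    ∀ᶠ ε in 𝓝[>] (0 : ℝ), ∀ Φ : E × E → ℝ, Continuous Φ →
      (∀ x y, ‖x - y‖ ^ 2 / ε ^ 2 - C * ε ≤ Φ (x, y)) → Φ (s, s) ≤ C * ε →
      ∃ x ∈ S, ∃ y ∈ S, IsMaxOn (fun q => U q - Φ q) (S ×ˢ S) (x, y) ∧ ‖x - s‖ < η ∧
        ‖y - s‖ < η ∧ ‖x - y‖ ≤ η * ε ∧ U (s, s) - η ≤ U (x, y) := by
  filter_upwards [eventually_near_of_sub_penalty_le hK hS hU hM hstrict hoff hη C]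
    with ε hnear Φ hΦ hlow hdiag
  obtain ⟨⟨x, y⟩, ⟨hx, hy⟩, hmax⟩ := exists_isMaxOn_of_le_off_compact (x₀ := (s, s))
    (f := fun q => U q + -Φ q) (hS.prod hS)
    (hU.add hΦ.neg.continuousOn.upperSemicontinuousOn) (isCompact_closedBall (s, s) η)
    ⟨hs, hs⟩ fun q hq => by
      by_contra! hlt
      obtain ⟨hx, hy, -⟩ := hnear q.1 hq.1.1 q.2 hq.1.2 _ _ (hlow _ _) hdiag hlt.le
      rw [← mem_ball_iff_norm] at hx hy
      exact hq.2 (mem_closedBall.2 (max_le hx.le hy.le))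
  exact ⟨x, hx, y, hy, hmax,
    hnear x hx y hy _ _ (hlow x y) hdiag (isMaxOn_iff.1 hmax (s, s) ⟨hs, hs⟩)⟩

end Doubling

/-! ### Comparison of nonlocal terms -/

section NonlocalComparison

variable {Ω : Set (Euc N)} {j : Euc N → Euc N → Euc N} {g : Euc N → Euc N → ℝ} {u w : Euc N → ℝ}
  {x y : Euc N} {Cμ Dμ σ Aj B c₁ c₂ η ξ : ℝ}

lemma aestronglyMeasurable_comp_jump (hJ0 : AssumptionJ0 Ω j Aj)
    (hu : UpperSemicontinuousOn u (closure Ω)) (hx : x ∈ closure Ω) :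
    AEStronglyMeasurable (fun z => u (x + j x z)) (volume.restrict (landing Ω j x)) := by
  have hj : Continuous (j x) := (hJ0 x hx).1.continuous
  have hland : Measurable fun z : landing Ω j x => (⟨x + j x z.1, z.2⟩ : closure Ω) :=
    ((continuous_const.add hj).measurable.comp measurable_subtype_coe).subtype_mk
  exact (aemeasurable_restrict_of_measurable_subtype (measurableSet_landing hJ0 hx)
    ((upperSemicontinuousOn_iff_restrict.2 hu).measurable.comp hland)).aestronglyMeasurable

lemma abs_increment_le_two_mul (hB : ∀ x ∈ closure Ω, |u x| ≤ B) (hx : x ∈ closure Ω) {a : Euc N}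
    (ha : a ∈ closure Ω) : |u a - u x| ≤ 2 * B :=
  (abs_sub _ _).trans (by linarith [hB a ha, hB x hx])

lemma integrableOn_increment_mul (hN : 0 < N) (hM : AssumptionM1 Ω g Cμ σ)
    (hJ0 : AssumptionJ0 Ω j Aj) (hu : UpperSemicontinuousOn u (closure Ω))
    (hB : ∀ x ∈ closure Ω, |u x| ≤ B) (hx : x ∈ closure Ω) (hξ : 0 < ξ) :
    IntegrableOn (fun z => (u (x + j x z) - u x) * g x z) ((ball 0 ξ)ᶜ ∩ landing Ω j x) := by
  obtain ⟨-, hσ, hgm, hg0, hg⟩ := hM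
  refine Integrable.mono' (((integrableOn_levyKernel_compl_ball hN hσ hξ).mono_set
    inter_subset_left).const_mul (2 * B * Cμ)) ?_
    (ae_restrict_of_forall_mem (measurableSet_ball.compl.inter (measurableSet_landing hJ0 hx))
      fun z hz => ?_)
  · exact (((aestronglyMeasurable_comp_jump hJ0 hu hx).mono_measure
      (Measure.restrict_mono_set _ inter_subset_right)).sub aestronglyMeasurable_const).mul
      (hgm x).aestronglyMeasurable
  · have hinc := abs_increment_le_two_mul hB hx hz.2
    rw [Real.norm_eq_abs, abs_mul, abs_of_nonneg (hg0 x hx z), mul_assoc]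
    exact mul_le_mul hinc (hg x hx z) (hg0 x hx z) ((abs_nonneg _).trans hinc)

lemma Iout_le_of_increment_le (hN : 0 < N) (hM : AssumptionM1 Ω g Cμ σ)
    (hJ0 : AssumptionJ0 Ω j Aj) (hu : UpperSemicontinuousOn u (closure Ω))
    (hB : ∀ x ∈ closure Ω, |u x| ≤ B) (hx : x ∈ closure Ω) (hc₁ : 0 ≤ c₁)
    (hinc : ∀ z ∈ landing Ω j x, u (x + j x z) - u x ≤ c₁ * jumpWeight σ ‖z‖) (hξ : 0 < ξ) :
    Iout Ω j g ξ u x ≤ c₁ * Cμ * ∫ z : Euc N, weightedKernel σ z := by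
  have hint := integrableOn_increment_mul hN hM hJ0 hu hB hx hξ
  obtain ⟨hCμ, hσ, -, hg0, hg⟩ := hM
  have hker := (integrable_weightedKernel hN hσ).const_mul (c₁ * Cμ)
  rw [Iout_eq_setIntegral, ← integral_const_mul]
  refine (setIntegral_mono_on hint hker.integrableOn
    (measurableSet_ball.compl.inter (measurableSet_landing hJ0 hx)) fun z hz => ?_).trans
    (setIntegral_le_integral hker (Eventually.of_forall fun z =>
      mul_nonneg (by positivity) (weightedKernel_nonneg σ z)))
  calc _ ≤ c₁ * jumpWeight σ ‖z‖ * (Cμ * levyKernel σ z) := mul_le_mul (hinc z hz.2) (hg x hx z)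
        (hg0 x hx z) (mul_nonneg hc₁ (jumpWeight_nonneg σ (norm_nonneg z)))
    _ = c₁ * Cμ * weightedKernel σ z := by rw [weightedKernel]; ring

lemma mul_add_mul_le_of_add_le {P Q s t a b k d : ℝ} (hP : P ≤ a) (hQ : Q ≤ a) (hPQ : P + Q ≤ b)
    (ha : 0 ≤ a) (hb : 0 ≤ b) (hs : s ∈ Icc 0 k) (ht : t ∈ Icc 0 k) (hst : |s - t| ≤ d) :
    P * s + Q * t ≤ b * k + a * d := by
  obtain ⟨hd₁, hd₂⟩ := abs_le.1 hst
  rcases le_total t s with h | h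
  · have := mul_le_mul hPQ ht.2 ht.1 hb
    have := mul_le_mul hP hd₂ (sub_nonneg.2 h) ha
    linarith
  · have := mul_le_mul hPQ hs.2 hs.1 hb
    have := mul_le_mul hQ (by linarith : t - s ≤ d) (sub_nonneg.2 h) ha
    linarith

/-- The bound for the integrand of one nonlocal term at a jump `z` whose counterpart is censored:
a multiple of the weighted kernel for `‖z‖ < η`, of the Lévy kernel for larger jumps. -/
def splitKernel (σ η a b : ℝ) (z : Euc N) : ℝ :=
  (ball 0 η).indicator (fun z => a * weightedKernel σ z) z +
    (ball 0 η)ᶜ.indicator (fun z => b * levyKernel σ z) z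

lemma splitKernel_nonneg {a b : ℝ} (ha : 0 ≤ a) (hb : 0 ≤ b) (z : Euc N) :
    0 ≤ splitKernel σ η a b z :=
  add_nonneg (indicator_nonneg (fun z _ => mul_nonneg ha (weightedKernel_nonneg σ z)) z)
    (indicator_nonneg (fun z _ => mul_nonneg hb (levyKernel_nonneg σ z)) z)

lemma integrable_splitKernel (hN : 0 < N) (hσ : σ ∈ Ioo (0 : ℝ) 1) (hη : 0 < η) (a b : ℝ) :
    Integrable (splitKernel σ η a b : Euc N → ℝ) :=
  (((integrable_weightedKernel hN hσ).const_mul a).indicator measurableSet_ball).add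
    (IntegrableOn.integrable_indicator ((integrableOn_levyKernel_compl_ball hN hσ hη).const_mul b)
      measurableSet_ball.compl)

lemma setIntegral_splitKernel (hN : 0 < N) (hσ : σ ∈ Ioo (0 : ℝ) 1) (hη : 0 < η) (a b : ℝ)
    (T : Set (Euc N)) : ∫ z in T, splitKernel σ η a b z =
      a * (∫ z in ball 0 η ∩ T, weightedKernel σ z) +
        b * ∫ z in (ball 0 η)ᶜ ∩ T, levyKernel σ z := by
  have hnear : Integrable ((ball (0 : Euc N) η).indicator fun z => a * weightedKernel σ z) :=
    ((integrable_weightedKernel hN hσ).const_mul a).indicator measurableSet_ball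
  have hfar : Integrable ((ball (0 : Euc N) η)ᶜ.indicator fun z => b * levyKernel σ z) :=
    IntegrableOn.integrable_indicator ((integrableOn_levyKernel_compl_ball hN hσ hη).const_mul b)
      measurableSet_ball.compl
  simp only [splitKernel]
  rw [integral_add hnear.integrableOn hfar.integrableOn, setIntegral_indicator measurableSet_ball,
    setIntegral_indicator measurableSet_ball.compl, integral_const_mul, integral_const_mul,
    inter_comm T, inter_comm T]

lemma increment_mul_le_splitKernel (hM : AssumptionM1 Ω g Cμ σ)
    (hB : ∀ x ∈ closure Ω, |u x| ≤ B) (hx : x ∈ closure Ω) (hc₁ : 0 ≤ c₁)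
    (hinc : ∀ z ∈ landing Ω j x, u (x + j x z) - u x ≤ c₁ * jumpWeight σ ‖z‖) {z : Euc N}
    (hz : z ∈ landing Ω j x) :
    (u (x + j x z) - u x) * g x z ≤ splitKernel σ η (c₁ * Cμ) (2 * B * Cμ) z := by
  obtain ⟨-, -, -, hg0, hg⟩ := hM
  by_cases hη : z ∈ ball 0 η
  · rw [splitKernel, indicator_of_mem hη, indicator_of_notMem (notMem_compl_iff.2 hη), add_zero]
    calc _ ≤ c₁ * jumpWeight σ ‖z‖ * (Cμ * levyKernel σ z) := mul_le_mul (hinc z hz) (hg x hx z)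
          (hg0 x hx z) (mul_nonneg hc₁ (jumpWeight_nonneg σ (norm_nonneg z)))
      _ = c₁ * Cμ * weightedKernel σ z := by rw [weightedKernel]; ring
  · have hdiff := abs_increment_le_two_mul hB hx hz
    rw [splitKernel, indicator_of_notMem hη, indicator_of_mem (mem_compl hη), zero_add, mul_assoc]
    exact mul_le_mul ((le_abs_self _).trans hdiff) (hg x hx z) (hg0 x hx z)
      ((abs_nonneg _).trans hdiff)

lemma indicator_landing_add_le (hM : AssumptionM Ω g Cμ Dμ σ)
    (hBu : ∀ x ∈ closure Ω, |u x| ≤ B) (hBw : ∀ x ∈ closure Ω, |w x| ≤ B) (hx : x ∈ closure Ω)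
    (hy : y ∈ closure Ω) (hc₁ : 0 ≤ c₁) (hc₂ : 0 ≤ c₂)
    (hincu : ∀ z ∈ landing Ω j x, u (x + j x z) - u x ≤ c₁ * jumpWeight σ ‖z‖)
    (hincw : ∀ z ∈ landing Ω j y, w (y + j y z) - w y ≤ c₁ * jumpWeight σ ‖z‖)
    (hjoint : ∀ z ∈ landing Ω j x ∩ landing Ω j y,
      u (x + j x z) - u x + (w (y + j y z) - w y) ≤ c₂ * jumpWeight σ ‖z‖) (z : Euc N) :
    (landing Ω j x).indicator (fun z => (u (x + j x z) - u x) * g x z) z +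
        (landing Ω j y).indicator (fun z => (w (y + j y z) - w y) * g y z) z ≤
      (c₂ * Cμ + c₁ * (Dμ * ‖x - y‖)) * weightedKernel σ z +
        (mismatch Ω j x y).indicator (splitKernel σ η (c₁ * Cμ) (2 * B * Cμ)) z := by
  have hCμ := hM.1.1
  have hDμ := hM.2.1
  have hweight := jumpWeight_nonneg σ (norm_nonneg z)
  have hmain : 0 ≤ (c₂ * Cμ + c₁ * (Dμ * ‖x - y‖)) * weightedKernel σ z :=
    mul_nonneg (by positivity) (weightedKernel_nonneg σ z)
  by_cases hmis : z ∈ mismatch Ω j x y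
  · rw [indicator_of_mem hmis]
    rcases hmis with ⟨hzx, hzy⟩ | ⟨hzy, hzx⟩
    · rw [indicator_of_mem hzx, indicator_of_notMem hzy, add_zero]
      exact (increment_mul_le_splitKernel hM.1 hBu hx hc₁ hincu hzx).trans
        (le_add_of_nonneg_left hmain)
    · rw [indicator_of_mem hzy, indicator_of_notMem hzx, zero_add]
      exact (increment_mul_le_splitKernel hM.1 hBw hy hc₁ hincw hzy).trans
        (le_add_of_nonneg_left hmain)
  · rw [indicator_of_notMem hmis, add_zero]
    by_cases hzx : z ∈ landing Ω j x
    · have hzy := (notMem_mismatch_iff.1 hmis).1 hzx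
      rw [indicator_of_mem hzx, indicator_of_mem hzy]
      refine (mul_add_mul_le_of_add_le (hincu z hzx) (hincw z hzy) (hjoint z ⟨hzx, hzy⟩)
        (by positivity) (by positivity) ⟨hM.1.2.2.2.1 x hx z, hM.1.2.2.2.2 x hx z⟩
        ⟨hM.1.2.2.2.1 y hy z, hM.1.2.2.2.2 y hy z⟩ (hM.2.2 x hx y hy z)).trans_eq ?_
      rw [weightedKernel, levyKernel]
      ring
    · rw [indicator_of_notMem hzx,
        indicator_of_notMem fun h => hzx ((notMem_mismatch_iff.1 hmis).2 h)]
      simpa using hmain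

lemma Iout_add_Iout_le (hN : 0 < N) (hM : AssumptionM Ω g Cμ Dμ σ) (hJ0 : AssumptionJ0 Ω j Aj)
    (hu : UpperSemicontinuousOn u (closure Ω)) (hw : UpperSemicontinuousOn w (closure Ω))
    (hBu : ∀ x ∈ closure Ω, |u x| ≤ B) (hBw : ∀ x ∈ closure Ω, |w x| ≤ B)
    (hx : x ∈ closure Ω) (hy : y ∈ closure Ω) (hc₁ : 0 ≤ c₁) (hc₂ : 0 ≤ c₂)
    (hincu : ∀ z ∈ landing Ω j x, u (x + j x z) - u x ≤ c₁ * jumpWeight σ ‖z‖)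
    (hincw : ∀ z ∈ landing Ω j y, w (y + j y z) - w y ≤ c₁ * jumpWeight σ ‖z‖)
    (hjoint : ∀ z ∈ landing Ω j x ∩ landing Ω j y,
      u (x + j x z) - u x + (w (y + j y z) - w y) ≤ c₂ * jumpWeight σ ‖z‖)
    (hη : 0 < η) (hξ : 0 < ξ) :
    Iout Ω j g ξ u x + Iout Ω j g ξ w y ≤
      (c₂ * Cμ + c₁ * (Dμ * ‖x - y‖)) * (∫ z : Euc N, weightedKernel σ z) +
        (c₁ * Cμ * (∫ z in ball 0 η ∩ mismatch Ω j x y, weightedKernel σ z) +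
          2 * B * Cμ * ∫ z in (ball 0 η)ᶜ ∩ mismatch Ω j x y, levyKernel σ z) := by
  have hσ := hM.1.2.1
  have hlx := measurableSet_landing hJ0 hx
  have hly := measurableSet_landing hJ0 hy
  have hmis := measurableSet_mismatch hJ0 hx hy
  have hB : 0 ≤ B := (abs_nonneg _).trans (hBu x hx)
  have hker := (integrable_weightedKernel hN hσ).const_mul (c₂ * Cμ + c₁ * (Dμ * ‖x - y‖))
  have hsplit := (integrable_splitKernel hN hσ hη (c₁ * Cμ) (2 * B * Cμ)).indicator hmis
  have hiu := integrableOn_increment_mul hN hM.1 hJ0 hu hBu hx hξ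
  have hiw := integrableOn_increment_mul hN hM.1 hJ0 hw hBw hy hξ
  rw [inter_comm, ← integrableOn_indicator_iff hlx] at hiu
  rw [inter_comm, ← integrableOn_indicator_iff hly] at hiw
  have hCμ := hM.1.1
  have hDμ := hM.2.1
  rw [← setIntegral_splitKernel hN hσ hη, ← integral_indicator hmis, ← integral_const_mul,
    ← integral_add hker hsplit, Iout_eq_setIntegral, Iout_eq_setIntegral,
    ← setIntegral_indicator hlx, ← setIntegral_indicator hly, ← integral_add hiu hiw]
  exact (setIntegral_mono (hiu.add hiw) (hker.add hsplit).integrableOn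
    (indicator_landing_add_le hM hBu hBw hx hy hc₁ hc₂ hincu hincw hjoint)).trans
    (setIntegral_le_integral (hker.add hsplit) (Eventually.of_forall fun z => add_nonneg
      (mul_nonneg (by positivity) (weightedKernel_nonneg σ z))
      (indicator_nonneg (fun z _ => splitKernel_nonneg (by positivity) (by positivity) z) z)))

end NonlocalComparison

/-! ### The penalty -/

/-- The data of the penalty `‖x - y‖² / ε² + (K / ε) √((D x - D y)² + τ²)
- δ ε (sin (D x / ε) + sin (D y / ε))` of the doubling argument. The square root, a smoothing of
`|D x - D y|`, controls the gap between the levels of `D` at the two points; the sines tilt the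
gradient by `-δ ∇D` where `D = 0`, so that it satisfies the Neumann condition strictly there. -/
structure Penalty (E : Type*) [NormedAddCommGroup E] where
  /-- the level function -/
  D : E → ℝ
  /-- the scale of the penalty -/
  ε : ℝ
  /-- the weight of the gap between levels -/
  K : ℝ
  /-- the smoothing parameter -/
  τ : ℝ
  /-- the strength of the tilt -/
  δ : ℝ
  lipschitz : LipschitzWith 2 D
  ε_pos : 0 < ε
  K_nonneg : 0 ≤ K
  τ_pos : 0 < τ
  δ_nonneg : 0 ≤ δ

section Gradient

variable {E : Type*} [NormedAddCommGroup E] [InnerProductSpace ℝ E] [CompleteSpace E]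

lemma norm_gradient (f : E → ℝ) (x : E) : ‖gradient f x‖ = ‖fderiv ℝ f x‖ :=
  LinearIsometryEquiv.norm_map _ _

lemma norm_gradient_sub (f : E → ℝ) (x y : E) :
    ‖gradient f x - gradient f y‖ = ‖fderiv ℝ f x - fderiv ℝ f y‖ := by
  rw [gradient, gradient, ← map_sub, LinearIsometryEquiv.norm_map]

end Gradient

lemma abs_scaled_sin_sub_le {ε δ : ℝ} (hε : 0 < ε) (hδ : 0 ≤ δ) (s t : ℝ) :
    |δ * ε * Real.sin (s / ε) - δ * ε * Real.sin (t / ε)| ≤ δ * |s - t| := by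
  rw [← mul_sub, abs_mul, abs_of_nonneg (by positivity : 0 ≤ δ * ε)]
  calc _ ≤ δ * ε * |s / ε - t / ε| :=
        mul_le_mul_of_nonneg_left (Real.abs_sin_sub_sin_le _ _) (by positivity)
    _ = δ * |s - t| := by
      rw [← sub_div, abs_div, abs_of_pos hε]
      field_simp

namespace Penalty

variable {E : Type*} [NormedAddCommGroup E] (P : Penalty E) {x y a b : E}

/-- The value of the penalty at a pair of points. -/
def val (x y : E) : ℝ :=
  ‖x - y‖ ^ 2 / P.ε ^ 2 + P.K / P.ε * √((P.D x - P.D y) ^ 2 + P.τ ^ 2) -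
    (P.δ * P.ε * Real.sin (P.D x / P.ε) + P.δ * P.ε * Real.sin (P.D y / P.ε))

lemma val_comm (x y : E) : P.val x y = P.val y x := by
  rw [val, val, norm_sub_rev, ← neg_sub (P.D y) (P.D x), neg_sq]
  ring

lemma continuous_val : Continuous fun q : E × E => P.val q.1 q.2 := by
  have := P.lipschitz.continuous
  unfold val
  fun_prop

lemma le_val (x y : E) : ‖x - y‖ ^ 2 / P.ε ^ 2 - 2 * P.δ * P.ε ≤ P.val x y := by
  have hδ : 0 ≤ P.δ * P.ε := mul_nonneg P.δ_nonneg P.ε_pos.le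
  have hgap : 0 ≤ P.K / P.ε * √((P.D x - P.D y) ^ 2 + P.τ ^ 2) :=
    mul_nonneg (div_nonneg P.K_nonneg P.ε_pos.le) (Real.sqrt_nonneg _)
  rw [val]
  linarith [mul_le_of_le_one_right hδ (Real.sin_le_one (P.D x / P.ε)),
    mul_le_of_le_one_right hδ (Real.sin_le_one (P.D y / P.ε))]

lemma val_self_le (x : E) : P.val x x ≤ P.K / P.ε * P.τ + 2 * P.δ * P.ε := by
  have hsin := mul_le_mul_of_nonneg_left (Real.neg_one_le_sin (P.D x / P.ε))
    (mul_nonneg P.δ_nonneg P.ε_pos.le)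
  have hsqrt : √((P.D x - P.D x) ^ 2 + P.τ ^ 2) = P.τ := by
    rw [sub_self, zero_pow two_ne_zero, zero_add, Real.sqrt_sq P.τ_pos.le]
  rw [val, hsqrt, sub_self, norm_zero, zero_pow two_ne_zero, zero_div]
  linarith

lemma abs_D_sub_le (x y : E) : |P.D x - P.D y| ≤ 2 * ‖x - y‖ := by
  simpa [Real.dist_eq, dist_eq_norm] using P.lipschitz.dist_le_mul x y

lemma val_add_sub_le (x y a b : E) : P.val (x + a) (y + b) - P.val x y ≤
    (2 * ‖x - y‖ * ‖a - b‖ + ‖a - b‖ ^ 2) / P.ε ^ 2 +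
      P.K / P.ε * |P.D (x + a) - P.D x - (P.D (y + b) - P.D y)| + 2 * P.δ * (‖a‖ + ‖b‖) := by
  have hε := P.ε_pos
  have hquad : ‖x + a - (y + b)‖ ^ 2 / P.ε ^ 2 - ‖x - y‖ ^ 2 / P.ε ^ 2 ≤
      (2 * ‖x - y‖ * ‖a - b‖ + ‖a - b‖ ^ 2) / P.ε ^ 2 := by
    rw [← sub_div, add_sub_add_comm]
    gcongr
    nlinarith [norm_add_le (x - y) (a - b), norm_nonneg (x - y + (a - b))]
  have hroot := mul_le_mul_of_nonneg_left ((le_abs_self _).trans (abs_sqrt_sq_add_sq_sub_le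
    (P.D (x + a) - P.D (y + b)) (P.D x - P.D y) P.τ)) (div_nonneg P.K_nonneg hε.le)
  rw [show P.D (x + a) - P.D (y + b) - (P.D x - P.D y) =
    P.D (x + a) - P.D x - (P.D (y + b) - P.D y) by ring] at hroot
  have hsin (w c : E) : P.δ * P.ε * Real.sin (P.D w / P.ε) -
      P.δ * P.ε * Real.sin (P.D (w + c) / P.ε) ≤ 2 * P.δ * ‖c‖ := by
    have hlip := P.abs_D_sub_le w (w + c)
    rw [sub_add_cancel_left, norm_neg] at hlip
    calc _ ≤ P.δ * |P.D w - P.D (w + c)| :=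
          (le_abs_self _).trans (abs_scaled_sin_sub_le hε P.δ_nonneg _ _)
      _ ≤ P.δ * (2 * ‖c‖) := mul_le_mul_of_nonneg_left hlip P.δ_nonneg
      _ = 2 * P.δ * ‖c‖ := by ring
  rw [val, val]
  linarith [hsin x a, hsin y b]

lemma val_add_left_sub_le (hε : P.ε ≤ 1) (hxy : ‖x - y‖ ≤ P.ε) (a : E) :
    P.val (x + a) y - P.val x y ≤
      (2 + 2 * P.K + 2 * P.δ) * (‖a‖ / P.ε) + (‖a‖ / P.ε) ^ 2 := by
  have hε0 := P.ε_pos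
  have hlip := P.abs_D_sub_le (x + a) x
  rw [add_sub_cancel_left] at hlip
  have h := P.val_add_sub_le x y a 0
  rw [add_zero, sub_zero, sub_self, sub_zero, norm_zero, add_zero] at h
  have hquad : (2 * ‖x - y‖ * ‖a‖ + ‖a‖ ^ 2) / P.ε ^ 2 ≤ 2 * (‖a‖ / P.ε) + (‖a‖ / P.ε) ^ 2 := by
    calc _ ≤ (2 * P.ε * ‖a‖ + ‖a‖ ^ 2) / P.ε ^ 2 := by gcongr
      _ = _ := by field_simp
  have hroot : P.K / P.ε * |P.D (x + a) - P.D x| ≤ 2 * P.K * (‖a‖ / P.ε) :=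
    (mul_le_mul_of_nonneg_left hlip (div_nonneg P.K_nonneg hε0.le)).trans_eq (by ring)
  have hsin : 2 * P.δ * ‖a‖ ≤ 2 * P.δ * (‖a‖ / P.ε) := by
    have := P.δ_nonneg
    gcongr
    exact le_div_self (norm_nonneg a) hε0 hε
  linarith

section Slope

/-- The derivative of the smoothed gap of levels with respect to the first level. -/
def slope (x y : E) : ℝ :=
  P.K / P.ε * ((P.D x - P.D y) / √((P.D x - P.D y) ^ 2 + P.τ ^ 2))

lemma gap_sq_add_pos (x y : E) : 0 < (P.D x - P.D y) ^ 2 + P.τ ^ 2 :=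
  add_pos_of_nonneg_of_pos (sq_nonneg _) (pow_pos P.τ_pos 2)

lemma slope_comm (x y : E) : P.slope x y = -P.slope y x := by
  rw [slope, slope, ← neg_sub (P.D y) (P.D x), neg_sq, neg_div, mul_neg]

lemma abs_slope (x y : E) :
    |P.slope x y| = P.K / P.ε * (|P.D x - P.D y| / √((P.D x - P.D y) ^ 2 + P.τ ^ 2)) := by
  have hK : 0 ≤ P.K / P.ε := div_nonneg P.K_nonneg P.ε_pos.le
  rw [slope, abs_mul, abs_of_nonneg hK, abs_div, abs_of_nonneg (Real.sqrt_nonneg _)]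

lemma abs_slope_le (x y : E) : |P.slope x y| ≤ P.K / P.ε := by
  rw [abs_slope]
  refine mul_le_of_le_one_right (div_nonneg P.K_nonneg P.ε_pos.le) (div_le_one_of_le₀ ?_
    (Real.sqrt_nonneg _))
  exact Real.abs_le_sqrt (le_add_of_nonneg_right (sq_nonneg _))

lemma half_le_abs_slope (h : P.τ ≤ |P.D x - P.D y|) : P.K / P.ε / 2 ≤ |P.slope x y| := by
  rw [abs_slope, div_eq_mul_inv _ (2 : ℝ), ← one_div]
  refine mul_le_mul_of_nonneg_left ?_ (div_nonneg P.K_nonneg P.ε_pos.le)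
  rw [div_le_div_iff₀ two_pos (Real.sqrt_pos.2 (P.gap_sq_add_pos x y)), one_mul,
    Real.sqrt_le_left (by positivity)]
  have hsq : P.τ ^ 2 ≤ (P.D x - P.D y) ^ 2 := by
    rw [← sq_abs (P.D x - P.D y)]
    exact pow_le_pow_left₀ P.τ_pos.le h 2
  rw [mul_pow, sq_abs]
  linarith [sq_nonneg P.τ]

lemma slope_nonpos (h : P.D x ≤ P.D y) : P.slope x y ≤ 0 :=
  mul_nonpos_of_nonneg_of_nonpos (div_nonneg P.K_nonneg P.ε_pos.le)
    (div_nonpos_of_nonpos_of_nonneg (sub_nonpos.2 h) (Real.sqrt_nonneg _))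

end Slope

lemma contDiffOn_val {E : Type*} [NormedAddCommGroup E] [InnerProductSpace ℝ E]
    (P : Penalty E) {U : Set E} (hD : ContDiffOn ℝ 1 P.D U) (y : E) :
    ContDiffOn ℝ 1 (fun x => P.val x y) U := by
  have hquad : ContDiffOn ℝ 1 (fun x => ‖x - y‖ ^ 2 / P.ε ^ 2) U :=
    (((contDiff_norm_sq ℝ).comp (contDiff_id.sub contDiff_const)).div_const _).contDiffOn
  have hgap : ContDiffOn ℝ 1 (fun x => √((P.D x - P.D y) ^ 2 + P.τ ^ 2)) U :=
    (((hD.sub contDiffOn_const).pow 2).add contDiffOn_const).sqrt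
      fun x _ => (P.gap_sq_add_pos x y).ne'
  have hsin : ContDiffOn ℝ 1 (fun x => Real.sin (P.D x / P.ε)) U :=
    (Real.contDiff_sin.of_le le_top).comp_contDiffOn (hD.div_const P.ε)
  exact (hquad.add (contDiffOn_const.mul hgap)).sub
    ((contDiffOn_const.mul hsin).add contDiffOn_const)

section Gradient

variable {E : Type*} [NormedAddCommGroup E] [InnerProductSpace ℝ E] [CompleteSpace E]
  (P : Penalty E) {x y : E}

/-- The part of the gradient of the penalty in its first variable that stays bounded by
`2 ‖x - y‖ / ε² + 2 δ`; the remaining part is a multiple of the gradient of `D`. -/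
def base (x y : E) : E :=
  (2 / P.ε ^ 2) • (x - y) - (P.δ * Real.cos (P.D x / P.ε)) • gradient P.D x

/-- The gradient of the penalty in its first variable. -/
def grad (x y : E) : E := P.base x y + P.slope x y • gradient P.D x

lemma hasGradientAt_val (hD : DifferentiableAt ℝ P.D x) (y : E) :
    HasGradientAt (fun x' => P.val x' y) (P.grad x y) x := by
  rw [hasGradientAt_iff_hasFDerivAt]
  have hε := P.ε_pos.ne'
  have hroot : √((P.D x - P.D y) ^ 2 + P.τ ^ 2) ≠ 0 := (Real.sqrt_pos.2 (P.gap_sq_add_pos x y)).ne'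
  have hquad := ((hasFDerivAt_id (𝕜 := ℝ) x).sub_const y).norm_sq.mul_const (1 / P.ε ^ 2)
  have hgap := ((((hD.hasFDerivAt.sub_const (P.D y)).pow 2).add_const (P.τ ^ 2)).sqrt
    (P.gap_sq_add_pos x y).ne').const_mul (P.K / P.ε)
  have hsin := (((hD.hasFDerivAt.mul_const (1 / P.ε)).sin).const_mul (P.δ * P.ε)).add_const
    (P.δ * P.ε * Real.sin (P.D y / P.ε))
  refine (((hquad.add hgap).sub hsin).congr_of_eventuallyEq
    (Eventually.of_forall fun x' => ?_)).congr_fderiv ?_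
  · simp [val, div_eq_mul_inv]
  · ext a
    simp only [grad, base, slope, InnerProductSpace.toDual_apply_apply, inner_add_left,
      inner_sub_left, real_inner_smul_left, inner_gradient_left]
    simp
    field_simp
    ring

variable {s : E} {r κ η : ℝ}

lemma norm_tilt_le (hP : IsC11On P.D s r κ) (x : E) :
    ‖(P.δ * Real.cos (P.D x / P.ε)) • gradient P.D x‖ ≤ P.δ * 2 := by
  rw [norm_smul, norm_mul, Real.norm_of_nonneg P.δ_nonneg, norm_gradient]
  refine mul_le_mul ?_ (hP.norm_fderiv_le x) (norm_nonneg _) P.δ_nonneg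
  exact mul_le_of_le_one_right P.δ_nonneg (Real.abs_cos_le_one _)

lemma norm_base_le (hP : IsC11On P.D s r κ) (hxy : ‖x - y‖ ≤ η * P.ε) :
    ‖P.base x y‖ ≤ 2 * η / P.ε + 2 * P.δ := by
  have hε := P.ε_pos
  refine (norm_sub_le _ _).trans (add_le_add ?_ ?_)
  · rw [norm_smul, Real.norm_of_nonneg (by positivity)]
    calc 2 / P.ε ^ 2 * ‖x - y‖ ≤ 2 / P.ε ^ 2 * (η * P.ε) := by gcongr
      _ = 2 * η / P.ε := by field_simp
  · exact (P.norm_tilt_le hP x).trans_eq (mul_comm _ _)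

lemma norm_base_add_base_le (hP : IsC11On P.D s r κ) (x y : E) :
    ‖P.base x y + P.base y x‖ ≤ 4 * P.δ := by
  have hsum : P.base x y + P.base y x = -((P.δ * Real.cos (P.D x / P.ε)) • gradient P.D x +
      (P.δ * Real.cos (P.D y / P.ε)) • gradient P.D y) := by
    rw [base, base, ← neg_sub y x, smul_neg]
    abel
  rw [hsum, norm_neg]
  linarith [norm_add_le_of_le (P.norm_tilt_le hP x) (P.norm_tilt_le hP y)]

lemma norm_grad_add_grad_le (hP : IsC11On P.D s r κ) (hx : x ∈ ball s r) (hy : y ∈ ball s r) :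
    ‖P.grad x y + P.grad y x‖ ≤ 4 * P.δ + P.K / P.ε * (κ * ‖x - y‖) := by
  have hsum : P.grad x y + P.grad y x =
      P.base x y + P.base y x + P.slope x y • (gradient P.D x - gradient P.D y) := by
    rw [grad, grad, P.slope_comm y x, neg_smul, smul_sub]
    abel
  rw [hsum]
  refine norm_add_le_of_le (P.norm_base_add_base_le hP x y) ?_
  rw [norm_smul, Real.norm_eq_abs, norm_gradient_sub]
  exact mul_le_mul (P.abs_slope_le x y) (hP.norm_fderiv_sub_le x hx y hy) (norm_nonneg _)
    (div_nonneg P.K_nonneg P.ε_pos.le)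

lemma le_inner_grad (hP : IsC11On P.D s r κ) (hx : x ∈ ball s r) (hy : y ∈ ball s r)
    (hxy : ‖x - y‖ ≤ η * P.ε) {ν : E} (hν : ‖ν‖ = 1) (hgrad : gradient P.D x = -ν)
    (hDx : P.D x = 0) (hDy : 0 ≤ P.D y) : P.δ - 2 * κ * η ^ 2 ≤ ⟪P.grad x y, ν⟫ := by
  have hε := P.ε_pos
  have hκ := hP.const_nonneg
  have hunit : ⟪ν, ν⟫ = 1 := by rw [real_inner_self_eq_norm_sq, hν, one_pow]
  have hexp : ⟪P.grad x y, ν⟫ = 2 / P.ε ^ 2 * ⟪x - y, ν⟫ + P.δ - P.slope x y := by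
    simp only [grad, base, hgrad, hDx, inner_add_left, inner_sub_left (_ • _), real_inner_smul_left,
      inner_neg_left, hunit, zero_div, Real.cos_zero]
    ring
  have hslope := P.slope_nonpos (hDx.trans_le hDy)
  have hinner : -(κ * ‖x - y‖ ^ 2) ≤ ⟪x - y, ν⟫ := by
    have htaylor := (le_abs_self _).trans (hP.abs_sub_fderiv_le hx hy)
    rw [← inner_gradient_left, hgrad, inner_neg_left, real_inner_comm, norm_sub_rev, hDx,
      ← neg_sub x y, inner_neg_left] at htaylor
    linarith
  have hsq : ‖x - y‖ ^ 2 ≤ (η * P.ε) ^ 2 := pow_le_pow_left₀ (norm_nonneg _) hxy 2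
  have : -(2 * κ * η ^ 2) ≤ 2 / P.ε ^ 2 * ⟪x - y, ν⟫ := by
    calc -(2 * κ * η ^ 2) = 2 / P.ε ^ 2 * -(κ * (η * P.ε) ^ 2) := by field_simp
      _ ≤ 2 / P.ε ^ 2 * -(κ * ‖x - y‖ ^ 2) := by gcongr
      _ ≤ _ := by gcongr
  linarith

end Gradient

end Penalty

/-! ### Hamiltonians -/

section Hamiltonian

variable {Ω : Set (Euc N)} {H : Euc N → Euc N → ℝ} {s : Euc N} {ν : Euc N → Euc N}

/-- `H` is Lipschitz in the momentum, with constant `Cb`, and its variation in space is at most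
linear in the momentum, with Lipschitz constant `Lb`, up to the modulus `ω`. -/
structure IsRegularHamiltonian (Ω : Set (Euc N)) (H : Euc N → Euc N → ℝ) (Cb Lb : ℝ)
    (ω : ℝ → ℝ) : Prop where
  Cb_nonneg : 0 ≤ Cb
  Lb_nonneg : 0 ≤ Lb
  modulus : IsModulus ω
  le : ∀ x ∈ closure Ω, ∀ y ∈ closure Ω, ∀ p q,
    H y q ≤ H x p + Cb * ‖p - q‖ + Lb * ‖x - y‖ * ‖q‖ + ω ‖x - y‖

/-- Along the ray in direction `ν`, the Hamiltonian tends to `+∞` at least linearly or to `-∞` at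
least linearly, with the same alternative at all points near `s`. -/
def GrowsOrDecaysAlong (Ω : Set (Euc N)) (H : Euc N → Euc N → ℝ) (s : Euc N)
    (ν : Euc N → Euc N) : Prop :=
  ∃ c > 0, ∃ C ≥ 0,
    (∀ᶠ x in 𝓝[closure Ω] s, ∀ t ≥ 0, ∀ p, c * t - C * (1 + ‖p‖) ≤ H x (p + t • ν x)) ∨
    (∀ᶠ x in 𝓝[closure Ω] s, ∀ t ≥ 0, ∀ p, H x (p + t • ν x) ≤ -(c * t) + C * (1 + ‖p‖))

/-- `H` grows or decays linearly near `s` in each of the two directions `ν` and `-ν`. This is what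
assumption (B) provides at the boundary for `ν` the normal field. -/
def IsCoerciveAlong (Ω : Set (Euc N)) (H : Euc N → Euc N → ℝ) (s : Euc N)
    (ν : Euc N → Euc N) : Prop :=
  GrowsOrDecaysAlong Ω H s ν ∧ GrowsOrDecaysAlong Ω H s (-ν)

/- Growth is read off at `x` and decay at `y`. -/
lemma GrowsOrDecaysAlong.exists_mul_le (h : GrowsOrDecaysAlong Ω H s ν) :
    ∃ c > 0, ∃ C, ∃ r > 0, ∀ x ∈ closure Ω, ∀ y ∈ closure Ω, x ∈ ball s r → y ∈ ball s r →
      ∀ t ≥ 0, ∀ p q M T, ‖p‖ ≤ M → ‖q‖ ≤ M → H x (p + t • ν x) ≤ T → -T ≤ H y (q + t • ν y) →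
        c * t ≤ T + C * (1 + M) := by
  obtain ⟨c, hc, C, hC, h | h⟩ := h <;> obtain ⟨r, hr, h⟩ := Metric.mem_nhdsWithin_iff.1 h <;>
    refine ⟨c, hc, C, r, hr, fun x hx y hy hxs hys t ht p q M T hp hq hxT hyT => ?_⟩
  · linarith [h ⟨hxs, hx⟩ t ht p, mul_le_mul_of_nonneg_left hp hC]
  · linarith [h ⟨hys, hy⟩ t ht q, mul_le_mul_of_nonneg_left hq hC]

lemma IsCoerciveAlong.exists_mul_abs_le (h : IsCoerciveAlong Ω H s ν) :
    ∃ c > 0, ∃ C, ∃ r > 0, ∀ x ∈ closure Ω, ∀ y ∈ closure Ω, x ∈ ball s r → y ∈ ball s r →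
      ∀ t p q M T, ‖p‖ ≤ M → ‖q‖ ≤ M → H x (p + t • ν x) ≤ T → -T ≤ H y (q + t • ν y) →
        c * |t| ≤ T + C * (1 + M) := by
  obtain ⟨c₁, hc₁, C₁, r₁, hr₁, h₁⟩ := h.1.exists_mul_le
  obtain ⟨c₂, hc₂, C₂, r₂, hr₂, h₂⟩ := h.2.exists_mul_le
  refine ⟨min c₁ c₂, lt_min hc₁ hc₂, max C₁ C₂, min r₁ r₂, lt_min hr₁ hr₂,
    fun x hx y hy hxs hys t p q M T hp hq hxT hyT => ?_⟩
  have hM : 0 ≤ 1 + M := by linarith [norm_nonneg p]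
  have hball₁ := ball_subset_ball (x := s) (min_le_left r₁ r₂)
  have hball₂ := ball_subset_ball (x := s) (min_le_right r₁ r₂)
  rcases le_total 0 t with ht | ht
  · calc _ ≤ c₁ * |t| := mul_le_mul_of_nonneg_right (min_le_left _ _) (abs_nonneg t)
      _ = c₁ * t := by rw [abs_of_nonneg ht]
      _ ≤ T + C₁ * (1 + M) :=
        h₁ x hx y hy (hball₁ hxs) (hball₁ hys) t ht p q M T hp hq hxT hyT
      _ ≤ _ := by gcongr; exact le_max_left _ _
  · have hneg : ∀ z, -t • (-ν) z = t • ν z := fun z => by rw [Pi.neg_apply, neg_smul_neg]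
    calc _ ≤ c₂ * |t| := mul_le_mul_of_nonneg_right (min_le_right _ _) (abs_nonneg t)
      _ = c₂ * -t := by rw [abs_of_nonpos ht]
      _ ≤ T + C₂ * (1 + M) :=
        h₂ x hx y hy (hball₂ hxs) (hball₂ hys) (-t) (neg_nonneg.2 ht) p q M T hp hq
          (by rwa [hneg]) (by rwa [hneg])
      _ ≤ _ := by gcongr; exact le_max_right _ _

end Hamiltonian

/-! ### Bellman Hamiltonians -/

section Bellman

variable {Ω : Set (Euc N)} {A : Type} {b : Euc N → A → Euc N} {l : Euc N → A → ℝ}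
  {H : Euc N → Euc N → ℝ} {x y p q s : Euc N} {α : A} {c Cb Cl : ℝ} {n ν : Euc N → Euc N}

lemma abs_inner_drift_le (hb : ∀ x α, ‖b x α‖ ≤ Cb) (x p : Euc N) (α : A) :
    |⟪b x α, p⟫| ≤ Cb * ‖p‖ :=
  (abs_real_inner_le_norm _ _).trans (mul_le_mul_of_nonneg_right (hb x α) (norm_nonneg p))

lemma IsBellman.le_hamiltonian (hH : IsBellman b l H) (hb : ∀ x α, ‖b x α‖ ≤ Cb)
    (hl : ∀ x α, |l x α| ≤ Cl) (x p : Euc N) (α : A) : -⟪b x α, p⟫ - l x α ≤ H x p := by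
  rw [hH x p]
  refine le_ciSup (f := fun α => -⟪b x α, p⟫ - l x α) ⟨Cb * ‖p‖ + Cl, ?_⟩ α
  rintro _ ⟨α, rfl⟩
  linarith [(abs_le.1 (abs_inner_drift_le hb x p α)).1, (abs_le.1 (hl x α)).1]

lemma tendstoUniformly_inner_drift (hb : ∀ x α, ‖b x α‖ ≤ Cb) (hL : AssumptionL Ω b)
    (hs : s ∈ closure Ω) (hν : ContinuousAt ν s) :
    TendstoUniformly (fun x α => ⟪b x α, ν x⟫) (fun α => ⟪b s α, ν s⟫) (𝓝[closure Ω] s) := by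
  obtain ⟨Lb, -, hbL⟩ := hL
  have hbound : Tendsto (fun x => Lb * ‖s - x‖ * ‖ν x‖ + Cb * ‖ν s - ν x‖) (𝓝[closure Ω] s)
      (𝓝 0) := by
    have hcont : ContinuousAt (fun x => Lb * ‖s - x‖ * ‖ν x‖ + Cb * ‖ν s - ν x‖) s := by fun_prop
    simpa [ContinuousAt] using hcont.tendsto.mono_left nhdsWithin_le_nhds
  refine Metric.tendstoUniformly_iff.2 fun c hc => ?_
  filter_upwards [hbound.eventually_lt_const hc, self_mem_nhdsWithin] with x hx hxΩ α
  refine lt_of_le_of_lt ?_ hx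
  rw [Real.dist_eq]
  calc |⟪b s α, ν s⟫ - ⟪b x α, ν x⟫| = |⟪b s α - b x α, ν x⟫ + ⟪b s α, ν s - ν x⟫| := by
        rw [inner_sub_left, inner_sub_right]
        ring_nf
    _ ≤ |⟪b s α - b x α, ν x⟫| + |⟪b s α, ν s - ν x⟫| := abs_add_le _ _
    _ ≤ Lb * ‖s - x‖ * ‖ν x‖ + Cb * ‖ν s - ν x‖ :=
      add_le_add ((abs_real_inner_le_norm _ _).trans
        (mul_le_mul_of_nonneg_right (hbL α s hs x hxΩ) (norm_nonneg _)))
        (abs_inner_drift_le hb s _ α)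

variable [Nonempty A]

lemma IsBellman.hamiltonian_le (hH : IsBellman b l H) (h : ∀ α, -⟪b x α, p⟫ - l x α ≤ c) :
    H x p ≤ c := by
  rw [hH x p]
  exact ciSup_le h

lemma IsBellman.exists_isRegularHamiltonian [TopologicalSpace A] (hH : IsBellman b l H)
    (hdata : BellmanData b l) (hC : AssumptionC Ω l) (hL : AssumptionL Ω b) :
    ∃ Cb Lb ω, IsRegularHamiltonian Ω H Cb Lb ω := by
  obtain ⟨-, ⟨Cb, hb⟩, -, ⟨Cl, hl⟩⟩ := hdata
  obtain ⟨ω, hω, hlω⟩ := hC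
  obtain ⟨Lb, hLb, hbL⟩ := hL
  have hCb : 0 ≤ Cb := (norm_nonneg _).trans (hb 0 (Classical.arbitrary A))
  refine ⟨Cb, Lb, ω, hCb, hLb.le, hω, fun x hx y hy p q => hH.hamiltonian_le fun α => ?_⟩
  have hmomentum := (abs_le.1 (abs_inner_drift_le hb x (p - q) α)).2
  have hdrift : ⟪b x α - b y α, q⟫ ≤ Lb * ‖x - y‖ * ‖q‖ :=
    (real_inner_le_norm _ _).trans (mul_le_mul_of_nonneg_right (hbL α x hx y hy) (norm_nonneg q))
  rw [inner_sub_right] at hmomentum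
  rw [inner_sub_left] at hdrift
  linarith [hH.le_hamiltonian hb hl x p α, (abs_le.1 (hlω α x hx y hy)).2]

/- In the first case one control makes `H` grow; in the second, by compactness, all of them decay
at a common rate. -/
lemma IsBellman.growsOrDecaysAlong [TopologicalSpace A] [CompactSpace A] (hH : IsBellman b l H)
    (hdata : BellmanData b l)
    (hν : TendstoUniformly (fun x α => ⟪b x α, ν x⟫) (fun α => ⟪b s α, ν s⟫) (𝓝[closure Ω] s))
    (hs : (∃ α, ⟪b s α, ν s⟫ < 0) ∨ ∀ α, 0 < ⟪b s α, ν s⟫) : GrowsOrDecaysAlong Ω H s ν := by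
  obtain ⟨hcont, ⟨Cb, hb⟩, -, ⟨Cl, hl⟩⟩ := hdata
  have hCb : 0 ≤ Cb := (norm_nonneg _).trans (hb 0 (Classical.arbitrary A))
  have hCl : 0 ≤ Cl := (abs_nonneg _).trans (hl 0 (Classical.arbitrary A))
  have hC : ∀ p : Euc N, Cb * ‖p‖ + Cl ≤ (Cb + Cl) * (1 + ‖p‖) := fun p => by
    linarith [mul_nonneg hCl (norm_nonneg p)]
  have hclose : ∀ c > 0, ∀ᶠ x in 𝓝[closure Ω] s, ∀ α, |⟪b s α, ν s⟫ - ⟪b x α, ν x⟫| < c :=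
    Metric.tendstoUniformly_iff.1 hν
  have hexpand : ∀ x p (t : ℝ) α, ⟪b x α, p + t • ν x⟫ = ⟪b x α, p⟫ + t * ⟪b x α, ν x⟫ :=
    fun x p t α => by rw [inner_add_right, real_inner_smul_right]
  rcases hs with ⟨α, hα⟩ | hα
  · refine ⟨-⟪b s α, ν s⟫ / 2, by linarith, _, add_nonneg hCb hCl, Or.inl ?_⟩
    filter_upwards [hclose (-⟪b s α, ν s⟫ / 2) (by linarith)] with x hx t ht p
    have hrate : ⟪b x α, ν x⟫ ≤ -(-⟪b s α, ν s⟫ / 2) := by linarith [(abs_lt.1 (hx α)).1]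
    have hval := hH.le_hamiltonian hb hl x (p + t • ν x) α
    rw [hexpand] at hval
    linarith [hC p, mul_le_mul_of_nonneg_left hrate ht,
      (abs_le.1 (abs_inner_drift_le hb x p α)).2, (abs_le.1 (hl x α)).2]
  · obtain ⟨α₀, -, hmin⟩ := isCompact_univ.exists_isMinOn (univ_nonempty (α := A))
      (f := fun α => ⟪b s α, ν s⟫) (by fun_prop)
    refine ⟨⟪b s α₀, ν s⟫ / 2, half_pos (hα α₀), _, add_nonneg hCb hCl, Or.inr ?_⟩
    filter_upwards [hclose _ (half_pos (hα α₀))] with x hx t ht p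
    refine hH.hamiltonian_le fun α => ?_
    have hrate : ⟪b s α₀, ν s⟫ / 2 ≤ ⟪b x α, ν x⟫ := by
      linarith [(abs_lt.1 (hx α)).2, isMinOn_univ_iff.1 hmin α]
    rw [hexpand]
    linarith [hC p, mul_le_mul_of_nonneg_left hrate ht,
      (abs_le.1 (abs_inner_drift_le hb x p α)).1, (abs_le.1 (hl x α)).1]

lemma AssumptionB.exists_neg_or_forall_pos (hB : AssumptionB Ω n b) (hs : s ∈ frontier Ω) :
    ((∃ α, ⟪b s α, n s⟫ < 0) ∨ ∀ α, 0 < ⟪b s α, n s⟫) ∧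
      ((∃ α, 0 < ⟪b s α, n s⟫) ∨ ∀ α, ⟪b s α, n s⟫ < 0) := by
  rcases hB.1.ge hs with (h | h) | ⟨-, α₁, α₂, h₁, h₂⟩
  · exact ⟨Or.inl ⟨Classical.arbitrary A, h.2 _⟩, Or.inr h.2⟩
  · exact ⟨Or.inr h.2, Or.inl ⟨Classical.arbitrary A, h.2 _⟩⟩
  · exact ⟨Or.inl ⟨α₁, h₁⟩, Or.inl ⟨α₂, h₂⟩⟩

lemma StatBellmanOK.isCoerciveAlong_gradient_sdist [TopologicalSpace A] [CompactSpace A]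
    {hN : 0 < N} (hH : StatBellmanOK Ω n b l H) (hΩ : IsW2Domain hN Ω) (hn : IsExteriorNormal Ω n)
    (hs : s ∈ frontier Ω) : IsCoerciveAlong Ω H s (gradient (sdist Ω)) := by
  obtain ⟨hdata, hbell, -, hL, hB⟩ := hH
  obtain ⟨r, K, hD⟩ := hΩ.exists_isC11On_sdist hs
  have hgrad : ContinuousAt (gradient (sdist Ω)) s :=
    (LinearIsometryEquiv.continuous _).continuousAt.comp
      ((hD.contDiffOn.contDiffAt (ball_mem_nhds s hD.radius_pos)).continuousAt_fderiv one_ne_zero)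
  have hdrift : ∀ ν : Euc N → Euc N, ContinuousAt ν s →
      TendstoUniformly (fun x α => ⟪b x α, ν x⟫) (fun α => ⟪b s α, ν s⟫) (𝓝[closure Ω] s) :=
    fun ν => tendstoUniformly_inner_drift hdata.2.1.choose_spec hL (frontier_subset_closure hs)
  have hnormal : gradient (sdist Ω) s = -n s := (hn s hs).2.gradient
  obtain ⟨hneg, hpos⟩ := hB.exists_neg_or_forall_pos hs
  refine ⟨hbell.growsOrDecaysAlong hdata (hdrift _ hgrad) ?_,
    hbell.growsOrDecaysAlong hdata (hdrift _ hgrad.neg) ?_⟩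
  · simpa only [hnormal, inner_neg_right, neg_lt_zero, neg_pos] using hpos
  · simpa only [Pi.neg_apply, hnormal, neg_neg] using hneg

end Bellman

/-! ### Level functions -/

/-- A domain of class `W^{2,∞}` with the Lévy densities `g` and the jump function `j` of a censored
operator, under the assumptions (M), (J0) and (J1). -/
structure CensoredSetting (N : ℕ) where
  /-- the domain -/
  Ω : Set (Euc N)
  /-- the exterior normal -/
  n : Euc N → Euc N
  /-- the densities of the Lévy measures -/
  g : Euc N → Euc N → ℝ
  /-- the jump function -/
  j : Euc N → Euc N → Euc N
  /-- the constant bounding the densities in (M) -/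
  Cμ : ℝ
  /-- the Lipschitz constant of the densities in (M) -/
  Dμ : ℝ
  /-- the order of the operator -/
  σ : ℝ
  /-- the constant of (J0) -/
  Aj : ℝ
  /-- the lower growth constant of the jumps in (J1) -/
  Cj' : ℝ
  /-- the upper growth constant of the jumps in (J1) -/
  Cj : ℝ
  /-- the Lipschitz constant of the jumps in (J1) -/
  Dj : ℝ
  dim_pos : 0 < N
  domain : IsW2Domain dim_pos Ω
  normal : IsExteriorNormal Ω n
  levy : AssumptionM Ω g Cμ Dμ σ
  jump_inv : AssumptionJ0 Ω j Aj
  jump : AssumptionJ1 Ω j Cj' Cj Dj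

namespace CensoredSetting

variable (G : CensoredSetting N)

lemma isOpen_domain : IsOpen G.Ω := G.domain.1

/-- A bounded usc viscosity subsolution for the Hamiltonian `H`, with bound `B`. -/
structure IsBoundedSubsolution (H : Euc N → Euc N → ℝ) (B : ℝ) (u : Euc N → ℝ) : Prop where
  upperSemicontinuousOn : UpperSemicontinuousOn u (closure G.Ω)
  abs_le : ∀ x ∈ closure G.Ω, |u x| ≤ B
  isSubSol : IsSubSol G.Ω G.j G.g G.n G.Cj (statF H) u

/-- The function `D` whose levels are penalized near `s`: the signed distance if `s` is a boundary
point, zero if `s` is an interior point. Coercivity, in the form `four_mul_abs_le`, is only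
required at pairs of points on different levels, so it is void in the interior. -/
structure LevelFunction (H : Euc N → Euc N → ℝ) (s : Euc N) where
  /-- the level function -/
  D : Euc N → ℝ
  /-- the radius of the ball on which the bounds hold -/
  r : ℝ
  /-- the Lipschitz constant of the derivative of `D` -/
  κ : ℝ
  /-- the weight of the penalization of the gap between levels -/
  K : ℝ
  /-- the constant of the coercivity estimate -/
  C : ℝ
  /-- the Lipschitz constant of the increments of `D` along jumps -/
  jumpC : ℝ
  /-- the constant of the estimate of small mismatched jumps -/
  mismatchC : ℝ
  /-- the size of the jumps covered by the estimate of small mismatched jumps -/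
  jumpSize : ℝ
  isC11On : IsC11On D s r κ
  nonneg : ∀ x ∈ closure G.Ω, 0 ≤ D x
  frontier : ∀ x ∈ frontier G.Ω, x ∈ ball s r → D x = 0 ∧ gradient D x = -G.n x
  K_pos : 0 < K
  jumpC_nonneg : 0 ≤ jumpC
  four_mul_abs_le : ∀ x ∈ closure G.Ω, ∀ y ∈ closure G.Ω, x ∈ ball s r → y ∈ ball s r →
    D x ≠ D y → ∀ t p q M T, ‖p‖ ≤ M → ‖q‖ ≤ M → H x (p + t • gradient D x) ≤ T →
      -T ≤ H y (q + t • gradient D y) → 4 * |t| ≤ K * (T + C * (1 + M))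
  jump_increment : ∀ x ∈ closure G.Ω, ∀ y ∈ closure G.Ω, x ∈ ball s r → y ∈ ball s r → ∀ z,
    |D (x + G.j x z) - D x - (D (y + G.j y z) - D y)| ≤ jumpC * ‖z‖ * ‖x - y‖
  jumpSize_pos : 0 < jumpSize
  smallMismatch : HasSmallMismatch G.Ω G.j G.σ D s mismatchC jumpSize r

variable {G} {H : Euc N → Euc N → ℝ} {s : Euc N}

lemma nonempty_levelFunction_of_mem (hs : s ∈ G.Ω) : Nonempty (G.LevelFunction H s) := by
  obtain ⟨r₁, hr₁, hball⟩ := isOpen_iff.1 G.isOpen_domain s hs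
  obtain ⟨C, -, η, hη, r₂, hr₂, hmis⟩ := exists_hasSmallMismatch_of_mem G.jump G.isOpen_domain
    G.σ hs fun _ => 0
  have hD := (IsC11On.zero s).mono (lt_min one_pos (lt_min hr₁ hr₂)) (min_le_left _ _)
  have hsub₁ : ball s (min 1 (min r₁ r₂)) ⊆ ball s r₁ := ball_subset_ball (by simp)
  exact ⟨{
    D := fun _ => 0, r := min 1 (min r₁ r₂), κ := 0, K := 1, C := 0, jumpC := 0, mismatchC := C
    jumpSize := η
    isC11On := hD
    nonneg := fun _ _ => le_rfl
    frontier := fun x hx hxs =>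
      (disjoint_left.1 (disjoint_frontier_iff_isOpen.2 G.isOpen_domain) hx (hball (hsub₁ hxs))).elim
    K_pos := one_pos
    jumpC_nonneg := le_rfl
    four_mul_abs_le := fun _ _ _ _ _ _ h => (h rfl).elim
    jump_increment := by simp
    jumpSize_pos := hη
    smallMismatch := hmis.mono (by simp) }⟩

lemma nonempty_levelFunction_of_mem_frontier (hs : s ∈ frontier G.Ω)
    (hH : IsCoerciveAlong G.Ω H s (gradient (sdist G.Ω))) : Nonempty (G.LevelFunction H s) := by
  obtain ⟨r₁, κ, hD⟩ := G.domain.exists_isC11On_sdist hs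
  obtain ⟨C₁, hC₁, hincr⟩ := hD.exists_abs_jump_increment_le G.jump
  obtain ⟨C₂, -, η, hη, r₂, hr₂, hmis⟩ := exists_hasSmallMismatch_of_mem_frontier G.domain G.normal
    G.jump_inv G.jump G.levy.1.2.1 hs
  obtain ⟨c, hc, C, r₃, hr₃, hcoer⟩ := hH.exists_mul_abs_le
  have hr₁ := half_pos hD.radius_pos
  have hsub₁ : ball s (min (r₁ / 2) (min r₂ r₃)) ⊆ ball s (r₁ / 2) := ball_subset_ball (by simp)
  have hsub₃ : ball s (min (r₁ / 2) (min r₂ r₃)) ⊆ ball s r₃ := ball_subset_ball (by simp)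
  exact ⟨{
    D := sdist G.Ω, r := min (r₁ / 2) (min r₂ r₃), κ := κ, K := 4 / c, C := C, jumpC := C₁
    mismatchC := C₂, jumpSize := η
    isC11On := hD.mono (lt_min hr₁ (lt_min hr₂ hr₃))
      ((min_le_left _ _).trans (half_le_self hD.radius_pos.le))
    nonneg := fun _ => sdist_nonneg
    frontier := fun x hx _ =>
      ⟨sdist_eq_zero_of_mem_frontier G.isOpen_domain hx, (G.normal x hx).2.gradient⟩
    K_pos := by positivity
    jumpC_nonneg := hC₁
    four_mul_abs_le := fun x hx y hy hxs hys _ t p q M T hp hq hxT hyT => by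
      rw [div_mul_eq_mul_div, le_div_iff₀' hc]
      linarith [hcoer x hx y hy (hsub₃ hxs) (hsub₃ hys) t p q M T hp hq hxT hyT]
    jump_increment := fun x hx y hy hxs hys => hincr x hx y hy (hsub₁ hxs) (hsub₁ hys)
    jumpSize_pos := hη
    smallMismatch := hmis.mono (by simp) }⟩

lemma nonempty_levelFunction
    (hH : ∀ s ∈ frontier G.Ω, IsCoerciveAlong G.Ω H s (gradient (sdist G.Ω)))
    (hs : s ∈ closure G.Ω) : Nonempty (G.LevelFunction H s) := by
  rw [closure_eq_self_union_frontier] at hs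
  exact hs.elim nonempty_levelFunction_of_mem
    fun h => nonempty_levelFunction_of_mem_frontier h (hH s h)

end CensoredSetting

/-! ### Choice of the parameters -/

lemma eventually_lt_of_continuous {f : ℝ → ℝ} (hf : Continuous f)
    (h0 : f 0 = 0) {c : ℝ} (hc : 0 < c) : ∀ᶠ t in 𝓝[>] 0, f t < c :=
  nhdsWithin_le_nhds ((hf.tendsto' 0 0 h0).eventually_lt_const hc)

namespace CensoredSetting.LevelFunction

variable {G : CensoredSetting N} {H : Euc N → Euc N → ℝ} {s : Euc N} (Λ : G.LevelFunction H s)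

/-- The radii `η` for which the errors caused in the doubling argument by the distance `η` of the
two points to `s`, and by their relative distance `η`, are at most `lam`. -/
structure IsSmallRadius (B Cb Lb lam η : ℝ) : Prop where
  pos : 0 < η
  le_one : η ≤ 1
  le_radius : η ≤ Λ.r
  le : η ≤ lam
  curvature : 2 * Λ.κ * η ^ 2 < lam
  jump : η * (2 * G.Dj + G.Dj ^ 2 + Λ.K * Λ.jumpC) ≤ lam
  momentum : Cb * (Λ.K * Λ.κ * η) ≤ lam
  space : Lb * (η * (2 + 2 * Λ.K + 4 * lam)) ≤ lam
  coercivity : 2 * Λ.C * η ≤ 1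
  farMismatch : ∀ x ∈ closure G.Ω, ∀ y ∈ closure G.Ω, x ∈ ball s η → y ∈ ball s η →
    2 * B * G.Cμ * ∫ z in (ball 0 Λ.jumpSize)ᶜ ∩ mismatch G.Ω G.j x y, levyKernel G.σ z ≤ lam

lemma eventually_farMismatch_le (hs : s ∈ closure G.Ω) {B lam : ℝ} (hB : 0 ≤ B) (hlam : 0 < lam) :
    ∀ᶠ η in 𝓝[>] (0 : ℝ), ∀ x ∈ closure G.Ω, ∀ y ∈ closure G.Ω, x ∈ ball s η → y ∈ ball s η →
      2 * B * G.Cμ * ∫ z in (ball 0 Λ.jumpSize)ᶜ ∩ mismatch G.Ω G.j x y, levyKernel G.σ z ≤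
        lam := by
  have hCμ := G.levy.1.1
  obtain ⟨r, hr, hfar⟩ := exists_setIntegral_levyKernel_mismatch_le G.dim_pos G.jump_inv G.jump
    G.isOpen_domain (G.domain.volume_frontier G.normal) G.levy.1.2.1 hs Λ.jumpSize_pos
    (show 0 < lam / (2 * B * G.Cμ + 1) by positivity)
  filter_upwards [Ioo_mem_nhdsGT hr] with η hη x hx y hy hxs hys
  have hsub : ball s η ⊆ ball s r := ball_subset_ball hη.2.le
  calc _ ≤ 2 * B * G.Cμ * (lam / (2 * B * G.Cμ + 1)) := by
        gcongr
        exact hfar x hx y hy (hsub hxs) (hsub hys)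
    _ ≤ lam := by
      rw [mul_div_left_comm]
      exact mul_le_of_le_one_right hlam.le (div_le_one_of_le₀ (by linarith) (by positivity))

lemma eventually_isSmallRadius (hs : s ∈ closure G.Ω) {B lam : ℝ} (hB : 0 ≤ B) (hlam : 0 < lam)
    (Cb Lb : ℝ) : ∀ᶠ η in 𝓝[>] 0, Λ.IsSmallRadius B Cb Lb lam η := by
  have hsmall {c d : ℝ} (hd : 0 < d) : ∀ᶠ η in 𝓝[>] (0 : ℝ), c * η < d :=
    eventually_lt_of_continuous (continuous_const_mul c) (mul_zero c) hd
  filter_upwards [self_mem_nhdsWithin, hsmall (c := 1) one_pos,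
    hsmall (c := 1) Λ.isC11On.radius_pos, hsmall (c := 1) hlam,
    eventually_lt_of_continuous (by fun_prop : Continuous fun η => 2 * Λ.κ * η ^ 2) (by simp) hlam,
    hsmall (c := 2 * G.Dj + G.Dj ^ 2 + Λ.K * Λ.jumpC) hlam, hsmall (c := Cb * (Λ.K * Λ.κ)) hlam,
    hsmall (c := Lb * (2 + 2 * Λ.K + 4 * lam)) hlam, hsmall (c := 2 * Λ.C) one_pos,
    Λ.eventually_farMismatch_le hs hB hlam]
    with η h₀ h₁ h₂ h₃ h₄ h₅ h₆ h₇ h₈ h₉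
  exact ⟨h₀, by linarith, by linarith, by linarith, h₄, by linarith, by linarith, by linarith,
    h₈.le, h₉⟩

/-- The factor of the jump weight in the bound for the increments of either function at a
maximum point of the doubled functional with scale `ε`. -/
def incrementWeight (B lam ε : ℝ) : ℝ :=
  (2 * B + (2 + 2 * Λ.K + 5 * lam) * G.Cj + G.Cj ^ 2) * ε ^ (-((1 + G.σ) / 2))

/-- The scales `ε` for which the errors in the doubling argument that vanish with `ε` are at
most `lam`. -/
structure IsSmallScale (B : ℝ) (ω : ℝ → ℝ) (lam ε : ℝ) : Prop where
  le_one : ε ≤ 1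
  modulus : ω ε ≤ lam
  kernel : Λ.incrementWeight B lam ε * (G.Dμ * ε) * ∫ z : Euc N, weightedKernel G.σ z ≤ lam
  mismatch : Λ.incrementWeight B lam ε * G.Cμ * (Λ.mismatchC * ε) ≤ lam
  coercivity : ε * (lam + B + Λ.incrementWeight B lam ε * G.Cμ *
    (∫ z : Euc N, weightedKernel G.σ z) + Λ.C * (1 + 5 * lam)) < 1

lemma tendsto_incrementWeight_mul (B lam : ℝ) :
    Tendsto (fun ε => Λ.incrementWeight B lam ε * ε) (𝓝[>] 0) (𝓝 0) := by
  have hexp : 0 < (1 - G.σ) / 2 := by linarith [G.levy.1.2.1.2]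
  have hlim := (Real.continuousAt_rpow_const 0 _ (.inr hexp.le)).tendsto.const_mul
    (2 * B + (2 + 2 * Λ.K + 5 * lam) * G.Cj + G.Cj ^ 2)
  rw [Real.zero_rpow hexp.ne', mul_zero] at hlim
  refine (hlim.mono_left nhdsWithin_le_nhds).congr' ?_
  filter_upwards [self_mem_nhdsWithin] with ε (hε : 0 < ε)
  rw [incrementWeight, mul_assoc, ← Real.rpow_add_one hε.ne']
  ring_nf

lemma eventually_isSmallScale {ω : ℝ → ℝ} (hω : IsModulus ω) {lam : ℝ} (hlam : 0 < lam) (B : ℝ) :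
    ∀ᶠ ε in 𝓝[>] 0, Λ.IsSmallScale B ω lam ε := by
  set I := ∫ z : Euc N, weightedKernel G.σ z
  have hweight := Λ.tendsto_incrementWeight_mul B lam
  have hid : Tendsto (fun ε : ℝ => ε) (𝓝[>] 0) (𝓝 0) := nhdsWithin_le_nhds
  have hkernel := (hweight.mul_const (G.Dμ * I)).eventually_lt_const ((zero_mul _).trans_lt hlam)
  have hmismatch := (hweight.mul_const (G.Cμ * Λ.mismatchC)).eventually_lt_const
    ((zero_mul _).trans_lt hlam)
  have hcoercivity := ((hid.mul_const (lam + B + Λ.C * (1 + 5 * lam))).add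
    (hweight.mul_const (G.Cμ * I))).eventually_lt_const
    (show 0 * _ + 0 * _ < (1 : ℝ) by simp)
  filter_upwards [hid.eventually_lt_const one_pos,
    hω.2.2.eventually_lt_const hlam, hkernel, hmismatch, hcoercivity] with ε h₁ h₂ h₃ h₄ h₅
  exact ⟨h₁.le, h₂.le, by linarith, by linarith, by linarith⟩

end CensoredSetting.LevelFunction

/-! ### Maximum points of the doubled functional, in one variable -/

namespace CensoredSetting

variable (G : CensoredSetting N)

/-- The point `x` of `closure Ω` maximizes `w` minus the perturbation `L` minus the penalty with
second variable frozen at a point `y`, which lies at distance at most `η ε` from `x`. -/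
structure IsPartialMax (w L : Euc N → ℝ) (F : Penalty (Euc N)) (lam η : ℝ) (x y : Euc N) :
    Prop where
  contDiff : ContDiff ℝ 1 L
  lam_nonneg : 0 ≤ lam
  abs_sub_le : ∀ a b, |L a - L b| ≤ lam * ‖a - b‖
  mem : x ∈ closure G.Ω
  norm_sub_le : ‖x - y‖ ≤ η * F.ε
  isMax : ∀ x' ∈ closure G.Ω, w x' - L x' - F.val x' y ≤ w x - L x - F.val x y

namespace IsPartialMax

variable {G} {H : Euc N → Euc N → ℝ} {w L : Euc N → ℝ} {F : Penalty (Euc N)} {lam η : ℝ}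
  {x y : Euc N}

lemma norm_gradient_le (h : G.IsPartialMax w L F lam η x y) : ‖gradient L x‖ ≤ lam := by
  rw [norm_gradient]
  exact norm_fderiv_le_of_lip' ℝ h.lam_nonneg (Eventually.of_forall fun a => h.abs_sub_le a x)

lemma increment_le_div (h : G.IsPartialMax w L F lam η x y) (hη : η ≤ 1) (hε : F.ε ≤ 1) {z : Euc N}
    (hz : z ∈ landing G.Ω G.j x) : w (x + G.j x z) - w x ≤
      (2 + 2 * F.K + 2 * F.δ + lam) * (G.Cj * (‖z‖ / F.ε)) + (G.Cj * (‖z‖ / F.ε)) ^ 2 := by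
  have hε0 := F.ε_pos
  have hK := F.K_nonneg
  have hδ := F.δ_nonneg
  have hlam := h.lam_nonneg
  have hjump : ‖G.j x z‖ / F.ε ≤ G.Cj * (‖z‖ / F.ε) := by
    rw [← mul_div_assoc]
    gcongr
    exact (G.jump.2.2.2.1 x h.mem z).2
  have hpert : L (x + G.j x z) - L x ≤ lam * (‖G.j x z‖ / F.ε) := by
    refine (le_abs_self _).trans ((h.abs_sub_le _ _).trans ?_)
    rw [add_sub_cancel_left]
    gcongr
    exact le_div_self (norm_nonneg _) hε0 hε
  have hval := F.val_add_left_sub_le hε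
    (h.norm_sub_le.trans (mul_le_of_le_one_left hε0.le hη)) (G.j x z)
  calc _ ≤ (2 + 2 * F.K + 2 * F.δ + lam) * (‖G.j x z‖ / F.ε) + (‖G.j x z‖ / F.ε) ^ 2 := by
        linarith [h.isMax _ hz]
    _ ≤ _ := by gcongr

lemma increment_le (h : G.IsPartialMax w L F lam η x y) (hη : η ≤ 1) (hε : F.ε ≤ 1) {B : ℝ}
    (hB : ∀ x ∈ closure G.Ω, |w x| ≤ B) {z : Euc N} (hz : z ∈ landing G.Ω G.j x) :
    w (x + G.j x z) - w x ≤ (2 * B + (2 + 2 * F.K + 2 * F.δ + lam) * G.Cj + G.Cj ^ 2) *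
      F.ε ^ (-((1 + G.σ) / 2)) * jumpWeight G.σ ‖z‖ := by
  have hCj := G.jump.2.1
  have hε0 := F.ε_pos
  have hK := F.K_nonneg
  have hδ := F.δ_nonneg
  have hlam := h.lam_nonneg
  have hB0 : 0 ≤ B := (abs_nonneg _).trans (hB x h.mem)
  have hinc := h.increment_le_div hη hε hz
  set C := 2 * B + (2 + 2 * F.K + 2 * F.δ + lam) * G.Cj + G.Cj ^ 2
  set t := ‖z‖ / F.ε
  have ht : 0 ≤ t := by positivity
  have hmin : w (x + G.j x z) - w x ≤ C * min 1 t := by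
    rcases le_total 1 t with h1 | h1
    · have hbdd := (le_abs_self _).trans (abs_increment_le_two_mul hB h.mem hz)
      have : 0 ≤ (2 + 2 * F.K + 2 * F.δ + lam) * G.Cj + G.Cj ^ 2 := by positivity
      rw [min_eq_left h1]
      linarith
    · have hsq : (G.Cj * t) ^ 2 ≤ G.Cj ^ 2 * t := by
        rw [mul_pow]
        gcongr
        exact pow_le_of_le_one ht h1 two_ne_zero
      rw [min_eq_right h1]
      linarith [mul_nonneg hB0 ht]
  calc _ ≤ C * min 1 t := hmin
    _ ≤ C * (F.ε ^ (-((1 + G.σ) / 2)) * jumpWeight G.σ ‖z‖) := by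
      gcongr
      exact min_one_div_le_jumpWeight G.levy.1.2.1 hε0 hε (norm_nonneg z)
    _ = _ := (mul_assoc _ _ _).symm

variable {s : Euc N} {r κ : ℝ}

lemma inner_normal_pos (h : G.IsPartialMax w L F lam η x y) (hD : IsC11On F.D s r κ)
    (hxs : x ∈ ball s r) (hys : y ∈ ball s r) (hx : x ∈ frontier G.Ω) (hDx : F.D x = 0)
    (hgrad : gradient F.D x = -G.n x) (hDy : 0 ≤ F.D y) (hη : 2 * κ * η ^ 2 + lam < F.δ) :
    0 < ⟪F.grad x y + gradient L x, G.n x⟫ := by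
  have hn := (G.normal x hx).1
  have hpen := F.le_inner_grad hD hxs hys h.norm_sub_le hn hgrad hDx hDy
  have hpert : |⟪gradient L x, G.n x⟫| ≤ lam := by
    simpa [hn] using (abs_real_inner_le_norm _ _).trans
      (mul_le_mul_of_nonneg_right h.norm_gradient_le (norm_nonneg (G.n x)))
  rw [inner_add_left]
  linarith [neg_le_of_abs_le hpert]

lemma eventually_add_hamiltonian_le (h : G.IsPartialMax w L F lam η x y) {B : ℝ}
    (hw : G.IsBoundedSubsolution H B w) (hD : IsC11On F.D s r κ) (hxs : x ∈ ball s r)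
    (hys : y ∈ ball s r)
    (hfr : x ∈ frontier G.Ω → F.D x = 0 ∧ gradient F.D x = -G.n x) (hDy : 0 ≤ F.D y)
    (hη : 2 * κ * η ^ 2 + lam < F.δ) {c : ℝ} (hc : 0 < c) :
    ∀ᶠ ξ in 𝓝[>] 0, w x + H x (F.grad x y + gradient L x) ≤ c + Iout G.Ω G.j G.g ξ w x := by
  obtain ⟨ρ, hρ, hball⟩ := isOpen_iff.1 isOpen_ball x hxs
  have hgrad : HasGradientAt (fun x' => F.val x' y + L x') (F.grad x y + gradient L x) x := by
    rw [hasGradientAt_iff_hasFDerivAt, map_add]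
    exact (F.hasGradientAt_val (hD.differentiableAt hxs) y).hasFDerivAt.add
      (h.contDiff.differentiable one_ne_zero x).hasGradientAt.hasFDerivAt
  refine hw.isSubSol.add_hamiltonian_le G.dim_pos G.levy.1 G.jump_inv G.jump G.isOpen_domain
    h.mem hρ (φ := fun x' => F.val x' y + L x')
    (((F.contDiffOn_val hD.contDiffOn y).mono hball).add h.contDiff.contDiffOn) hgrad
    (fun x' _ hx' => by linarith [h.isMax x' hx']) (fun hx => ?_) hc
  obtain ⟨hDx, hgradx⟩ := hfr hx
  exact h.inner_normal_pos hD hxs hys hx hDx hgradx hDy hη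

end IsPartialMax

end CensoredSetting

/-! ### The comparison at a maximum point of the doubled functional -/

lemma quadratic_increment_le {η ε D t p q : ℝ} (hη : 0 ≤ η) (hη1 : η ≤ 1) (hε : 0 < ε)
    (hD : 0 ≤ D) (ht : 0 ≤ t) (hp : p ≤ η * ε) (hq0 : 0 ≤ q)
    (hq : q ≤ D * t * (η * ε)) :
    (2 * p * q + q ^ 2) / ε ^ 2 ≤ η * (2 * D + D ^ 2) * (t + t ^ 2) := by
  calc _ ≤ (2 * (η * ε) * (D * t * (η * ε)) + (D * t * (η * ε)) ^ 2) / ε ^ 2 := by gcongr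
    _ = η ^ 2 * (2 * D * t + D ^ 2 * t ^ 2) := by field_simp
    _ ≤ η * ((2 * D + D ^ 2) * (t + t ^ 2)) := by
      gcongr
      · exact pow_le_of_le_one hη hη1 two_ne_zero
      · have : 0 ≤ 2 * D * t ^ 2 + D ^ 2 * t := by positivity
        linarith
    _ = _ := by ring

namespace CensoredSetting

/-- The factor of the jump weight in the bound for the sum of the increments of the two functions
along simultaneous jumps from a maximum point of the doubled functional. -/
def jointWeight (G : CensoredSetting N) (B lam : ℝ) : ℝ :=
  (4 * B + 1) * (2 * (lam * (1 + 9 * G.Cj)) ^ (G.σ / 4))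

namespace LevelFunction

variable {G : CensoredSetting N} {H : Euc N → Euc N → ℝ} {s : Euc N}

/-- The penalty of the doubling argument near `s`. Its tilt `2 lam` outweighs a perturbation with
Lipschitz constant `lam`. -/
def penalty (Λ : G.LevelFunction H s) {lam ε τ : ℝ} (hlam : 0 < lam) (hε : 0 < ε) (hτ : 0 < τ) :
    Penalty (Euc N) where
  D := Λ.D
  ε := ε
  K := Λ.K
  τ := τ
  δ := 2 * lam
  lipschitz := Λ.isC11On.lipschitz
  ε_pos := hε
  K_nonneg := Λ.K_pos.le
  τ_pos := hτ
  δ_nonneg := by positivity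

/-- A maximum point `(x, y)` of the doubled functional `u x + w y - L x` minus the penalty, with
`x` and `y` at distance less than `η` from `s`. The parameter `τ` of the penalty is so small that
the estimate of small mismatched jumps holds if the levels at `x` and `y` differ by at most `τ`. -/
structure DoublingPoint (Λ : G.LevelFunction H s) (u w : Euc N → ℝ) (lam : ℝ) where
  /-- the perturbation -/
  L : Euc N → ℝ
  /-- the distance of the two points to `s`, and their relative distance -/
  η : ℝ
  /-- the scale of the penalty -/
  ε : ℝ
  /-- the smoothing parameter of the penalty -/
  τ : ℝ
  /-- the point at which `u` is evaluated -/
  x : Euc N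
  /-- the point at which `w` is evaluated -/
  y : Euc N
  lam_pos : 0 < lam
  ε_pos : 0 < ε
  τ_pos : 0 < τ
  contDiff : ContDiff ℝ 1 L
  abs_sub_le : ∀ a b, |L a - L b| ≤ lam * ‖a - b‖
  mem_left : x ∈ closure G.Ω
  mem_right : y ∈ closure G.Ω
  left_mem_ball : x ∈ ball s η
  right_mem_ball : y ∈ ball s η
  norm_sub_le : ‖x - y‖ ≤ η * ε
  smallMismatch : |Λ.D x - Λ.D y| ≤ τ →
    ∫ z in ball 0 Λ.jumpSize ∩ mismatch G.Ω G.j x y, weightedKernel G.σ z ≤ Λ.mismatchC * ε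
  isMax : ∀ x' ∈ closure G.Ω, ∀ y' ∈ closure G.Ω,
    u x' + w y' - L x' - (Λ.penalty lam_pos ε_pos τ_pos).val x' y' ≤
      u x + w y - L x - (Λ.penalty lam_pos ε_pos τ_pos).val x y

namespace DoublingPoint

variable {Λ : G.LevelFunction H s} {u w : Euc N → ℝ} {lam : ℝ} (d : Λ.DoublingPoint u w lam)

/-- The penalty of the doubled functional. -/
def penalty : Penalty (Euc N) := Λ.penalty d.lam_pos d.ε_pos d.τ_pos

/-- The momentum of the test function for `u` at `x`. -/
def leftMomentum : Euc N := d.penalty.grad d.x d.y + gradient d.L d.x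

/-- The opposite of the momentum of the test function for `w` at `y`. -/
def rightMomentum : Euc N := -d.penalty.grad d.y d.x

lemma isPartialMax_left : G.IsPartialMax u d.L d.penalty lam d.η d.x d.y where
  contDiff := d.contDiff
  lam_nonneg := d.lam_pos.le
  abs_sub_le := d.abs_sub_le
  mem := d.mem_left
  norm_sub_le := d.norm_sub_le
  isMax x' hx' := by
    rw [penalty]
    linarith [d.isMax x' hx' d.y d.mem_right]

lemma isPartialMax_right : G.IsPartialMax w (fun _ => 0) d.penalty lam d.η d.y d.x where
  contDiff := contDiff_const
  lam_nonneg := d.lam_pos.le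
  abs_sub_le _ _ := by
    rw [sub_zero, abs_zero]
    exact mul_nonneg d.lam_pos.le (norm_nonneg _)
  mem := d.mem_right
  norm_sub_le := by
    rw [norm_sub_rev]
    exact d.norm_sub_le
  isMax y' hy' := by
    rw [penalty, Penalty.val_comm _ y', Penalty.val_comm _ d.y]
    linarith [d.isMax d.x d.mem_left y' hy']

variable {B Cb Lb : ℝ} {ω : ℝ → ℝ}

lemma left_mem_ball_radius (hη : Λ.IsSmallRadius B Cb Lb lam d.η) : d.x ∈ ball s Λ.r :=
  ball_subset_ball hη.le_radius d.left_mem_ball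

lemma right_mem_ball_radius (hη : Λ.IsSmallRadius B Cb Lb lam d.η) : d.y ∈ ball s Λ.r :=
  ball_subset_ball hη.le_radius d.right_mem_ball

lemma tilt_gt (hη : Λ.IsSmallRadius B Cb Lb lam d.η) :
    2 * Λ.κ * d.η ^ 2 + lam < d.penalty.δ := by
  change _ < 2 * lam
  linarith [hη.curvature]

lemma eventually_left_le (hu : G.IsBoundedSubsolution H B u)
    (hη : Λ.IsSmallRadius B Cb Lb lam d.η) : ∀ᶠ ξ in 𝓝[>] 0,
      u d.x + H d.x d.leftMomentum ≤ lam + Iout G.Ω G.j G.g ξ u d.x :=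
  d.isPartialMax_left.eventually_add_hamiltonian_le hu Λ.isC11On (d.left_mem_ball_radius hη)
    (d.right_mem_ball_radius hη) (fun hx => Λ.frontier _ hx (d.left_mem_ball_radius hη))
    (Λ.nonneg _ d.mem_right) (d.tilt_gt hη) d.lam_pos

lemma eventually_right_le (hw : G.IsBoundedSubsolution (fun x p => -H x (-p)) B w)
    (hη : Λ.IsSmallRadius B Cb Lb lam d.η) : ∀ᶠ ξ in 𝓝[>] 0,
      w d.y - H d.y d.rightMomentum ≤ lam + Iout G.Ω G.j G.g ξ w d.y := by
  have h := d.isPartialMax_right.eventually_add_hamiltonian_le hw Λ.isC11On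
    (d.right_mem_ball_radius hη) (d.left_mem_ball_radius hη)
    (fun hy => Λ.frontier _ hy (d.right_mem_ball_radius hη)) (Λ.nonneg _ d.mem_left)
    (d.tilt_gt hη) d.lam_pos
  simpa only [rightMomentum, gradient_fun_const, add_zero, ← sub_eq_add_neg] using h

lemma increment_left_le (hB : ∀ x ∈ closure G.Ω, |u x| ≤ B)
    (hη : Λ.IsSmallRadius B Cb Lb lam d.η) (hε : Λ.IsSmallScale B ω lam d.ε) {z : Euc N}
    (hz : z ∈ landing G.Ω G.j d.x) :
    u (d.x + G.j d.x z) - u d.x ≤ Λ.incrementWeight B lam d.ε * jumpWeight G.σ ‖z‖ :=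
  (d.isPartialMax_left.increment_le hη.le_one hε.le_one hB hz).trans_eq (by
    simp only [penalty, LevelFunction.penalty, incrementWeight]
    ring)

lemma increment_right_le (hB : ∀ x ∈ closure G.Ω, |w x| ≤ B)
    (hη : Λ.IsSmallRadius B Cb Lb lam d.η) (hε : Λ.IsSmallScale B ω lam d.ε) {z : Euc N}
    (hz : z ∈ landing G.Ω G.j d.y) :
    w (d.y + G.j d.y z) - w d.y ≤ Λ.incrementWeight B lam d.ε * jumpWeight G.σ ‖z‖ :=
  (d.isPartialMax_right.increment_le hη.le_one hε.le_one hB hz).trans_eq (by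
    simp only [penalty, LevelFunction.penalty, incrementWeight]
    ring)

lemma penalty_increment_le (hη : Λ.IsSmallRadius B Cb Lb lam d.η) (z : Euc N) :
    d.penalty.val (d.x + G.j d.x z) (d.y + G.j d.y z) - d.penalty.val d.x d.y ≤
      lam * (1 + 8 * G.Cj) * (‖z‖ + ‖z‖ ^ 2) := by
  obtain ⟨-, hCj, hDj, hj, hjlip⟩ := G.jump
  have hε := d.ε_pos
  have hlam := d.lam_pos
  have hK := Λ.K_pos
  have hxy := d.norm_sub_le
  have hC := Λ.jumpC_nonneg
  have hjumps : ‖G.j d.x z - G.j d.y z‖ ≤ G.Dj * ‖z‖ * (d.η * d.ε) :=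
    (hjlip _ d.mem_left _ d.mem_right z).trans (by gcongr)
  have hquad := quadratic_increment_le hη.pos.le hη.le_one hε hDj.le (norm_nonneg z)
    hxy (norm_nonneg _) hjumps
  have hgap : Λ.K / d.ε * |Λ.D (d.x + G.j d.x z) - Λ.D d.x - (Λ.D (d.y + G.j d.y z) - Λ.D d.y)| ≤
      d.η * (Λ.K * Λ.jumpC) * (‖z‖ + ‖z‖ ^ 2) := by
    have hη0 := hη.pos
    have hjump := Λ.jump_increment _ d.mem_left _ d.mem_right (d.left_mem_ball_radius hη)
      (d.right_mem_ball_radius hη) z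
    calc _ ≤ Λ.K / d.ε * (Λ.jumpC * ‖z‖ * (d.η * d.ε)) := by
          gcongr
          exact hjump.trans (by gcongr)
      _ = d.η * (Λ.K * Λ.jumpC) * ‖z‖ := by field_simp
      _ ≤ _ := by
        gcongr
        exact le_add_of_nonneg_right (sq_nonneg _)
  have htilt : ‖G.j d.x z‖ + ‖G.j d.y z‖ ≤ 2 * G.Cj * (‖z‖ + ‖z‖ ^ 2) := by
    linarith [(hj _ d.mem_left z).2, (hj _ d.mem_right z).2, mul_nonneg hCj.le (sq_nonneg ‖z‖)]
  refine (d.penalty.val_add_sub_le _ _ _ _).trans ((add_le_add_three hquad hgap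
    (mul_le_mul_of_nonneg_left htilt (by positivity : 0 ≤ 2 * (2 * lam)))).trans ?_)
  linarith [mul_le_mul_of_nonneg_right hη.jump (by positivity : 0 ≤ ‖z‖ + ‖z‖ ^ 2)]

lemma joint_increment_le (hη : Λ.IsSmallRadius B Cb Lb lam d.η) {z : Euc N}
    (hz : z ∈ landing G.Ω G.j d.x ∩ landing G.Ω G.j d.y) :
    u (d.x + G.j d.x z) - u d.x + (w (d.y + G.j d.y z) - w d.y) ≤
      lam * (1 + 9 * G.Cj) * (‖z‖ + ‖z‖ ^ 2) := by
  have hmax := d.isMax _ hz.1 _ hz.2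
  have hpert : d.L (d.x + G.j d.x z) - d.L d.x ≤ lam * (G.Cj * (‖z‖ + ‖z‖ ^ 2)) := by
    have hCj := G.jump.2.1
    have hlam := d.lam_pos
    refine (le_abs_self _).trans ((d.abs_sub_le _ _).trans ?_)
    rw [add_sub_cancel_left]
    gcongr
    linarith [(G.jump.2.2.2.1 _ d.mem_left z).2, mul_nonneg hCj.le (sq_nonneg ‖z‖)]
  have hpen := d.penalty_increment_le hη z
  rw [penalty] at hpen
  linarith

lemma joint_increment_le_jumpWeight (hBu : ∀ x ∈ closure G.Ω, |u x| ≤ B)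
    (hBw : ∀ x ∈ closure G.Ω, |w x| ≤ B) (hη : Λ.IsSmallRadius B Cb Lb lam d.η)
    (hlam : lam * (1 + 9 * G.Cj) ≤ 1) {z : Euc N}
    (hz : z ∈ landing G.Ω G.j d.x ∩ landing G.Ω G.j d.y) :
    u (d.x + G.j d.x z) - u d.x + (w (d.y + G.j d.y z) - w d.y) ≤
      G.jointWeight B lam * jumpWeight G.σ ‖z‖ := by
  have hθ : 0 < lam * (1 + 9 * G.Cj) := mul_pos d.lam_pos (by linarith [G.jump.2.1])
  have hB : 0 ≤ B := (abs_nonneg _).trans (hBu _ d.mem_left)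
  have hsmall := d.joint_increment_le hη hz
  have hbdd := add_le_add ((le_abs_self _).trans (abs_increment_le_two_mul hBu d.mem_left hz.1))
    ((le_abs_self _).trans (abs_increment_le_two_mul hBw d.mem_right hz.2))
  calc _ ≤ (4 * B + 1) * min 1 (lam * (1 + 9 * G.Cj) * (‖z‖ + ‖z‖ ^ 2)) := by
        rw [mul_min_of_nonneg _ _ (by linarith)]
        refine le_min (by linarith) (hsmall.trans (le_mul_of_one_le_left ?_ (by linarith)))
        positivity
    _ ≤ (4 * B + 1) * (2 * (lam * (1 + 9 * G.Cj)) ^ (G.σ / 4) * jumpWeight G.σ ‖z‖) :=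
      mul_le_mul_of_nonneg_left
        (min_one_quadratic_le_jumpWeight G.levy.1.2.1 hθ hlam (norm_nonneg z)) (by linarith)
    _ = _ := by rw [jointWeight]; ring

end DoublingPoint

end LevelFunction

end CensoredSetting

namespace CensoredSetting

/-- The bound for `u + w` at a maximum point of the doubled functional, where `lam` bounds the
errors of the doubling argument. -/
def doublingError (G : CensoredSetting N) (B Cb lam : ℝ) : ℝ :=
  (8 + 9 * Cb) * lam + G.jointWeight B lam * G.Cμ * ∫ z : Euc N, weightedKernel G.σ z

namespace LevelFunction.DoublingPoint

variable {G : CensoredSetting N} {H : Euc N → Euc N → ℝ} {s : Euc N} {Λ : G.LevelFunction H s}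
  {u w : Euc N → ℝ} {lam B Cb Lb : ℝ} {ω : ℝ → ℝ} (d : Λ.DoublingPoint u w lam)

lemma incrementWeight_nonneg (hB : 0 ≤ B) : 0 ≤ Λ.incrementWeight B lam d.ε := by
  have hCj := G.jump.2.1
  have hK := Λ.K_pos
  have hlam := d.lam_pos
  have hε := d.ε_pos
  rw [incrementWeight]
  positivity

lemma norm_base_left_le : ‖d.penalty.base d.x d.y‖ ≤ 2 * d.η / d.ε + 4 * lam :=
  (d.penalty.norm_base_le Λ.isC11On d.norm_sub_le).trans_eq (by
    change 2 * d.η / d.ε + 2 * (2 * lam) = _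
    ring)

lemma norm_base_right_le : ‖d.penalty.base d.y d.x‖ ≤ 2 * d.η / d.ε + 4 * lam :=
  (d.penalty.norm_base_le Λ.isC11On ((norm_sub_rev _ _).trans_le d.norm_sub_le)).trans_eq (by
    change 2 * d.η / d.ε + 2 * (2 * lam) = _
    ring)

lemma leftMomentum_eq : d.leftMomentum =
    d.penalty.base d.x d.y + gradient d.L d.x + d.penalty.slope d.x d.y • gradient Λ.D d.x :=
  add_right_comm _ _ _

lemma rightMomentum_eq : d.rightMomentum =
    -d.penalty.base d.y d.x + d.penalty.slope d.x d.y • gradient Λ.D d.y := by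
  rw [Penalty.slope_comm, neg_smul]
  exact neg_add _ _

lemma hamiltonian_left_le (hu : G.IsBoundedSubsolution H B u)
    (hη : Λ.IsSmallRadius B Cb Lb lam d.η) (hε : Λ.IsSmallScale B ω lam d.ε) :
    H d.x d.leftMomentum ≤ lam + B +
      Λ.incrementWeight B lam d.ε * G.Cμ * ∫ z : Euc N, weightedKernel G.σ z := by
  have hB : 0 ≤ B := (abs_nonneg _).trans (hu.abs_le _ d.mem_left)
  obtain ⟨ξ, hvisc, hξ⟩ := ((d.eventually_left_le hu hη).and self_mem_nhdsWithin).exists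
  have hnonlocal := Iout_le_of_increment_le G.dim_pos G.levy.1 G.jump_inv
    hu.upperSemicontinuousOn hu.abs_le d.mem_left (d.incrementWeight_nonneg hB)
    (fun z hz => d.increment_left_le hu.abs_le hη hε hz) hξ
  linarith [neg_le_of_abs_le (hu.abs_le _ d.mem_left)]

lemma le_hamiltonian_right (hw : G.IsBoundedSubsolution (fun x p => -H x (-p)) B w)
    (hη : Λ.IsSmallRadius B Cb Lb lam d.η) (hε : Λ.IsSmallScale B ω lam d.ε) :
    -(lam + B + Λ.incrementWeight B lam d.ε * G.Cμ * ∫ z : Euc N, weightedKernel G.σ z) ≤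
      H d.y d.rightMomentum := by
  have hB : 0 ≤ B := (abs_nonneg _).trans (hw.abs_le _ d.mem_right)
  obtain ⟨ξ, hvisc, hξ⟩ := ((d.eventually_right_le hw hη).and self_mem_nhdsWithin).exists
  have hnonlocal := Iout_le_of_increment_le G.dim_pos G.levy.1 G.jump_inv
    hw.upperSemicontinuousOn hw.abs_le d.mem_right (d.incrementWeight_nonneg hB)
    (fun z hz => d.increment_right_le hw.abs_le hη hε hz) hξ
  linarith [neg_le_of_abs_le (hw.abs_le _ d.mem_right)]

/- If the levels were further apart, the slope of the penalty would be at least `K / (2 ε)`, which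
coercivity excludes. -/
lemma abs_level_sub_le (hu : G.IsBoundedSubsolution H B u)
    (hw : G.IsBoundedSubsolution (fun x p => -H x (-p)) B w)
    (hη : Λ.IsSmallRadius B Cb Lb lam d.η) (hε : Λ.IsSmallScale B ω lam d.ε) :
    |Λ.D d.x - Λ.D d.y| ≤ d.τ := by
  have hε0 := d.ε_pos
  by_contra! hgap
  have hne : Λ.D d.x ≠ Λ.D d.y := fun h => by
    rw [h, sub_self, abs_zero] at hgap
    exact hgap.not_gt d.τ_pos
  have hslope : Λ.K / d.ε / 2 ≤ |d.penalty.slope d.x d.y| := d.penalty.half_le_abs_slope hgap.le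
  have hleft := d.hamiltonian_left_le hu hη hε
  have hright := d.le_hamiltonian_right hw hη hε
  have hcoerε := hε.coercivity
  set T := lam + B + Λ.incrementWeight B lam d.ε * G.Cμ * ∫ z : Euc N, weightedKernel G.σ z
  rw [leftMomentum_eq] at hleft
  rw [rightMomentum_eq] at hright
  have hcoer := Λ.four_mul_abs_le _ d.mem_left _ d.mem_right (d.left_mem_ball_radius hη)
    (d.right_mem_ball_radius hη) hne _ _ _ (2 * d.η / d.ε + 5 * lam) T
    ((norm_add_le_of_le d.norm_base_left_le d.isPartialMax_left.norm_gradient_le).trans_eq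
      (by ring))
    ((norm_neg _).trans_le (d.norm_base_right_le.trans (by linarith [d.lam_pos]))) hleft hright
  have hbound : Λ.K * (2 / d.ε) ≤ Λ.K * (T + Λ.C * (1 + (2 * d.η / d.ε + 5 * lam))) :=
    (show Λ.K * (2 / d.ε) = 4 * (Λ.K / d.ε / 2) by ring).trans_le
      ((mul_le_mul_of_nonneg_left hslope (by norm_num)).trans hcoer)
  have hbound' := le_of_mul_le_mul_left hbound Λ.K_pos
  rw [div_le_iff₀ hε0] at hbound'
  have hcancel : (T + Λ.C * (1 + (2 * d.η / d.ε + 5 * lam))) * d.ε =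
      d.ε * (T + Λ.C * (1 + 5 * lam)) + 2 * Λ.C * d.η := by field_simp; ring
  linarith [hη.coercivity]

lemma Iout_add_le (hu : G.IsBoundedSubsolution H B u)
    (hw : G.IsBoundedSubsolution (fun x p => -H x (-p)) B w)
    (hη : Λ.IsSmallRadius B Cb Lb lam d.η) (hε : Λ.IsSmallScale B ω lam d.ε)
    (hlam : lam * (1 + 9 * G.Cj) ≤ 1) {ξ : ℝ} (hξ : 0 < ξ) :
    Iout G.Ω G.j G.g ξ u d.x + Iout G.Ω G.j G.g ξ w d.y ≤
      3 * lam + G.jointWeight B lam * G.Cμ * ∫ z : Euc N, weightedKernel G.σ z := by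
  have hB : 0 ≤ B := (abs_nonneg _).trans (hu.abs_le _ d.mem_left)
  have hc₁ := d.incrementWeight_nonneg hB
  have hCμ := G.levy.1.1
  have hDμ := G.levy.2.1
  have hc₂ : 0 ≤ G.jointWeight B lam := by
    have := d.lam_pos
    have := G.jump.2.1
    rw [jointWeight]
    positivity
  have hbound := Iout_add_Iout_le G.dim_pos G.levy G.jump_inv hu.upperSemicontinuousOn
    hw.upperSemicontinuousOn hu.abs_le hw.abs_le d.mem_left d.mem_right hc₁ hc₂
    (fun z hz => d.increment_left_le hu.abs_le hη hε hz)
    (fun z hz => d.increment_right_le hw.abs_le hη hε hz)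
    (fun z hz => d.joint_increment_le_jumpWeight hu.abs_le hw.abs_le hη hlam hz)
    Λ.jumpSize_pos hξ
  have hI : 0 ≤ ∫ z : Euc N, weightedKernel G.σ z := integral_nonneg (weightedKernel_nonneg G.σ)
  have hxy : ‖d.x - d.y‖ ≤ d.ε :=
    d.norm_sub_le.trans (mul_le_of_le_one_left d.ε_pos.le hη.le_one)
  have hkernel : Λ.incrementWeight B lam d.ε * (G.Dμ * ‖d.x - d.y‖) *
      ∫ z : Euc N, weightedKernel G.σ z ≤ lam := le_trans (by gcongr) hε.kernel
  have hmismatch := (mul_le_mul_of_nonneg_left (d.smallMismatch (d.abs_level_sub_le hu hw hη hε))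
    (mul_nonneg hc₁ hCμ.le)).trans hε.mismatch
  have hfar := hη.farMismatch _ d.mem_left _ d.mem_right d.left_mem_ball d.right_mem_ball
  linarith

lemma norm_momentum_sub_le (hη : Λ.IsSmallRadius B Cb Lb lam d.η) :
    ‖d.leftMomentum - d.rightMomentum‖ ≤ 9 * lam + Λ.K * Λ.κ * d.η := by
  have hsum : d.leftMomentum - d.rightMomentum =
      d.penalty.grad d.x d.y + d.penalty.grad d.y d.x + gradient d.L d.x := by
    rw [leftMomentum, rightMomentum]
    abel
  have hgrad := d.penalty.norm_grad_add_grad_le Λ.isC11On (d.left_mem_ball_radius hη)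
    (d.right_mem_ball_radius hη)
  have hslope : Λ.K / d.ε * (Λ.κ * ‖d.x - d.y‖) ≤ Λ.K * Λ.κ * d.η := by
    have hK := Λ.K_pos
    have hκ := Λ.isC11On.const_nonneg
    have hε := d.ε_pos
    have hxy := d.norm_sub_le
    calc _ ≤ Λ.K / d.ε * (Λ.κ * (d.η * d.ε)) := by gcongr
      _ = _ := by field_simp
  rw [hsum]
  refine (norm_add_le_of_le hgrad d.isPartialMax_left.norm_gradient_le).trans ?_
  change 4 * (2 * lam) + Λ.K / d.ε * (Λ.κ * ‖d.x - d.y‖) + lam ≤ _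
  linarith

lemma norm_sub_mul_norm_rightMomentum_le (hη : Λ.IsSmallRadius B Cb Lb lam d.η)
    (hε : Λ.IsSmallScale B ω lam d.ε) :
    ‖d.x - d.y‖ * ‖d.rightMomentum‖ ≤ d.η * (2 + 2 * Λ.K + 4 * lam) := by
  have hε0 := d.ε_pos
  have hlam := d.lam_pos
  have hslope : ‖d.penalty.slope d.y d.x • gradient Λ.D d.y‖ ≤ Λ.K / d.ε * 2 := by
    rw [norm_smul, norm_gradient]
    exact mul_le_mul (d.penalty.abs_slope_le _ _) (Λ.isC11On.norm_fderiv_le _) (norm_nonneg _)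
      (div_nonneg Λ.K_pos.le hε0.le)
  have hnorm : ‖d.rightMomentum‖ ≤ 2 * d.η / d.ε + 4 * lam + Λ.K / d.ε * 2 := by
    rw [rightMomentum, norm_neg]
    exact norm_add_le_of_le d.norm_base_right_le hslope
  have hη0 := hη.pos
  calc _ ≤ d.η * d.ε * (2 * d.η / d.ε + 4 * lam + Λ.K / d.ε * 2) :=
        mul_le_mul d.norm_sub_le hnorm (norm_nonneg _) (by positivity)
    _ = d.η * (2 * d.η + 2 * Λ.K + 4 * (lam * d.ε)) := by field_simp; ring
    _ ≤ _ := by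
      have := mul_le_of_le_one_right hlam.le hε.le_one
      have := hη.le_one
      gcongr
      linarith

lemma hamiltonian_right_le (hH : IsRegularHamiltonian G.Ω H Cb Lb ω)
    (hη : Λ.IsSmallRadius B Cb Lb lam d.η) (hε : Λ.IsSmallScale B ω lam d.ε) :
    H d.y d.rightMomentum ≤ H d.x d.leftMomentum + (3 + 9 * Cb) * lam := by
  have hreg := hH.le _ d.mem_left _ d.mem_right d.leftMomentum d.rightMomentum
  have hmomentum := mul_le_mul_of_nonneg_left (d.norm_momentum_sub_le hη) hH.Cb_nonneg
  have hspace := mul_le_mul_of_nonneg_left (d.norm_sub_mul_norm_rightMomentum_le hη hε)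
    hH.Lb_nonneg
  have hmod := hH.modulus.2.1
    (d.norm_sub_le.trans (mul_le_of_le_one_left d.ε_pos.le hη.le_one))
  linarith [hη.momentum, hη.space, hε.modulus]

lemma add_le_doublingError (hH : IsRegularHamiltonian G.Ω H Cb Lb ω)
    (hu : G.IsBoundedSubsolution H B u) (hw : G.IsBoundedSubsolution (fun x p => -H x (-p)) B w)
    (hη : Λ.IsSmallRadius B Cb Lb lam d.η) (hε : Λ.IsSmallScale B ω lam d.ε)
    (hlam : lam * (1 + 9 * G.Cj) ≤ 1) : u d.x + w d.y ≤ G.doublingError B Cb lam := by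
  obtain ⟨ξ, ⟨hleft, hright⟩, hξ⟩ := (((d.eventually_left_le hu hη).and
    (d.eventually_right_le hw hη)).and self_mem_nhdsWithin).exists
  have hnonlocal := d.Iout_add_le hu hw hη hε hlam hξ
  have hham := d.hamiltonian_right_le hH hη hε
  rw [doublingError]
  linarith

end LevelFunction.DoublingPoint

end CensoredSetting

/-! ### Comparison -/

namespace CensoredSetting

variable {G : CensoredSetting N} {H : Euc N → Euc N → ℝ} {s : Euc N} {u w L : Euc N → ℝ}
  {B Cb Lb lam : ℝ} {ω : ℝ → ℝ}

/-- A smooth perturbation, with Lipschitz constant `lam`, that makes `s` the strict maximum point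
of `f` on `closure Ω`. -/
structure IsStrictPerturbation (G : CensoredSetting N) (f L : Euc N → ℝ) (lam : ℝ)
    (s : Euc N) : Prop where
  mem : s ∈ closure G.Ω
  contDiff : ContDiff ℝ 1 L
  abs_sub_le : ∀ x y, |L x - L y| ≤ lam * ‖x - y‖
  nonneg : ∀ x, 0 ≤ L x
  tendsto : Tendsto L (cocompact (Euc N)) atTop
  lt : ∀ x ∈ closure G.Ω, x ≠ s → f x - L x < f s - L s

namespace LevelFunction

variable (Λ : G.LevelFunction H s)

lemma penalty_val_self_le (hlam : 0 < lam) {ε τ : ℝ} (hε : 0 < ε) (hτ : 0 < τ) (hτε : τ ≤ ε ^ 2)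
    (x : Euc N) : (Λ.penalty hlam hε hτ).val x x ≤ (Λ.K + 4 * lam) * ε := by
  have hK := Λ.K_pos
  have hgap : Λ.K / ε * τ ≤ Λ.K * ε :=
    calc _ ≤ Λ.K / ε * ε ^ 2 := by gcongr
      _ = _ := by field_simp
  refine ((Λ.penalty hlam hε hτ).val_self_le x).trans ?_
  change Λ.K / ε * τ + 2 * (2 * lam) * ε ≤ _
  linarith

lemma le_penalty_val (hlam : 0 < lam) {ε τ : ℝ} (hε : 0 < ε) (hτ : 0 < τ) (x y : Euc N) :
    ‖x - y‖ ^ 2 / ε ^ 2 - (Λ.K + 4 * lam) * ε ≤ (Λ.penalty hlam hε hτ).val x y := by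
  refine le_trans ?_ ((Λ.penalty hlam hε hτ).le_val x y)
  change _ ≤ ‖x - y‖ ^ 2 / ε ^ 2 - 2 * (2 * lam) * ε
  linarith [mul_pos Λ.K_pos hε]

lemma eventually_exists_doublingPoint (hu : UpperSemicontinuousOn u (closure G.Ω))
    (hw : UpperSemicontinuousOn w (closure G.Ω)) (hBu : ∀ x ∈ closure G.Ω, |u x| ≤ B)
    (hBw : ∀ x ∈ closure G.Ω, |w x| ≤ B) (hlam : 0 < lam)
    (hL : G.IsStrictPerturbation (fun x => u x + w x) L lam s) (hpos : 0 ≤ u s + w s - L s)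
    {η : ℝ} (hη : 0 < η) (hη1 : η ≤ 1) (hηr : η ≤ Λ.r) :
    ∀ᶠ ε in 𝓝[>] 0, ∃ d : Λ.DoublingPoint u w lam, d.η = η ∧ d.ε = ε ∧
      u s + w s - L s - η ≤ u d.x + w d.y := by
  obtain ⟨K, hK, hKL⟩ := mem_cocompact.1 (hL.tendsto.eventually_ge_atTop (2 * B + 1))
  have hLneg : Continuous fun q : Euc N × Euc N => -L q.1 :=
    (hL.contDiff.continuous.comp continuous_fst).neg
  have husc : UpperSemicontinuousOn (fun q : Euc N × Euc N => u q.1 + w q.2 - L q.1)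
      (closure G.Ω ×ˢ closure G.Ω) :=
    ((hu.comp continuousOn_fst fun _ hq => hq.1).add
      (hw.comp continuousOn_snd fun _ hq => hq.2)).add
      (hLneg.upperSemicontinuous.upperSemicontinuousOn _)
  have hbdd : ∀ x ∈ closure G.Ω, ∀ y ∈ closure G.Ω, u x + w y ≤ 2 * B := fun x hx y hy => by
    linarith [le_of_abs_le (hBu x hx), le_of_abs_le (hBw y hy)]
  filter_upwards [eventually_exists_isMaxOn_doubling (M := 2 * B) hK isClosed_closure husc
    (fun q hq => by linarith [hbdd _ hq.1 _ hq.2, hL.nonneg q.1]) hL.mem hL.lt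
    (fun x hx y hy => by
      have : 2 * B + 1 ≤ L x := hKL hx.2
      linarith [hbdd x hx.1 y hy]) hη (Λ.K + 4 * lam),
    Ioc_mem_nhdsGT one_pos] with ε hmax hε
  obtain ⟨τ, hτ, hmis⟩ := Λ.smallMismatch ε hε
  have hτ' : 0 < min τ (ε ^ 2) := lt_min hτ (pow_pos hε.1 2)
  obtain ⟨x, hx, y, hy, hxy, hxs, hys, hdist, hval⟩ :=
    hmax _ (Λ.penalty hlam hε.1 hτ').continuous_val (Λ.le_penalty_val hlam hε.1 hτ')
      (Λ.penalty_val_self_le hlam hε.1 hτ' (min_le_right _ _) s)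
  rw [← mem_ball_iff_norm] at hxs hys
  refine ⟨⟨L, η, ε, min τ (ε ^ 2), x, y, hlam, hε.1, hτ', hL.contDiff, hL.abs_sub_le, hx, hy, hxs,
    hys, hdist, fun hgap => ?_, fun x' hx' y' hy' => ?_⟩, rfl, rfl, ?_⟩
  · exact hmis x hx y hy (ball_subset_ball hηr hxs) (ball_subset_ball hηr hys)
      (hdist.trans (mul_le_of_le_one_left hε.1.le hη1)) (hgap.trans (min_le_left _ _))
  · exact isMaxOn_iff.1 hxy (x', y') ⟨hx', hy'⟩
  · change u s + w s - L s - η ≤ u x + w y - L x at hval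
    exact hval.trans (sub_le_self _ (hL.nonneg x))

end LevelFunction

lemma IsStrictPerturbation.add_sub_le (hL : G.IsStrictPerturbation (fun x => u x + w x) L lam s)
    (hH : IsRegularHamiltonian G.Ω H Cb Lb ω) (Λ : G.LevelFunction H s)
    (hu : G.IsBoundedSubsolution H B u) (hw : G.IsBoundedSubsolution (fun x p => -H x (-p)) B w)
    (hlam : 0 < lam) (hlam' : lam * (1 + 9 * G.Cj) ≤ 1) (hpos : 0 ≤ u s + w s - L s) :
    u s + w s - L s ≤ lam + G.doublingError B Cb lam := by
  have hB : 0 ≤ B := (abs_nonneg _).trans (hu.abs_le _ hL.mem)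
  obtain ⟨η, hη⟩ := (Λ.eventually_isSmallRadius hL.mem hB hlam Cb Lb).exists
  obtain ⟨ε, ⟨d, rfl, rfl, hd⟩, hε⟩ := ((Λ.eventually_exists_doublingPoint
    hu.upperSemicontinuousOn hw.upperSemicontinuousOn hu.abs_le hw.abs_le hlam hL hpos hη.pos
    hη.le_one hη.le_radius).and (Λ.eventually_isSmallScale hH.modulus hlam B)).exists
  linarith [d.add_le_doublingError hH hu hw hη hε hlam', hη.le]

lemma exists_isStrictPerturbation {f : Euc N → ℝ} {κ : ℝ} {x₁ : Euc N}
    (hf : UpperSemicontinuousOn f (closure G.Ω)) (hB : ∀ x ∈ closure G.Ω, f x ≤ B)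
    (hx₁ : x₁ ∈ closure G.Ω) (hlam : 0 < lam) (hκ : 0 < κ) :
    ∃ s L, G.IsStrictPerturbation f L lam s ∧ f x₁ - κ ≤ f s - L s := by
  obtain ⟨s, hs, L, hdiff, hlip, hnonneg, htend, hlt, hle⟩ :=
    exists_contDiff_perturbation_strictMax isClosed_closure hf hB hx₁ hlam hκ
  exact ⟨s, L, ⟨hs, hdiff, hlip, hnonneg, htend, hlt⟩, hle⟩

lemma doublingError_nonneg (hB : 0 ≤ B) (hCb : 0 ≤ Cb) (hlam : 0 < lam) :
    0 ≤ G.doublingError B Cb lam := by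
  have hCj := G.jump.2.1
  have hCμ := G.levy.1.1
  have hI : 0 ≤ ∫ z : Euc N, weightedKernel G.σ z := integral_nonneg (weightedKernel_nonneg G.σ)
  rw [doublingError, jointWeight]
  positivity

lemma tendsto_doublingError (B Cb : ℝ) : Tendsto (G.doublingError B Cb) (𝓝 0) (𝓝 0) := by
  have hσ : 0 < G.σ / 4 := by linarith [G.levy.1.2.1.1]
  have hcont : Continuous (G.doublingError B Cb) := by
    unfold doublingError jointWeight
    have := Real.continuous_rpow_const hσ.le
    fun_prop
  exact hcont.tendsto' 0 0 (by simp [doublingError, jointWeight, Real.zero_rpow hσ.ne'])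

lemma add_nonpos_of_isBoundedSubsolution (hH : IsRegularHamiltonian G.Ω H Cb Lb ω)
    (hcoer : ∀ s ∈ frontier G.Ω, IsCoerciveAlong G.Ω H s (gradient (sdist G.Ω)))
    (hu : G.IsBoundedSubsolution H B u) (hw : G.IsBoundedSubsolution (fun x p => -H x (-p)) B w)
    {x : Euc N} (hx : x ∈ closure G.Ω) : u x + w x ≤ 0 := by
  have hB : 0 ≤ B := (abs_nonneg _).trans (hu.abs_le _ hx)
  have hlim : Tendsto (fun lam => 2 * lam + G.doublingError B Cb lam) (𝓝[>] 0) (𝓝 0) := by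
    simpa using (((continuous_const_mul (2 : ℝ)).tendsto' 0 0 (mul_zero 2)).add
      (G.tendsto_doublingError B Cb)).mono_left nhdsWithin_le_nhds
  refine ge_of_tendsto hlim ?_
  have hsmall : ∀ᶠ lam in 𝓝[>] 0, lam * (1 + 9 * G.Cj) < 1 :=
    eventually_lt_of_continuous (continuous_mul_const _) (zero_mul _) one_pos
  filter_upwards [self_mem_nhdsWithin, hsmall] with lam (hlam : 0 < lam) hlam'
  obtain ⟨s, L, hL, hxs⟩ := G.exists_isStrictPerturbation
    (hu.upperSemicontinuousOn.add hw.upperSemicontinuousOn) (B := 2 * B)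
    (fun a ha => by linarith [le_of_abs_le (hu.abs_le a ha), le_of_abs_le (hw.abs_le a ha)])
    hx hlam hlam
  obtain ⟨Λ⟩ := nonempty_levelFunction hcoer hL.mem
  rcases le_total 0 (u s + w s - L s) with hpos | hneg
  · linarith [hL.add_sub_le hH Λ hu hw hlam hlam'.le hpos]
  · linarith [G.doublingError_nonneg hB hH.Cb_nonneg hlam]

end CensoredSetting

theorem comparison_bellman_general (hN : 0 < N) (Ω : Set (Euc N)) (hΩ : IsW2Domain hN Ω)
    (n : Euc N → Euc N) (hn : IsExteriorNormal Ω n)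
    (g : Euc N → Euc N → ℝ) (Cμ Dμ σ : ℝ) (hM : AssumptionM Ω g Cμ Dμ σ)
    (j : Euc N → Euc N → Euc N) (Aj : ℝ) (hJ0 : AssumptionJ0 Ω j Aj)
    (Cj' Cj Dj : ℝ) (hJ1 : AssumptionJ1 Ω j Cj' Cj Dj)
    (H : Euc N → Euc N → ℝ) {Cb Lb : ℝ} {ω : ℝ → ℝ} (hH : IsRegularHamiltonian Ω H Cb Lb ω)
    (hcoer : ∀ s ∈ frontier Ω, IsCoerciveAlong Ω H s (gradient (sdist Ω)))
    (u v : Euc N → ℝ)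
    (hub : BddOn u (closure Ω)) (husc : UpperSemicontinuousOn u (closure Ω))
    (hsub : IsSubSol Ω j g n Cj (statF H) u)
    (hvb : BddOn v (closure Ω)) (hlsc : LowerSemicontinuousOn v (closure Ω))
    (hsup : IsSuperSol Ω j g n Cj (statF H) v) :
    ∀ x ∈ closure Ω, u x ≤ v x := by
  obtain ⟨Bu, hBu⟩ := hub
  obtain ⟨Bv, hBv⟩ := hvb
  let G : CensoredSetting N :=
    ⟨Ω, n, g, j, Cμ, Dμ, σ, Aj, Cj', Cj, Dj, hN, hΩ, hn, hM, hJ0, hJ1⟩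
  have hu : G.IsBoundedSubsolution H (max Bu Bv) u :=
    ⟨husc, fun x hx => (hBu x hx).trans (le_max_left _ _), hsub⟩
  have hw : G.IsBoundedSubsolution (fun x p => -H x (-p)) (max Bu Bv) fun x => -v x :=
    ⟨continuous_neg.comp_lowerSemicontinuousOn_antitone hlsc fun _ _ => neg_le_neg,
      fun x hx => (abs_neg _).trans_le ((hBv x hx).trans (le_max_right _ _)), hsup.neg⟩
  intro x hx
  linarith [CensoredSetting.add_nonpos_of_isBoundedSubsolution hH hcoer hu hw hx]

/-- **Comparison principle (Bellman case).**  If `Ω` is of class `W^{2,∞}`, the measures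
satisfy (M), the jump function satisfies (J0), (J1), and `H` is a Bellman Hamiltonian
satisfying (C), (L), (B), then any bounded usc viscosity subsolution `u` and bounded lsc
viscosity supersolution `v` of `u - I[u] + H(x, Du) = 0` in `Ω`, with generalized
Neumann boundary condition `∂u/∂n = 0` on `∂Ω`, satisfy `u ≤ v` on `closure Ω`. -/
theorem comparison_bellman
    (hN : 0 < N) (Ω : Set (Euc N)) (hΩ : IsW2Domain hN Ω)
    (n : Euc N → Euc N) (hn : IsExteriorNormal Ω n)
    (g : Euc N → Euc N → ℝ) (Cμ Dμ σ : ℝ) (hM : AssumptionM Ω g Cμ Dμ σ)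
    (j : Euc N → Euc N → Euc N) (Aj : ℝ) (hJ0 : AssumptionJ0 Ω j Aj)
    (Cj' Cj Dj : ℝ) (hJ1 : AssumptionJ1 Ω j Cj' Cj Dj)
    {A : Type} [MetricSpace A] [CompactSpace A] [Nonempty A]
    (b : Euc N → A → Euc N) (l : Euc N → A → ℝ) (H : Euc N → Euc N → ℝ)
    (hHam : StatBellmanOK Ω n b l H)
    (u v : Euc N → ℝ)
    (hub : BddOn u (closure Ω)) (husc : UpperSemicontinuousOn u (closure Ω))
    (hsub : IsSubSol Ω j g n Cj (statF H) u)
    (hvb : BddOn v (closure Ω)) (hlsc : LowerSemicontinuousOn v (closure Ω))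
    (hsup : IsSuperSol Ω j g n Cj (statF H) v) :
    ∀ x ∈ closure Ω, u x ≤ v x := by
  obtain ⟨Cb, Lb, ω, hreg⟩ :=
    hHam.2.1.exists_isRegularHamiltonian hHam.1 hHam.2.2.1 hHam.2.2.2.1
  exact comparison_bellman_general hN Ω hΩ n hn g Cμ Dμ σ hM j Aj hJ0 Cj' Cj Dj hJ1 H hreg
    (fun _ hs => hHam.isCoerciveAlong_gradient_sdist hΩ hn hs) u v hub husc hsub hvb hlsc hsup

end Censored

end
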